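/- For every t > 0 and every δ ∈ (0, 1/8) there exists a constant C = C(t, δ) > 0 such that for all ε ∈ (0, 1/2) one has |F_ε(t) − F(t)| ≤ C·ε^{1/8−δ}, where F(t) = (4/π)·∫_0^{π/4} H(t/(cos ω + sin ω)) dω. In particular F_ε(t) → F(t) as ε → 0⁺. -/

import Mathlib

/-! The number of reflections of the billiard from the origin, with reflections counted along the
unfolded trajectory, is controlled by diophantine approximation of the slope.

Write lattice points of the first quadrant as `(m - p, p)`, so that `m` is the sum of the
coordinates. If `(m - p, p)` is the first point hit, then `Reps` differs from `m` by a bounded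
amount. Precisely, `{ε * Reps > t}` contains `wSet ε (⌊t / ε⌋ + 3)` (`reps_lower`) and is contained
in `wSet ε ⌊t / ε⌋` (`reps_upper`), where `wSet ε N` is the set of directions whose line stays
farther than `ε` from every point with `1 ≤ m ≤ N`. In the coordinate
`x = sin ω / (sin ω + cos ω)`, the distance is `(sin ω + cos ω) * |m x - p|`. If `sin ω + cos ω`
were constant, `wSet` would correspond to a set `badSet α β κ N` of `x ∈ [α, β]` with
`κ < |m x - p|` for all `m ≤ N`.

The measure of `badSet` is computed as follows. An irrational `x ∈ (0, 1)` lies between two Farey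
neighbours of level `N`, and its best approximation `p / m` with `m ≤ N` is one of them; together
with the denominator `s` of their mediant, `N < s ≤ N + m`, and the side `σ = ±1` of `x`, it
determines a cell of length `1 / (m s)` with `s p ≡ -σ` modulo `m`
(`best_approx`, `cell_unique`, `cell_exists`). The bad part of a cell has length
`max (1 / s - κ) 0 / m`, and summing over the cells gives the measure up to `O(1 / N)`
(`bad_volume`). For fixed `m` the sum runs over the points `(s, p)` of a modular hyperbola in a
rectangle. It is evaluated by completion to Kloosterman sums (`completion`, `equi`), and the
elementary Kloosterman bound `m ^ (3 / 4)`, obtained from the fourth moment (`kl_bound`), is enough.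
The sum over `m` of the main terms is found from the mean value of `φ(m) / m` (`totient_mean`,
`main_term`). The outcome is `bad_asymp`:
`badSet α β κ N` has measure `(β - α) * (12 / π ^ 2) * Iint (κ * N) + O(N ^ (-1 / 4 + δ))`.

The density `12 / π ^ 2 * Iint` equals `Hlim` (`hlim_eq`): `Iint` is affine on `[0, 1 / 2]`, has
derivative `-psi` on `[1 / 2, 1]`, and vanishes beyond `1`. Its value `π ^ 2 / 12` at `0` comes from
`bad_asymp` itself with `κ = 0`, since then every irrational is bad (`iint_zero`).

Finally `[0, π / 4]` is cut into `J` blocks on which `sin ω + cos ω` is nearly constant. Each block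
contributes an error `O(1 / J ^ 2 + N ^ (-1 / 4 + δ))` (`block`, `blocks`), and `J ≍ N ^ (1 / 8)`
with `N ≍ 1 / ε` gives the error `ε ^ (1 / 8 - δ)` (`wSet_asymp`). For `ε > t` the claim is
trivial, since the left side is bounded. -/

open Real MeasureTheory Set

noncomputable def zeta2 : ℝ := Real.pi ^ 2 / 6

noncomputable def psi (x : ℝ) : ℝ := ((1 - x) / x) * (1 + Real.log (x / (1 - x)))

noncomputable def Hlim (t : ℝ) : ℝ :=
  if t ≤ 1 / 2 then 1 - 2 * t / zeta2
  else if t ≤ 1 then (2 / zeta2) * ∫ x in t..1, psi x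
  else 0

/-- The free path length of the billiard in the flat torus with a circular
scatterer of radius `ε`, with trajectory starting at the origin in direction `ω`. -/
noncomputable def freePath (ε ω : ℝ) : ℝ :=
  sInf {τ : ℝ | 0 < τ ∧ ∃ p : ℤ × ℤ, p ≠ (0, 0) ∧
    Real.sqrt ((τ * Real.cos ω - p.1) ^ 2 + (τ * Real.sin ω - p.2) ^ 2) ≤ ε}

/-- The number of reflections in the side cushions. -/
noncomputable def Reps (ε ω : ℝ) : ℤ :=
  ⌊freePath ε ω * Real.cos ω⌋ + ⌊freePath ε ω * Real.sin ω⌋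

noncomputable def Feps (ε t : ℝ) : ℝ :=
  (4 / Real.pi) *
    (volume {ω ∈ Set.Icc (0 : ℝ) (Real.pi / 4) | ε * (Reps ε ω : ℝ) > t}).toReal

noncomputable def Flim (t : ℝ) : ℝ :=
  (4 / Real.pi) * ∫ ω in (0 : ℝ)..(Real.pi / 4), Hlim (t / (Real.cos ω + Real.sin ω))

/-! ### Kloosterman sums and their elementary bound -/

/-- Abel summation: a monotone weight costs only its first value. -/
lemma abel_bound (f : ℕ → ℝ) (hf : Antitone f) (hf0 : ∀ i, 0 ≤ f i) (a : ℕ → ℂ) (n : ℕ) (E : ℝ)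
    (hE : ∀ k ≤ n, ‖∑ i ∈ Finset.range k, a i‖ ≤ E) :
    ‖∑ i ∈ Finset.range n, (f i : ℂ) * a i‖ ≤ f 0 * E := by
  have hE0 : 0 ≤ E := by simpa using hE 0 (Nat.zero_le _)
  have key : ∀ k : ℕ, ∑ i ∈ Finset.range k, (f i : ℂ) * a i
      = (f k : ℂ) * ∑ i ∈ Finset.range k, a i +
        ∑ i ∈ Finset.range k, ((f i - f (i+1) : ℝ) : ℂ) * ∑ j ∈ Finset.range (i+1), a j := by
    intro k
    induction k with
    | zero => simp
    | succ k ih =>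
      rw [Finset.sum_range_succ, ih,
        Finset.sum_range_succ (fun i => ((f i - f (i+1) : ℝ) : ℂ) * ∑ j ∈ Finset.range (i+1), a j) k,
        Finset.sum_range_succ a k]
      push_cast
      ring
  rw [key n]
  have h1 : ∑ i ∈ Finset.range n, (f i - f (i+1)) = f 0 - f n := Finset.sum_range_sub' f n
  calc _ ≤ ‖(f n : ℂ) * ∑ i ∈ Finset.range n, a i‖ + ∑ i ∈ Finset.range n,
        ‖((f i - f (i+1) : ℝ) : ℂ) * ∑ j ∈ Finset.range (i+1), a j‖ :=
        (norm_add_le _ _).trans (by gcongr; exact norm_sum_le _ _)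
    _ ≤ f n * E + ∑ i ∈ Finset.range n, (f i - f (i+1)) * E := by
        gcongr with i hi
        · rw [norm_mul, Complex.norm_real, Real.norm_of_nonneg (hf0 n)]
          exact mul_le_mul_of_nonneg_left (hE n le_rfl) (hf0 n)
        · have : 0 ≤ f i - f (i+1) := sub_nonneg.2 (hf (Nat.le_succ i))
          rw [norm_mul, Complex.norm_real, Real.norm_of_nonneg this]
          exact mul_le_mul_of_nonneg_left (hE _ (by simpa using hi)) this
    _ = f 0 * E := by rw [← Finset.sum_mul, h1]; ring

lemma abel_bound_real (f : ℕ → ℝ) (hf : Antitone f) (hf0 : ∀ i, 0 ≤ f i) (a : ℕ → ℝ) (n : ℕ)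
    (E : ℝ) (hE : ∀ k ≤ n, |∑ i ∈ Finset.range k, a i| ≤ E) :
    |∑ i ∈ Finset.range n, f i * a i| ≤ f 0 * E := by
  have := abel_bound f hf hf0 (fun i => (a i : ℂ)) n E (fun k hk => by
    have := hE k hk
    rwa [← Complex.ofReal_sum, Complex.norm_real])
  rw [← Real.norm_eq_abs, ← Complex.norm_real]
  simpa using this

/-- The (complete) Kloosterman sum `∑ e((a x + b x⁻¹) / m)` over the units `x` modulo `m`. -/
noncomputable def Kl (m : ℕ) [NeZero m] (a b : ZMod m) : ℂ :=
  ∑ x : (ZMod m)ˣ, ZMod.stdAddChar (a * (x : ZMod m) + b * ((x⁻¹ : (ZMod m)ˣ) : ZMod m))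

lemma le_totient_mul_divisors (m : ℕ) : m ≤ m.totient * m.divisors.card := by
  conv_lhs => rw [← Nat.sum_totient m]
  calc ∑ d ∈ m.divisors, d.totient ≤ ∑ d ∈ m.divisors, m.totient := by
        refine Finset.sum_le_sum fun d hd => ?_
        rcases Nat.eq_zero_or_pos m with rfl | h
        · simp at hd
        · exact Nat.le_of_dvd (Nat.totient_pos.2 h) (Nat.totient_dvd_of_dvd (Nat.dvd_of_mem_divisors hd))
    _ = _ := by simp [mul_comm]

section
variable (m : ℕ) [NeZero m]

/-- Orthogonality of the additive characters modulo `m`. -/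
lemma char_sum (b : ZMod m) :
    ∑ x : ZMod m, (ZMod.stdAddChar (x * b) : ℂ) = if b = 0 then (m : ℂ) else 0 := by
  have := AddChar.sum_mulShift b (ZMod.isPrimitive_stdAddChar m)
  rw [this]; simp [ZMod.card]

/-- A second moment over all pairs of frequencies counts coincidences of `(f, g)`. -/
lemma moment {ι : Type*} [Fintype ι] (f g : ι → ZMod m) :
    ∑ a : ZMod m, ∑ b : ZMod m, ‖∑ i, (ZMod.stdAddChar (a * f i + b * g i) : ℂ)‖ ^ 2
      = (m : ℝ) ^ 2 * (Finset.univ.filter (fun q : ι × ι => f q.1 = f q.2 ∧ g q.1 = g q.2)).card := by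
  classical
  have h : ∀ a b : ZMod m, ((‖∑ i, (ZMod.stdAddChar (a * f i + b * g i) : ℂ)‖ ^ 2 : ℝ) : ℂ)
      = ∑ q : ι × ι, (ZMod.stdAddChar (a * (f q.1 - f q.2)) : ℂ)
        * ZMod.stdAddChar (b * (g q.1 - g q.2)) := by
    intro a b
    push_cast
    rw [← Complex.mul_conj', map_sum, Finset.sum_mul_sum, ← Finset.univ_product_univ,
      Finset.sum_product]
    refine Finset.sum_congr rfl fun i _ => Finset.sum_congr rfl fun j _ => ?_
    rw [← AddChar.map_neg_eq_conj, ← AddChar.map_add_eq_mul, ← AddChar.map_add_eq_mul]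
    congr 1; ring
  have : ((∑ a : ZMod m, ∑ b : ZMod m, ‖∑ i, (ZMod.stdAddChar (a * f i + b * g i) : ℂ)‖ ^ 2 : ℝ) : ℂ)
      = (((m : ℝ) ^ 2 * (Finset.univ.filter
        (fun q : ι × ι => f q.1 = f q.2 ∧ g q.1 = g q.2)).card : ℝ) : ℂ) := by
    rw [Complex.ofReal_sum]
    simp_rw [Complex.ofReal_sum, h]
    have h2 : ∀ a : ZMod m, ∑ b : ZMod m, ∑ q : ι × ι,
        (ZMod.stdAddChar (a * (f q.1 - f q.2)) : ℂ) * ZMod.stdAddChar (b * (g q.1 - g q.2))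
        = ∑ q : ι × ι, (ZMod.stdAddChar (a * (f q.1 - f q.2)) : ℂ) *
          (if g q.1 - g q.2 = 0 then (m : ℂ) else 0) := by
      intro a
      rw [Finset.sum_comm]
      refine Finset.sum_congr rfl fun q _ => ?_
      rw [← Finset.mul_sum, char_sum]
    simp_rw [h2]
    rw [Finset.sum_comm]
    simp_rw [← Finset.sum_mul, char_sum]
    rw [Finset.card_filter]
    push_cast
    rw [Finset.mul_sum]
    refine Finset.sum_congr rfl fun q _ => ?_
    by_cases h1 : f q.1 = f q.2 <;> by_cases h2 : g q.1 = g q.2 <;> simp [h1, h2, sub_eq_zero]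
    ring
  exact_mod_cast this

/-- The annihilator of `a` modulo `m` has at most (in fact exactly) `gcd(a, m)` elements. -/
lemma card_ann (a : ZMod m) :
    (Finset.univ.filter (fun t : ZMod m => t * a = 0)).card ≤ Nat.gcd a.val m := by
  have hm : 0 < m := Nat.pos_of_ne_zero (NeZero.ne m)
  have hg : 0 < Nat.gcd a.val m := Nat.gcd_pos_of_pos_right _ hm
  refine le_trans (Finset.card_le_card ?_) (IsAddCyclic.card_nsmul_eq_zero_le (α := ZMod m) hg)
  intro t ht
  simp only [Finset.mem_filter, Finset.mem_univ, true_and] at ht ⊢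
  have hb := Nat.gcd_eq_gcd_ab a.val m
  have hb' : ((Nat.gcd a.val m : ℕ) : ZMod m) = a * ((Nat.gcdA a.val m : ℤ) : ZMod m) := by
    have := congrArg (fun z : ℤ => (z : ZMod m)) hb
    simpa using this
  rw [nsmul_eq_mul, hb', mul_right_comm, mul_comm a, ht, zero_mul]

/-- `∑ gcd(a, m) ≤ m τ(m)`: write each gcd as at most the sum of the common divisors. -/
lemma sum_gcd_le : ∑ a : ZMod m, Nat.gcd a.val m ≤ m * m.divisors.card := by
  have h1 : ∑ a : ZMod m, Nat.gcd a.val m = ∑ a ∈ Finset.range m, Nat.gcd a m := by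
    symm
    refine Finset.sum_bij' (fun a _ => (a : ZMod m)) (fun a _ => a.val) ?_ ?_ ?_ ?_ ?_
    · simp
    · intro a _; simpa using ZMod.val_lt a
    · intro a ha; exact ZMod.val_cast_of_lt (by simpa using ha)
    · intro a _; simp
    · intro a ha; rw [ZMod.val_cast_of_lt (by simpa using ha)]
  have hm : m ≠ 0 := NeZero.ne m
  rw [h1]
  calc ∑ a ∈ Finset.range m, Nat.gcd a m
      ≤ ∑ a ∈ Finset.range m, ∑ d ∈ m.divisors, if d ∣ a then d else 0 := by
        refine Finset.sum_le_sum fun a _ => ?_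
        have hd : Nat.gcd a m ∈ m.divisors := Nat.mem_divisors.2 ⟨Nat.gcd_dvd_right _ _, hm⟩
        have := Finset.single_le_sum (f := fun d => if d ∣ a then d else 0)
          (fun i _ => Nat.zero_le _) hd
        simpa [Nat.gcd_dvd_left] using this
    _ = ∑ d ∈ m.divisors, ∑ a ∈ Finset.range m, if d ∣ a then d else 0 := Finset.sum_comm
    _ ≤ ∑ d ∈ m.divisors, m := by
        refine Finset.sum_le_sum fun d hd => ?_
        obtain ⟨c, rfl⟩ := Nat.dvd_of_mem_divisors hd
        have hd0 : 0 < d := Nat.pos_of_mem_divisors hd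
        rw [← Finset.sum_filter, Finset.sum_const, smul_eq_mul, mul_comm d c]
        gcongr
        calc _ ≤ ((Finset.range c).image (fun k => d * k)).card := by
              apply Finset.card_le_card
              intro a ha
              simp only [Finset.mem_filter, Finset.mem_range, Finset.mem_image] at ha ⊢
              obtain ⟨h, k, rfl⟩ := ha
              exact ⟨k, by rw [mul_comm c d] at h; exact Nat.lt_of_mul_lt_mul_left h, rfl⟩
          _ ≤ c := Finset.card_image_le.trans (by simp)
    _ = m * m.divisors.card := by simp [mul_comm]

/-- Zero products of three residues: fix two factors and apply `card_ann` and `sum_gcd_le`. -/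
lemma card_abc : (Finset.univ.filter (fun q : ZMod m × ZMod m × ZMod m =>
    q.1 * q.2.1 * q.2.2 = 0)).card ≤ (m * m.divisors.card) ^ 2 := by
  classical
  have hm : 0 < m := Nat.pos_of_ne_zero (NeZero.ne m)
  rw [Finset.card_filter, ← Finset.univ_product_univ, Finset.sum_product]
  have h : ∀ A B : ZMod m, (∑ C : ZMod m, if A * B * C = 0 then 1 else 0)
      ≤ Nat.gcd A.val m * Nat.gcd B.val m := by
    intro A B
    rw [← Finset.card_filter]
    have := card_ann m (A * B)
    simp_rw [mul_comm (A * B)]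
    refine this.trans ?_
    rw [ZMod.val_mul]
    have : Nat.gcd (A.val * B.val % m) m = Nat.gcd (A.val * B.val) m := by
      rw [Nat.gcd_comm, Nat.gcd_comm (A.val * B.val), Nat.gcd_rec m (A.val * B.val),
        Nat.gcd_comm m]
    rw [this, Nat.gcd_comm _ m, Nat.gcd_comm _ m, Nat.gcd_comm _ m]
    exact Nat.le_of_dvd (Nat.mul_pos (Nat.gcd_pos_of_pos_left _ hm) (Nat.gcd_pos_of_pos_left _ hm))
      (Nat.gcd_mul_right_dvd_mul_gcd _ _ _)
  calc _ = ∑ A : ZMod m, ∑ B : ZMod m, ∑ C : ZMod m, (if A * B * C = 0 then 1 else 0) := by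
        refine Finset.sum_congr rfl fun A _ => ?_
        rw [← Finset.univ_product_univ, Finset.sum_product]
    _ ≤ ∑ A : ZMod m, ∑ B : ZMod m, Nat.gcd A.val m * Nat.gcd B.val m :=
        Finset.sum_le_sum fun A _ => Finset.sum_le_sum fun B _ => h A B
    _ = (∑ A : ZMod m, Nat.gcd A.val m) ^ 2 := by rw [sq, Finset.sum_mul_sum]
    _ ≤ _ := by gcongr; exact sum_gcd_le m

/-- Halving is ambiguous by at most two values; `m` may be even. -/
lemma card_two_mul (c : ZMod m) :
    (Finset.univ.filter (fun t : ZMod m => 2 * t = c)).card ≤ 2 := by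
  classical
  rcases (Finset.univ.filter (fun t : ZMod m => 2 * t = c)).eq_empty_or_nonempty with h | ⟨t₀, h₀⟩
  · simp [h]
  have h0 : 2 * t₀ = c := by simpa using h₀
  refine le_trans ?_ (IsAddCyclic.card_nsmul_eq_zero_le (α := ZMod m) (n := 2) two_pos)
  refine Finset.card_le_card_of_injOn (fun t => t - t₀) ?_ ?_
  · intro t ht
    have ht : 2 * t = c := by simpa using ht
    simp [mul_sub, ht, h0]
  · intro a _ b _ hab
    simpa using hab

/-- Kloosterman's count of the solutions of `x₁ + x₂ = x₃ + x₄`, `x₁⁻¹ + x₂⁻¹ = x₃⁻¹ + x₄⁻¹`: the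
system forces `(x₁ - x₃) (x₁ - x₄) (x₃ + x₄) = 0`, and the three factors determine `2 x₁`, hence the
solution up to two choices. -/
lemma card_sol : (Finset.univ.filter (fun q : ((ZMod m)ˣ × (ZMod m)ˣ) × ((ZMod m)ˣ × (ZMod m)ˣ) =>
      (q.1.1 : ZMod m) + q.1.2 = q.2.1 + q.2.2 ∧
      ((q.1.1⁻¹ : (ZMod m)ˣ) : ZMod m) + (q.1.2⁻¹ : (ZMod m)ˣ)
        = (q.2.1⁻¹ : (ZMod m)ˣ) + (q.2.2⁻¹ : (ZMod m)ˣ))).card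
      ≤ 2 * (m * m.divisors.card) ^ 2 := by
  classical
  refine le_trans (Finset.card_le_mul_card_image_of_maps_to (t := Finset.univ.filter
    (fun q : ZMod m × ZMod m × ZMod m => q.1 * q.2.1 * q.2.2 = 0))
    (f := fun q => ((q.1.1 : ZMod m) - q.2.1, (q.1.1 : ZMod m) - q.2.2, (q.2.1 : ZMod m) + q.2.2))
    ?_ 2 ?_) (Nat.mul_le_mul_left 2 (card_abc m))
  · rintro ⟨⟨x1, x2⟩, x3, x4⟩ h
    simp only [Finset.mem_univ, true_and, Finset.mem_filter] at h ⊢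
    obtain ⟨h1, h2⟩ := h
    have e1 : (x1 : ZMod m) * (x1⁻¹ : (ZMod m)ˣ) = 1 := Units.mul_inv x1
    have e2 : (x2 : ZMod m) * (x2⁻¹ : (ZMod m)ˣ) = 1 := Units.mul_inv x2
    have e3 : (x3 : ZMod m) * (x3⁻¹ : (ZMod m)ˣ) = 1 := Units.mul_inv x3
    have e4 : (x4 : ZMod m) * (x4⁻¹ : (ZMod m)ˣ) = 1 := Units.mul_inv x4
    have h3 : ((x1 : ZMod m) + x2) * (x3 * x4) = (x3 + x4) * (x1 * x2) := by
      have := congrArg (· * ((x1 : ZMod m) * x2 * (x3 * x4))) h2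
      beta_reduce at this
      linear_combination this - (x2 * (x3 * x4) : ZMod m) * e1 - (x1 * (x3 * x4) : ZMod m) * e2
        + (x4 * (x1 * x2) : ZMod m) * e3 + (x3 * (x1 * x2) : ZMod m) * e4
    have h4 : (x2 : ZMod m) = x3 + x4 - x1 := by linear_combination h1
    rw [h4] at h3
    linear_combination h3
  · rintro ⟨A, B, C⟩ _
    refine le_trans ?_ (card_two_mul m (A + B + C))
    refine Finset.card_le_card_of_injOn (fun q => (q.1.1 : ZMod m)) ?_ ?_
    · rintro ⟨⟨x1, x2⟩, x3, x4⟩ h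
      simp only [Finset.coe_filter, Finset.mem_univ, true_and, Set.mem_ofPred_eq,
        Finset.mem_filter, Prod.mk.injEq] at h ⊢
      obtain ⟨_, h1, h2, h3⟩ := h
      rw [← h1, ← h2, ← h3]; ring
    · rintro ⟨⟨x1, x2⟩, x3, x4⟩ h ⟨⟨y1, y2⟩, y3, y4⟩ h' hxy
      simp only [Finset.coe_filter, Finset.mem_univ, true_and, Set.mem_ofPred_eq,
        Finset.mem_filter, Prod.mk.injEq] at h h' hxy
      obtain ⟨⟨h0, _⟩, h1, h2, h3⟩ := h
      obtain ⟨⟨h0', _⟩, h1', h2', h3'⟩ := h'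
      have k1 : x1 = y1 := Units.ext hxy
      have k3 : x3 = y3 := Units.ext (by linear_combination hxy - h1 + h1')
      have k4 : x4 = y4 := Units.ext (by linear_combination hxy - h2 + h2')
      have k2 : x2 = y2 := Units.ext (by
        subst k1 k3 k4; linear_combination h0 - h0')
      rw [k1, k2, k3, k4]

/-- The fourth moment of Kloosterman sums, by `moment` for the sums `x₁ + x₂`, `x₁⁻¹ + x₂⁻¹`
and `card_sol`. -/
lemma kl_fourth : ∑ a : ZMod m, ∑ b : ZMod m, ‖Kl m a b‖ ^ 4
    ≤ 2 * (m : ℝ) ^ 4 * (m.divisors.card : ℝ) ^ 2 := by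
  have h := moment m (ι := (ZMod m)ˣ × (ZMod m)ˣ) (fun q => (q.1 : ZMod m) + (q.2 : ZMod m))
    (fun q => ((q.1⁻¹ : (ZMod m)ˣ) : ZMod m) + ((q.2⁻¹ : (ZMod m)ˣ) : ZMod m))
  have h2 : ∀ a b : ZMod m, ‖Kl m a b‖ ^ 4 = ‖∑ q : (ZMod m)ˣ × (ZMod m)ˣ,
      (ZMod.stdAddChar (a * ((q.1 : ZMod m) + (q.2 : ZMod m)) +
        b * (((q.1⁻¹ : (ZMod m)ˣ) : ZMod m) + ((q.2⁻¹ : (ZMod m)ˣ) : ZMod m))) : ℂ)‖ ^ 2 := by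
    intro a b
    rw [show (4 : ℕ) = 2 * 2 from rfl, pow_mul, ← norm_pow, sq (Kl m a b), Kl, Finset.sum_mul_sum,
      ← Finset.univ_product_univ, Finset.sum_product]
    congr 2
    refine Finset.sum_congr rfl fun i _ => Finset.sum_congr rfl fun j _ => ?_
    rw [← AddChar.map_add_eq_mul]
    congr 1; ring
  simp_rw [h2]
  rw [h]
  have := card_sol m
  have h3 := (Nat.cast_le (α := ℝ)).2 this
  push_cast at h3
  calc _ ≤ (m : ℝ) ^ 2 * (2 * (m * m.divisors.card) ^ 2) := by gcongr
    _ = _ := by ring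

lemma kl_swap (a b : ZMod m) : Kl m a b = Kl m b a := by
  unfold Kl
  refine Fintype.sum_equiv (Equiv.inv _) _ _ fun x => ?_
  simp [add_comm]

/-- Invariance under `(a, b) ↦ (t a, t⁻¹ b)`, by the substitution `x ↦ t x`. -/
lemma kl_orbit (a b : ZMod m) (t : (ZMod m)ˣ) :
    Kl m (t * a) ((t⁻¹ : (ZMod m)ˣ) * b) = Kl m a b := by
  unfold Kl
  refine Fintype.sum_equiv (Equiv.mulLeft t) _ _ fun x => ?_
  simp only [Equiv.coe_mulLeft, mul_inv, Units.val_mul]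
  congr 1; ring

/-- The value at `(a, b)` is taken on its whole orbit under `kl_orbit`, so it occurs at least
`φ(m) / gcd(a, m)` times in the fourth moment. -/
lemma kl_bound_aux (a b : ZMod m) : ‖Kl m a b‖ ^ 4 * (m.totient : ℝ)
    ≤ (Nat.gcd a.val m : ℝ) * (2 * (m : ℝ) ^ 4 * (m.divisors.card : ℝ) ^ 2) := by
  classical
  have h1 : ‖Kl m a b‖ ^ 4 * (m.totient : ℝ)
      = ∑ t : (ZMod m)ˣ, ‖Kl m (t * a) ((t⁻¹ : (ZMod m)ˣ) * b)‖ ^ 4 := by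
    simp_rw [kl_orbit]
    rw [Finset.sum_const, Finset.card_univ, ZMod.card_units_eq_totient, nsmul_eq_mul, mul_comm]
  have h2 : ∑ t : (ZMod m)ˣ, ‖Kl m (t * a) ((t⁻¹ : (ZMod m)ˣ) * b)‖ ^ 4
      = ∑ q : ZMod m × ZMod m, ∑ t ∈ Finset.univ.filter (fun t : (ZMod m)ˣ =>
        ((t : ZMod m) * a, ((t⁻¹ : (ZMod m)ˣ) : ZMod m) * b) = q), ‖Kl m q.1 q.2‖ ^ 4 := by
    rw [← Finset.sum_fiberwise (s := Finset.univ) (g := fun t : (ZMod m)ˣ =>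
        ((t : ZMod m) * a, ((t⁻¹ : (ZMod m)ˣ) : ZMod m) * b))]
    refine Finset.sum_congr rfl fun q _ => Finset.sum_congr rfl fun t ht => ?_
    simp only [Finset.mem_filter, Finset.mem_univ, true_and] at ht
    rw [← ht]
  have h3 : ∀ q : ZMod m × ZMod m, (Finset.univ.filter (fun t : (ZMod m)ˣ =>
        ((t : ZMod m) * a, ((t⁻¹ : (ZMod m)ˣ) : ZMod m) * b) = q)).card ≤ Nat.gcd a.val m := by
    intro q
    rcases (Finset.univ.filter (fun t : (ZMod m)ˣ =>
        ((t : ZMod m) * a, ((t⁻¹ : (ZMod m)ˣ) : ZMod m) * b) = q)).eq_empty_or_nonempty with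
      h | ⟨t₀, h₀⟩
    · rw [h]; simp
    refine le_trans ?_ (card_ann m a)
    refine Finset.card_le_card_of_injOn (fun t => (t : ZMod m) - t₀) ?_ ?_
    · intro t ht
      simp only [Finset.coe_filter, Finset.mem_univ, true_and, Set.mem_ofPred_eq,
        Finset.mem_filter] at ht h₀ ⊢
      have := ht.trans h₀.symm
      rw [sub_mul, sub_eq_zero]
      exact (Prod.mk.inj this).1
    · intro x _ y _ hxy
      exact Units.ext (by simpa using hxy)
  rw [h1, h2]
  calc _ ≤ ∑ q : ZMod m × ZMod m, (Nat.gcd a.val m : ℝ) * ‖Kl m q.1 q.2‖ ^ 4 := by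
        refine Finset.sum_le_sum fun q _ => ?_
        rw [Finset.sum_const, nsmul_eq_mul]
        gcongr
        exact_mod_cast h3 q
    _ = (Nat.gcd a.val m : ℝ) * ∑ a : ZMod m, ∑ b : ZMod m, ‖Kl m a b‖ ^ 4 := by
        rw [← Finset.mul_sum, ← Finset.univ_product_univ, Finset.sum_product]
    _ ≤ _ := by gcongr; exact kl_fourth m

/-- Kloosterman's elementary bound, in a convenient (non-optimal) form. -/
lemma kl_bound (a b : ZMod m) : ‖Kl m a b‖
    ≤ 2 * (Nat.gcd a.val m : ℝ) * (m : ℝ) ^ ((3 : ℝ) / 4) * (m.divisors.card : ℝ) := by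
  have hm : 0 < m := Nat.pos_of_ne_zero (NeZero.ne m)
  have hm' : (0 : ℝ) < m := by exact_mod_cast hm
  have hg : (1 : ℝ) ≤ Nat.gcd a.val m := by
    exact_mod_cast Nat.gcd_pos_of_pos_right _ hm
  have hτ : (1 : ℝ) ≤ m.divisors.card := by
    exact_mod_cast Finset.card_pos.2 ⟨1, Nat.one_mem_divisors.2 hm.ne'⟩
  have hφ : (0 : ℝ) < m.totient := by exact_mod_cast Nat.totient_pos.2 hm
  have h1 := kl_bound_aux m a b
  have h2 : (m : ℝ) ≤ m.totient * m.divisors.card := by exact_mod_cast le_totient_mul_divisors m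
  set g : ℝ := ((Nat.gcd a.val m : ℕ) : ℝ)
  set T : ℝ := ((m.divisors.card : ℕ) : ℝ)
  set K := ‖Kl m a b‖
  have hK : 0 ≤ K := norm_nonneg _
  have h3 : K ^ 4 * m ≤ g * (2 * (m : ℝ) ^ 4 * T ^ 2) * T :=
    calc K ^ 4 * m ≤ K ^ 4 * (m.totient * T) := by gcongr
      _ = K ^ 4 * m.totient * T := by ring
      _ ≤ _ := by gcongr
  have h4 : K ^ 4 ≤ 2 * g * (m : ℝ) ^ 3 * T ^ 3 := by
    refine le_of_mul_le_mul_right (h3.trans (le_of_eq ?_)) hm'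
    ring
  have h5 : ((m : ℝ) ^ ((3 : ℝ) / 4)) ^ 4 = (m : ℝ) ^ 3 := by
    rw [← Real.rpow_natCast, ← Real.rpow_mul hm'.le, ← Real.rpow_natCast]
    norm_num
  refine le_of_pow_le_pow_left₀ (n := 4) (by norm_num) (by positivity) (h4.trans ?_)
  calc 2 * g * (m : ℝ) ^ 3 * T ^ 3 ≤ 2 ^ 4 * g ^ 4 * (m : ℝ) ^ 3 * T ^ 4 := by
        have a1 : g ≤ g ^ 4 := le_self_pow₀ hg (by norm_num)
        have a2 : T ^ 3 ≤ T ^ 4 := pow_le_pow_right₀ hτ (by norm_num)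
        gcongr
        norm_num
    _ = _ := by rw [mul_pow, mul_pow, mul_pow, h5]

end

/-! ### Equidistribution of modular inverses -/

section
variable (m : ℕ) [NeZero m]

/-- Majorant for the size of the Fourier coefficients modulo `m` of the indicator of an interval. -/
noncomputable def bInt (k : ZMod m) : ℝ :=
  if k = 0 then (m : ℝ) else (m : ℝ) / 2 * (1 / (k.val : ℝ) + 1 / ((m - k.val : ℕ) : ℝ))

/-- The factor lost in Kloosterman's bound; normalised to `1` at the zero frequency. -/
noncomputable def gInt (k : ZMod m) : ℝ := if k = 0 then 1 else (Nat.gcd k.val m : ℝ)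

lemma bInt_nonneg (k : ZMod m) : 0 ≤ bInt m k := by
  unfold bInt; split_ifs <;> positivity

lemma one_le_gInt (k : ZMod m) : 1 ≤ gInt m k := by
  unfold gInt; split_ifs
  · exact le_rfl
  · exact_mod_cast Nat.gcd_pos_of_pos_right _ (Nat.pos_of_ne_zero (NeZero.ne m))

lemma stdAddChar_norm (k : ZMod m) : ‖(ZMod.stdAddChar k : ℂ)‖ = 1 := by
  rw [ZMod.stdAddChar_apply, Circle.norm_coe]

lemma one_sub_char_norm (k : ZMod m) : ‖(ZMod.stdAddChar k : ℂ) - 1‖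
    = 2 * |Real.sin (π * (k.val / m))| := by
  have h : (ZMod.stdAddChar k : ℂ) = Complex.exp (Complex.I * (2 * π * (k.val / m) : ℝ)) := by
    have := ZMod.stdAddChar_coe (N := m) (k.val : ℤ)
    simp only [Int.cast_natCast, ZMod.natCast_zmod_val] at this
    rw [this]
    congr 1
    push_cast
    ring
  rw [h, Complex.norm_exp_I_mul_ofReal_sub_one, norm_mul, Real.norm_eq_abs, Real.norm_eq_abs,
    abs_of_pos two_pos]
  congr 3; ring

/-- A character sum over at most `m` consecutive integers is a geometric sum, bounded through
`|sin (π k / m)|`; the two terms of `bInt` account for the two ends of the range of `k`. -/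
lemma partial_bound (k : ZMod m) (c n : ℕ) (hn : n ≤ m) :
    ‖∑ i ∈ Finset.range n, (ZMod.stdAddChar (-(k * ((c + i : ℕ) : ZMod m))) : ℂ)‖ ≤ bInt m k := by
  have hm : 0 < m := Nat.pos_of_ne_zero (NeZero.ne m)
  have hm' : (0 : ℝ) < m := by exact_mod_cast hm
  unfold bInt
  split_ifs with hk
  · subst hk
    refine (norm_sum_le _ _).trans ?_
    simp [hn]
  have hterm : ∀ i : ℕ, (ZMod.stdAddChar (-(k * ((c + i : ℕ) : ZMod m))) : ℂ)
      = ZMod.stdAddChar (-(k * (c : ZMod m))) * (ZMod.stdAddChar (-k) : ℂ) ^ i := by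
    intro i
    rw [← AddChar.map_nsmul_eq_pow, ← AddChar.map_add_eq_mul]
    congr 1
    push_cast
    simp only [nsmul_eq_mul]
    ring
  simp_rw [hterm]
  rw [← Finset.mul_sum, norm_mul, stdAddChar_norm, one_mul]
  set z : ℂ := ZMod.stdAddChar (-k)
  have hz : ‖z‖ = 1 := stdAddChar_norm m _
  have hz1 : ‖z - 1‖ = 2 * |Real.sin (π * (k.val / m))| := by
    rw [← one_sub_char_norm]
    have : z = (starRingEnd ℂ) (ZMod.stdAddChar k : ℂ) := AddChar.map_neg_eq_conj _ _
    rw [this, ← Complex.norm_conj]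
    simp
  have hk0 : 0 < k.val := Nat.pos_of_ne_zero (by simpa [ZMod.val_eq_zero] using hk)
  have hkm : k.val < m := ZMod.val_lt k
  have hk0' : (0 : ℝ) < k.val := by exact_mod_cast hk0
  have hmk : (0 : ℝ) < ((m - k.val : ℕ) : ℝ) := by exact_mod_cast Nat.sub_pos_of_lt hkm
  have hcast : ((m - k.val : ℕ) : ℝ) = m - k.val := by rw [Nat.cast_sub hkm.le]
  have hs : ∀ y : ℝ, 0 < y → |Real.sin (π * (k.val / m))| ≥ 2 * (y / m) →
      ‖∑ i ∈ Finset.range n, z ^ i‖ ≤ m / 2 * (1 / y) := by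
    intro y hy h
    have hpos : 0 < ‖z - 1‖ := by rw [hz1]; have : 0 < 2 * (y / m) := by positivity
                                  linarith
    have hne : z ≠ 1 := by
      rintro h'; rw [h'] at hpos; simp at hpos
    rw [geom_sum_eq hne, norm_div, div_le_iff₀ hpos]
    calc ‖z ^ n - 1‖ ≤ ‖z ^ n‖ + ‖(1 : ℂ)‖ := norm_sub_le _ _
      _ = 2 := by rw [norm_pow, hz]; norm_num
      _ = m / 2 * (1 / y) * (2 * (2 * (y / m))) := by field_simp
      _ ≤ _ := by rw [hz1]; gcongr
  rcases le_total (k.val / m : ℝ) (1 / 2) with h | h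
  · refine (hs k.val hk0' ?_).trans ?_
    · refine le_trans ?_ (le_abs_self _)
      have := Real.mul_le_sin (x := π * (k.val / m)) (by positivity) (by nlinarith [Real.pi_pos])
      refine le_trans (le_of_eq ?_) this
      field_simp
    · apply mul_le_mul_of_nonneg_left _ (by positivity)
      have : 0 ≤ 1 / ((m - k.val : ℕ) : ℝ) := by positivity
      linarith
  · refine (hs ((m - k.val : ℕ) : ℝ) hmk ?_).trans ?_
    · refine le_trans ?_ (le_abs_self _)
      have h1 : (k.val / m : ℝ) ≤ 1 := by rw [div_le_one hm']; exact_mod_cast hkm.le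
      have := Real.mul_le_sin (x := π - π * (k.val / m)) (by nlinarith [Real.pi_pos])
        (by nlinarith [Real.pi_pos])
      rw [Real.sin_pi_sub] at this
      refine le_trans (le_of_eq ?_) this
      rw [hcast]
      field_simp
    · apply mul_le_mul_of_nonneg_left _ (by positivity)
      have : 0 ≤ 1 / (k.val : ℝ) := by positivity
      linarith

/-- `∑ gcd(k, m) / k ≪ τ(m) log m`, by splitting over the common divisors. -/
lemma sum_gcd_div : ∑ k ∈ Finset.Ico 1 m, (Nat.gcd k m : ℝ) / k
    ≤ m.divisors.card * (1 + Real.log m) := by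
  have hm : 0 < m := Nat.pos_of_ne_zero (NeZero.ne m)
  calc ∑ k ∈ Finset.Ico 1 m, (Nat.gcd k m : ℝ) / k
      ≤ ∑ k ∈ Finset.Ico 1 m, ∑ d ∈ m.divisors, if d ∣ k then (d : ℝ) / k else 0 := by
        refine Finset.sum_le_sum fun k _ => ?_
        have hd : Nat.gcd k m ∈ m.divisors := Nat.mem_divisors.2 ⟨Nat.gcd_dvd_right _ _, hm.ne'⟩
        have := Finset.single_le_sum (f := fun d : ℕ => if d ∣ k then (d : ℝ) / k else 0)
          (fun i _ => by split_ifs <;> positivity) hd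
        simpa [Nat.gcd_dvd_left] using this
    _ = ∑ d ∈ m.divisors, ∑ k ∈ Finset.Ico 1 m, if d ∣ k then (d : ℝ) / k else 0 :=
        Finset.sum_comm
    _ ≤ ∑ d ∈ m.divisors, (1 + Real.log m) := by
        refine Finset.sum_le_sum fun d hd => ?_
        have hd0 : 0 < d := Nat.pos_of_mem_divisors hd
        refine le_trans ?_ (harmonic_le_one_add_log m)
        rw [harmonic_eq_sum_Icc, ← Finset.sum_filter]
        push_cast
        calc ∑ k ∈ (Finset.Ico 1 m).filter (fun k => d ∣ k), (d : ℝ) / k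
            = ∑ j ∈ ((Finset.Ico 1 m).filter (fun k => d ∣ k)).image (fun k => k / d),
              (j : ℝ)⁻¹ := by
              rw [Finset.sum_image]
              · refine Finset.sum_congr rfl fun k hk => ?_
                simp only [Finset.mem_filter, Finset.mem_Ico] at hk
                obtain ⟨hk, j, rfl⟩ := hk
                rw [Nat.mul_div_cancel_left _ hd0]
                have : (d : ℝ) ≠ 0 := by positivity
                push_cast
                rw [div_mul_eq_div_div, div_self this, one_div]
              · intro x hx y hy hxy
                simp only [Finset.coe_filter, Set.mem_ofPred_eq] at hx hy
                exact (Nat.div_left_inj hx.2 hy.2).1 hxy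
          _ ≤ _ := by
              refine Finset.sum_le_sum_of_subset_of_nonneg ?_ (fun _ _ _ => by positivity)
              intro j hj
              simp only [Finset.mem_image, Finset.mem_filter, Finset.mem_Ico, Finset.mem_Icc] at hj ⊢
              obtain ⟨k, ⟨hk, j', rfl⟩, rfl⟩ := hj
              rw [Nat.mul_div_cancel_left _ hd0]
              refine ⟨Nat.pos_of_ne_zero ?_, ?_⟩
              · rintro rfl; omega
              · have := Nat.le_mul_of_pos_left j' hd0
                omega
    _ = _ := by rw [Finset.sum_const, nsmul_eq_mul]

/-- Total weight of the frequencies in the completed sum. -/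
lemma sum_bg : ∑ k : ZMod m, bInt m k * gInt m k
    ≤ 2 * m * m.divisors.card * (1 + Real.log m) := by
  have hm : 0 < m := Nat.pos_of_ne_zero (NeZero.ne m)
  have hm' : (1 : ℝ) ≤ m := by exact_mod_cast hm
  have hτ : (1 : ℝ) ≤ m.divisors.card := by
    exact_mod_cast Finset.card_pos.2 ⟨1, Nat.one_mem_divisors.2 hm.ne'⟩
  have hlog : 0 ≤ Real.log m := Real.log_nonneg hm'
  have h1 : ∑ k : ZMod m, bInt m k * gInt m k = ∑ k ∈ Finset.range m,
      if k = 0 then (m : ℝ) else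
        (m : ℝ) / 2 * (1 / (k : ℝ) + 1 / ((m - k : ℕ) : ℝ)) * Nat.gcd k m := by
    refine Finset.sum_bij' (fun a _ => a.val) (fun a _ => (a : ZMod m)) ?_ ?_ ?_ ?_ ?_
    · intro a _; simpa using ZMod.val_lt a
    · simp
    · intro a _; simp
    · intro a ha; exact ZMod.val_cast_of_lt (by simpa using ha)
    · intro a _
      by_cases h : a = 0
      · simp [h, bInt, gInt]
      · simp [h, bInt, gInt, ZMod.val_eq_zero]
  have h2 : ∑ k ∈ Finset.range m, (if k = 0 then (m : ℝ) else
        (m : ℝ) / 2 * (1 / (k : ℝ) + 1 / ((m - k : ℕ) : ℝ)) * Nat.gcd k m)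
      = m + ∑ k ∈ Finset.Ico 1 m,
        (m : ℝ) / 2 * (1 / (k : ℝ) + 1 / ((m - k : ℕ) : ℝ)) * Nat.gcd k m := by
    rw [Finset.range_eq_Ico, Finset.sum_eq_sum_Ico_succ_bot hm]
    simp only [if_true, zero_add]
    congr 1
    refine Finset.sum_congr rfl fun k hk => ?_
    rw [if_neg]
    have := (Finset.mem_Ico.1 hk).1
    omega
  have h3 : ∑ k ∈ Finset.Ico 1 m, (1 / ((m - k : ℕ) : ℝ)) * Nat.gcd k m
      = ∑ k ∈ Finset.Ico 1 m, (Nat.gcd k m : ℝ) / k := by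
    refine Finset.sum_bij' (fun k _ => m - k) (fun k _ => m - k) ?_ ?_ ?_ ?_ ?_
    · intro k hk; simp only [Finset.mem_Ico] at hk ⊢; omega
    · intro k hk; simp only [Finset.mem_Ico] at hk ⊢; omega
    · intro k hk; simp only [Finset.mem_Ico] at hk; omega
    · intro k hk; simp only [Finset.mem_Ico] at hk; omega
    · intro k hk
      simp only [Finset.mem_Ico] at hk
      rw [show Nat.gcd (m - k) m = Nat.gcd k m from by
        rw [Nat.gcd_comm, Nat.gcd_comm k, Nat.gcd_self_sub_right hk.2.le]]
      ring
  have h4 : ∑ k ∈ Finset.Ico 1 m,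
        (m : ℝ) / 2 * (1 / (k : ℝ) + 1 / ((m - k : ℕ) : ℝ)) * Nat.gcd k m
      = m * ∑ k ∈ Finset.Ico 1 m, (Nat.gcd k m : ℝ) / k := by
    have : ∀ k : ℕ, (m : ℝ) / 2 * (1 / (k : ℝ) + 1 / ((m - k : ℕ) : ℝ)) * Nat.gcd k m
      = m / 2 * ((Nat.gcd k m : ℝ) / k) + m / 2 * ((1 / ((m - k : ℕ) : ℝ)) * Nat.gcd k m) := by
      intro k; ring
    simp_rw [this]
    rw [Finset.sum_add_distrib, ← Finset.mul_sum, ← Finset.mul_sum, h3]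
    ring
  rw [h1, h2, h4]
  have h5 := sum_gcd_div m
  calc (m : ℝ) + m * ∑ k ∈ Finset.Ico 1 m, (Nat.gcd k m : ℝ) / k
      ≤ m * (m.divisors.card * (1 + Real.log m)) + m * (m.divisors.card * (1 + Real.log m)) := by
        have h6 : (1 : ℝ) ≤ m.divisors.card * (1 + Real.log m) := by nlinarith
        have h7 : (m : ℝ) * 1 ≤ m * (m.divisors.card * (1 + Real.log m)) := by gcongr
        gcongr
        linarith
    _ = _ := by ring

lemma gcd_val_mul_unit (h : ZMod m) (c : (ZMod m)ˣ) :
    Nat.gcd (h * c).val m = Nat.gcd h.val m := by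
  rw [ZMod.val_mul]
  have : ∀ a : ℕ, Nat.gcd (a % m) m = Nat.gcd a m := by
    intro a
    rw [Nat.gcd_comm a, Nat.gcd_rec m a]
  rw [this]
  exact Nat.Coprime.gcd_mul_right_cancel _ (ZMod.val_coe_unit_coprime c)

/-- `kl_bound` in a form symmetric in the two frequencies; `kl_swap` covers `k = 0`. -/
lemma kl_le_gg (k h : ZMod m) (c : (ZMod m)ˣ) (hkh : ¬ (k = 0 ∧ h = 0)) :
    ‖Kl m k (h * c)‖ ≤ 2 * (m : ℝ) ^ ((3 : ℝ) / 4) * m.divisors.card * (gInt m k * gInt m h) := by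
  by_cases hk : k = 0
  · have hh : h ≠ 0 := fun h' => hkh ⟨hk, h'⟩
    rw [kl_swap]
    refine (kl_bound m _ _).trans (le_of_eq ?_)
    rw [gcd_val_mul_unit]
    simp only [gInt, hk, hh, if_true, if_false]
    ring
  · refine (kl_bound m _ _).trans ?_
    have h1 := one_le_gInt m h
    calc _ = 2 * (m : ℝ) ^ ((3 : ℝ) / 4) * m.divisors.card * (gInt m k * 1) := by
          simp only [gInt, hk, if_false]; ring
      _ ≤ _ := by
          have := one_le_gInt m k
          gcongr

/-- Detection of equality of residues by additive characters. -/
lemma ind_char (y z : ZMod m) : (if y = z then (1 : ℂ) else 0)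
    = (m : ℂ)⁻¹ * ∑ h : ZMod m, ZMod.stdAddChar (h * y) * ZMod.stdAddChar (-(h * z)) := by
  have hm : (m : ℂ) ≠ 0 := by exact_mod_cast NeZero.ne m
  have : ∀ h : ZMod m, (ZMod.stdAddChar (h * y) * ZMod.stdAddChar (-(h * z)) : ℂ)
      = ZMod.stdAddChar (h * (y - z)) := by
    intro h
    rw [← AddChar.map_add_eq_mul]; congr 1; ring
  simp_rw [this]
  rw [char_sum]
  simp only [sub_eq_zero]
  split_ifs <;> simp [hm]

/-- Completion: a weighted count of the solutions of `s p = c` modulo `m` with `s` and `p` in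
intervals, expressed through Kloosterman sums. -/
lemma completion (c : (ZMod m)ˣ) (n : ℕ) (f : ℕ → ℝ) (S : ℕ → ℕ) (P : Finset ℕ) :
    ((∑ i ∈ Finset.range n, ∑ p ∈ P, if ((S i : ℕ) : ZMod m) * (p : ZMod m) = c then f i else 0 : ℝ)
      : ℂ) = ((m : ℂ) ^ 2)⁻¹ * ∑ k : ZMod m, ∑ h : ZMod m,
      (∑ i ∈ Finset.range n, (f i : ℂ) * ZMod.stdAddChar (-(k * (S i : ZMod m)))) *
      (∑ p ∈ P, ZMod.stdAddChar (-(h * (p : ZMod m)))) * Kl m k (h * (c : ZMod m)) := by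
  classical
  have h1 : ∀ s p : ZMod m, (if s * p = c then (1 : ℂ) else 0)
      = ∑ x : (ZMod m)ˣ, (if (x : ZMod m) = s then (1 : ℂ) else 0) *
        (if (c : ZMod m) * ((x⁻¹ : (ZMod m)ˣ) : ZMod m) = p then (1 : ℂ) else 0) := by
    intro s p
    by_cases h : s * p = c
    · have hs : IsUnit s := isUnit_of_mul_isUnit_left (h ▸ c.isUnit)
      obtain ⟨u, rfl⟩ := hs
      have hp : (c : ZMod m) * ((u⁻¹ : (ZMod m)ˣ) : ZMod m) = p := by
        rw [← h, mul_comm (u : ZMod m), mul_assoc, Units.mul_inv, mul_one]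
      rw [if_pos h, Finset.sum_eq_single u]
      · simp [hp]
      · intro b _ hb
        rw [if_neg (fun h' => hb (Units.ext h')), zero_mul]
      · simp
    · rw [if_neg h]
      symm
      refine Finset.sum_eq_zero fun x _ => ?_
      by_cases h2 : (x : ZMod m) = s
      · have h3 : ¬ ((c : ZMod m) * ((x⁻¹ : (ZMod m)ˣ) : ZMod m) = p) := by
          rintro rfl
          apply h
          rw [← h2, mul_comm (c : ZMod m), ← mul_assoc, Units.mul_inv, one_mul]
        rw [if_neg h3, mul_zero]
      · rw [if_neg h2, zero_mul]
  have h2 : ∀ s p : ZMod m, (if s * p = c then (1 : ℂ) else 0)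
      = ((m : ℂ) ^ 2)⁻¹ * ∑ k : ZMod m, ∑ h : ZMod m, ZMod.stdAddChar (-(k * s)) *
        ZMod.stdAddChar (-(h * p)) * Kl m k (h * (c : ZMod m)) := by
    intro s p
    rw [h1]
    simp_rw [ind_char]
    have : ∀ x : (ZMod m)ˣ,
        ((m : ℂ)⁻¹ * ∑ k : ZMod m, ZMod.stdAddChar (k * (x : ZMod m)) * ZMod.stdAddChar (-(k * s)))
        * ((m : ℂ)⁻¹ * ∑ h : ZMod m, ZMod.stdAddChar (h * ((c : ZMod m) * ((x⁻¹ : (ZMod m)ˣ) : ZMod m))) *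
          ZMod.stdAddChar (-(h * p)))
        = ((m : ℂ) ^ 2)⁻¹ * ∑ k : ZMod m, ∑ h : ZMod m, ZMod.stdAddChar (-(k * s)) *
        ZMod.stdAddChar (-(h * p)) *
        ZMod.stdAddChar (k * (x : ZMod m) + (h * (c : ZMod m)) * ((x⁻¹ : (ZMod m)ˣ) : ZMod m)) := by
      intro x
      rw [mul_mul_mul_comm, Finset.sum_mul_sum]
      congr 1
      · rw [sq, mul_inv]
      · refine Finset.sum_congr rfl fun k _ => Finset.sum_congr rfl fun h _ => ?_
        rw [AddChar.map_add_eq_mul, mul_assoc h]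
        ring
    simp_rw [this]
    rw [← Finset.mul_sum, Finset.sum_comm]
    congr 1
    refine Finset.sum_congr rfl fun k _ => ?_
    rw [Finset.sum_comm]
    refine Finset.sum_congr rfl fun h _ => ?_
    rw [Kl, Finset.mul_sum]
  have h3 : ∀ i p : ℕ, (((if ((S i : ℕ) : ZMod m) * (p : ZMod m) = c then f i else 0 : ℝ)) : ℂ)
      = (f i : ℂ) * (if ((S i : ℕ) : ZMod m) * (p : ZMod m) = c then (1 : ℂ) else 0) := by
    intro i p; split_ifs <;> simp
  rw [Complex.ofReal_sum]
  simp_rw [Complex.ofReal_sum, h3, h2]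
  simp_rw [Finset.mul_sum, Finset.sum_mul, Finset.mul_sum]
  have e1 : ∀ F : ℕ → ℕ → ZMod m → ZMod m → ℂ,
      ∑ i ∈ Finset.range n, ∑ p ∈ P, ∑ k : ZMod m, ∑ h : ZMod m, F i p k h
      = ∑ k : ZMod m, ∑ h : ZMod m, ∑ i ∈ Finset.range n, ∑ p ∈ P, F i p k h := by
    intro F
    calc _ = ∑ i ∈ Finset.range n, ∑ k : ZMod m, ∑ p ∈ P, ∑ h : ZMod m, F i p k h :=
          Finset.sum_congr rfl fun i _ => Finset.sum_comm
      _ = ∑ k : ZMod m, ∑ i ∈ Finset.range n, ∑ p ∈ P, ∑ h : ZMod m, F i p k h := Finset.sum_comm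
      _ = ∑ k : ZMod m, ∑ i ∈ Finset.range n, ∑ h : ZMod m, ∑ p ∈ P, F i p k h :=
          Finset.sum_congr rfl fun k _ => Finset.sum_congr rfl fun i _ => Finset.sum_comm
      _ = _ := Finset.sum_congr rfl fun k _ => Finset.sum_comm
  rw [e1]
  refine Finset.sum_congr rfl fun k _ => Finset.sum_congr rfl fun h _ => ?_
  rw [Finset.sum_comm]
  refine Finset.sum_congr rfl fun p _ => Finset.sum_congr rfl fun i _ => ?_
  ring

/-- Equidistribution of modular inverses, weighted by a monotone function of the first variable. -/
lemma equi_count (c : (ZMod m)ˣ) (N : ℕ) (f : ℕ → ℝ) (hf : Antitone f) (hf0 : ∀ i, 0 ≤ f i)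
    (p₀ p₁ : ℕ) (hp : p₀ ≤ p₁) (hp1 : p₁ ≤ m) :
    |(∑ i ∈ Finset.range m, ∑ p ∈ Finset.Ico p₀ p₁,
        if ((N + 1 + i : ℕ) : ZMod m) * (p : ZMod m) = c then f i else 0)
      - ((p₁ : ℝ) - p₀) * m.totient / m ^ 2 * ∑ i ∈ Finset.range m, f i|
    ≤ 8 * f 0 * (m : ℝ) ^ ((3 : ℝ) / 4) * m.divisors.card ^ 3 * (1 + Real.log m) ^ 2 := by
  classical
  have hm : 0 < m := Nat.pos_of_ne_zero (NeZero.ne m)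
  have hm' : (0 : ℝ) < m := by exact_mod_cast hm
  set A : ZMod m → ℂ := fun k => ∑ i ∈ Finset.range m, (f i : ℂ) *
    ZMod.stdAddChar (-(k * ((N + 1 + i : ℕ) : ZMod m))) with hA
  set B : ZMod m → ℂ := fun h => ∑ p ∈ Finset.Ico p₀ p₁,
    ZMod.stdAddChar (-(h * (p : ZMod m))) with hB
  have hAb : ∀ k, ‖A k‖ ≤ f 0 * bInt m k := fun k =>
    abel_bound f hf hf0 _ m _ (fun n hn => partial_bound m k (N + 1) n hn)
  have hBb : ∀ h, ‖B h‖ ≤ bInt m h := by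
    intro h
    have := partial_bound m h p₀ (p₁ - p₀) (by omega)
    rw [hB]
    show ‖∑ p ∈ Finset.Ico p₀ p₁, _‖ ≤ _
    rwa [Finset.sum_Ico_eq_sum_range]
  have hA0 : A 0 = ((∑ i ∈ Finset.range m, f i : ℝ) : ℂ) := by simp [hA]
  have hB0 : B 0 = (((p₁ : ℝ) - p₀ : ℝ) : ℂ) := by simp [hB, Nat.cast_sub hp]
  have hK0 : Kl m 0 (0 * c) = (m.totient : ℂ) := by
    simp [Kl, ZMod.card_units_eq_totient]
  have hcomp := completion m c m f (fun i => N + 1 + i) (Finset.Ico p₀ p₁)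
  rw [← Finset.univ.sum_product' Finset.univ (fun k h => A k * B h * Kl m k (h * (c : ZMod m))),
    ← Finset.add_sum_erase _ _ (show ((0 : ZMod m), (0 : ZMod m)) ∈
      (Finset.univ ×ˢ Finset.univ : Finset (ZMod m × ZMod m)) by simp)] at hcomp
  rw [← Real.norm_eq_abs, ← Complex.norm_real]
  -- The pair of frequencies `(0, 0)` gives the main term.
  have hdiff : (((∑ i ∈ Finset.range m, ∑ p ∈ Finset.Ico p₀ p₁,
        if ((N + 1 + i : ℕ) : ZMod m) * (p : ZMod m) = c then f i else 0)
      - ((p₁ : ℝ) - p₀) * m.totient / m ^ 2 * ∑ i ∈ Finset.range m, f i : ℝ) : ℂ)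
      = ((m : ℂ) ^ 2)⁻¹ * ∑ x ∈ (Finset.univ ×ˢ Finset.univ).erase ((0 : ZMod m), (0 : ZMod m)),
        A x.1 * B x.2 * Kl m x.1 (x.2 * (c : ZMod m)) := by
    rw [Complex.ofReal_sub, hcomp]
    simp only
    rw [hA0, hB0, hK0]
    push_cast
    ring
  rw [hdiff, norm_mul, norm_inv, norm_pow, Complex.norm_natCast]
  set T : ℝ := ((m.divisors.card : ℕ) : ℝ)
  set L : ℝ := 1 + Real.log m
  have hL : 0 ≤ L := by
    have : 0 ≤ Real.log m := Real.log_natCast_nonneg m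
    positivity
  have hsum : ‖∑ x ∈ (Finset.univ ×ˢ Finset.univ).erase ((0 : ZMod m), (0 : ZMod m)),
        A x.1 * B x.2 * Kl m x.1 (x.2 * (c : ZMod m))‖
      ≤ f 0 * (2 * (m : ℝ) ^ ((3 : ℝ) / 4) * T) * (2 * m * T * L) ^ 2 := by
    calc _ ≤ ∑ x ∈ (Finset.univ ×ˢ Finset.univ).erase ((0 : ZMod m), (0 : ZMod m)),
          f 0 * (2 * (m : ℝ) ^ ((3 : ℝ) / 4) * T) *
            ((bInt m x.1 * gInt m x.1) * (bInt m x.2 * gInt m x.2)) := by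
          refine (norm_sum_le _ _).trans (Finset.sum_le_sum fun x hx => ?_)
          rw [norm_mul, norm_mul]
          have hx' : ¬ (x.1 = 0 ∧ x.2 = 0) := fun h' =>
            (Finset.mem_erase.1 hx).1 (Prod.ext h'.1 h'.2)
          have h0 := hf0 0
          have h1 := bInt_nonneg m x.1
          have h2 := bInt_nonneg m x.2
          calc _ ≤ (f 0 * bInt m x.1) * bInt m x.2 * (2 * (m : ℝ) ^ ((3 : ℝ) / 4) * T *
                (gInt m x.1 * gInt m x.2)) := by
                gcongr
                · exact hAb _
                · exact hBb _
                · exact kl_le_gg m _ _ c hx'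
            _ = _ := by ring
      _ ≤ ∑ x ∈ (Finset.univ ×ˢ Finset.univ : Finset (ZMod m × ZMod m)),
          f 0 * (2 * (m : ℝ) ^ ((3 : ℝ) / 4) * T) *
            ((bInt m x.1 * gInt m x.1) * (bInt m x.2 * gInt m x.2)) := by
          refine Finset.sum_le_sum_of_subset_of_nonneg (Finset.erase_subset _ _) fun x _ _ => ?_
          have h0 := hf0 0
          have h1 := bInt_nonneg m x.1
          have h2 := bInt_nonneg m x.2
          have h3 := one_le_gInt m x.1
          have h4 := one_le_gInt m x.2
          positivity
      _ = f 0 * (2 * (m : ℝ) ^ ((3 : ℝ) / 4) * T) * (∑ k : ZMod m, bInt m k * gInt m k) ^ 2 := by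
          rw [← Finset.mul_sum, sq, Finset.sum_mul_sum, Finset.sum_product]
      _ ≤ _ := by
          have h0 := hf0 0
          have h1 : 0 ≤ ∑ k : ZMod m, bInt m k * gInt m k := Finset.sum_nonneg fun k _ =>
            mul_nonneg (bInt_nonneg m k) (zero_le_one.trans (one_le_gInt m k))
          gcongr
          exact sum_bg m
  calc _ ≤ ((m : ℝ) ^ 2)⁻¹ * (f 0 * (2 * (m : ℝ) ^ ((3 : ℝ) / 4) * T) * (2 * m * T * L) ^ 2) := by
        gcongr
    _ = _ := by
        field_simp
        ring

/-- The count of `equi_count`, normalised by the length of the real interval `[α m, β m)`. -/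
lemma equi (c : (ZMod m)ˣ) (N : ℕ) (f : ℕ → ℝ) (hf : Antitone f) (hf0 : ∀ i, 0 ≤ f i)
    (α β : ℝ) (h0 : 0 ≤ α) (hαβ : α ≤ β) (h1 : β ≤ 1) :
    |(∑ i ∈ Finset.range m, ∑ p ∈ (Finset.range m).filter (fun p : ℕ => α * m ≤ p ∧ p < β * m),
        if ((N + 1 + i : ℕ) : ZMod m) * (p : ZMod m) = c then f i else 0)
      - (β - α) * m.totient / m * ∑ i ∈ Finset.range m, f i|
    ≤ 9 * f 0 * (m : ℝ) ^ ((3 : ℝ) / 4) * m.divisors.card ^ 3 * (1 + Real.log m) ^ 2 := by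
  have hm : 0 < m := Nat.pos_of_ne_zero (NeZero.ne m)
  have hm' : (1 : ℝ) ≤ m := by exact_mod_cast hm
  have hset : (Finset.range m).filter (fun p : ℕ => α * m ≤ p ∧ p < β * m)
      = Finset.Ico ⌈α * m⌉₊ ⌈β * m⌉₊ := by
    ext p
    simp only [Finset.mem_filter, Finset.mem_range, Finset.mem_Ico, Nat.ceil_le, Nat.lt_ceil]
    constructor
    · rintro ⟨_, h2, h3⟩; exact ⟨h2, h3⟩
    · rintro ⟨h2, h3⟩
      refine ⟨?_, h2, h3⟩
      have : (p : ℝ) < m := by nlinarith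
      exact_mod_cast this
  rw [hset]
  have hp1 : ⌈β * m⌉₊ ≤ m := by
    rw [Nat.ceil_le]; nlinarith
  have hp : ⌈α * m⌉₊ ≤ ⌈β * m⌉₊ := Nat.ceil_mono (by gcongr)
  have key := equi_count m c N f hf hf0 _ _ hp hp1
  set T : ℝ := ((m.divisors.card : ℕ) : ℝ) with hTd
  have hT : 1 ≤ T := by
    rw [hTd]
    exact_mod_cast Finset.card_pos.2 ⟨1, Nat.one_mem_divisors.2 hm.ne'⟩
  have hlog : 0 ≤ Real.log m := Real.log_nonneg hm'
  have hf00 := hf0 0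
  have hsum : ∑ i ∈ Finset.range m, f i ≤ m * f 0 := by
    calc _ ≤ ∑ i ∈ Finset.range m, f 0 := Finset.sum_le_sum fun i _ => hf (Nat.zero_le i)
      _ = _ := by simp
  have hsum0 : 0 ≤ ∑ i ∈ Finset.range m, f i := Finset.sum_nonneg fun i _ => hf0 i
  set Sf := ∑ i ∈ Finset.range m, f i
  have hβ1 := Nat.ceil_lt_add_one (a := β * m) (by nlinarith)
  have hα1 := Nat.ceil_lt_add_one (a := α * m) (by nlinarith)
  have hβ2 := Nat.le_ceil (β * m)
  have hα2 := Nat.le_ceil (α * m)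
  have hφ : (m.totient : ℝ) ≤ m := by exact_mod_cast Nat.totient_le m
  have hφ0 : (0 : ℝ) ≤ m.totient := by positivity
  have hd : |((⌈β * m⌉₊ : ℝ) - ⌈α * m⌉₊) * m.totient / m ^ 2 * Sf
      - (β - α) * m.totient / m * Sf| ≤ f 0 := by
    have e : ((⌈β * m⌉₊ : ℝ) - ⌈α * m⌉₊) * m.totient / m ^ 2 * Sf
      - (β - α) * m.totient / m * Sf
      = (((⌈β * m⌉₊ : ℝ) - β * m) - (⌈α * m⌉₊ - α * m)) * ((m.totient / m) * (Sf / m)) := by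
      field_simp; ring
    rw [e, abs_mul]
    have e1 : |((⌈β * m⌉₊ : ℝ) - β * m) - (⌈α * m⌉₊ - α * m)| ≤ 1 := by
      rw [abs_le]; constructor <;> linarith
    have e2 : |((m.totient : ℝ) / m) * (Sf / m)| ≤ 1 * f 0 := by
      rw [abs_of_nonneg (by positivity)]
      gcongr
      · rw [div_le_one (by linarith)]; exact hφ
      · rw [div_le_iff₀ (by linarith)]; linarith
    calc _ ≤ 1 * (1 * f 0) := by gcongr
      _ = f 0 := by ring
  have h1 : f 0 ≤ f 0 * (m : ℝ) ^ ((3 : ℝ) / 4) * T ^ 3 * (1 + Real.log m) ^ 2 := by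
    have a1 : 1 ≤ (m : ℝ) ^ ((3 : ℝ) / 4) := Real.one_le_rpow hm' (by norm_num)
    have a2 : 1 ≤ T ^ 3 := one_le_pow₀ hT
    have a3 : 1 ≤ (1 + Real.log m) ^ 2 := one_le_pow₀ (by linarith)
    calc f 0 = f 0 * 1 * 1 * 1 := by ring
      _ ≤ _ := by gcongr
  calc _ ≤ _ + _ := abs_sub_le _ (((⌈β * m⌉₊ : ℝ) - ⌈α * m⌉₊) * m.totient / m ^ 2 * Sf) _
    _ ≤ _ := by linarith
end

/-! ### Divisor sums -/

/-- The divisor bound `τ(m) ≪ m ^ δ`. -/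
lemma divisor_bound (δ : ℝ) (hδ : 0 < δ) :
    ∃ C : ℝ, 1 ≤ C ∧ ∀ m : ℕ, m ≠ 0 → (m.divisors.card : ℝ) ≤ C * (m : ℝ) ^ δ := by
  set B : ℕ := ⌈(2 : ℝ) ^ (1 / δ)⌉₊
  set K : ℝ := max 1 (1 / (δ * Real.log 2))
  have hl2 : 0 < Real.log 2 := Real.log_pos one_lt_two
  have hK1 : 1 ≤ K := le_max_left _ _
  refine ⟨K ^ B, one_le_pow₀ hK1, fun m hm => ?_⟩
  -- Primes `p ≥ 2 ^ (1 / δ)` cost nothing, and each of the finitely many others costs a factor `K`.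
  have key : ∀ p ∈ m.primeFactors, ((m.factorization p + 1 : ℕ) : ℝ)
      ≤ (if p < B then K else 1) * ((p : ℝ) ^ m.factorization p) ^ δ := by
    intro p hp
    have hpp := Nat.prime_of_mem_primeFactors hp
    have hp2 : (2 : ℝ) ≤ p := by exact_mod_cast hpp.two_le
    set a := m.factorization p
    have e1 : ((p : ℝ) ^ a) ^ δ = ((p : ℝ) ^ δ) ^ a := by
      rw [← Real.rpow_natCast, ← Real.rpow_natCast, ← Real.rpow_mul (by linarith),
        ← Real.rpow_mul (by linarith), mul_comm]
    rw [e1]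
    split_ifs with h
    · have h1 : (1 : ℝ) + a * (δ * Real.log 2) ≤ ((p : ℝ) ^ δ) ^ a := by
        calc (1 : ℝ) + a * (δ * Real.log 2) ≤ Real.exp (a * (δ * Real.log 2)) := by
              rw [add_comm]; exact Real.add_one_le_exp _
          _ = ((2 : ℝ) ^ δ) ^ a := by
              rw [Real.rpow_def_of_pos two_pos, ← Real.exp_nat_mul]; ring_nf
          _ ≤ _ := by gcongr
      have h2 : 1 ≤ K * (δ * Real.log 2) := by
        have := le_max_right 1 (1 / (δ * Real.log 2))
        calc 1 = 1 / (δ * Real.log 2) * (δ * Real.log 2) := by field_simp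
          _ ≤ _ := by gcongr
      calc ((a + 1 : ℕ) : ℝ) = 1 + a * 1 := by push_cast; ring
        _ ≤ K + a * (K * (δ * Real.log 2)) := by gcongr
        _ = K * (1 + a * (δ * Real.log 2)) := by ring
        _ ≤ _ := by gcongr
    · have h1 : (2 : ℝ) ≤ (p : ℝ) ^ δ := by
        have h2 : (2 : ℝ) ^ (1 / δ) ≤ p := (Nat.le_ceil _).trans (by exact_mod_cast not_lt.1 h)
        calc (2 : ℝ) = ((2 : ℝ) ^ (1 / δ)) ^ δ := by
              rw [← Real.rpow_mul two_pos.le, one_div_mul_cancel hδ.ne', Real.rpow_one]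
          _ ≤ _ := by gcongr
      rw [one_mul]
      calc ((a + 1 : ℕ) : ℝ) ≤ ((2 ^ a : ℕ) : ℝ) := by exact_mod_cast Nat.lt_two_pow_self
        _ = (2 : ℝ) ^ a := by push_cast; ring
        _ ≤ _ := by gcongr
  rw [Nat.card_divisors hm]
  push_cast at key ⊢
  refine (Finset.prod_le_prod (fun _ _ => by positivity) key).trans ?_
  rw [Finset.prod_mul_distrib, Real.finsetProd_rpow _ _ (fun _ _ => by positivity)]
  have e2 : ∏ p ∈ m.primeFactors, (p : ℝ) ^ m.factorization p = m := by
    have := Nat.prod_factorization_pow_eq_self hm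
    conv_rhs => rw [← this]
    rw [Finsupp.prod]; push_cast; rfl
  rw [e2]
  gcongr
  rw [Finset.prod_ite]
  simp only [Finset.prod_const, one_pow, mul_one]
  apply pow_le_pow_right₀ hK1
  calc _ ≤ (Finset.range B).card := Finset.card_le_card (by intro x; simp)
    _ = B := by simp

/-- Logarithms are absorbed into `m ^ δ`, uniformly in `m`. -/
lemma log_bound (δ : ℝ) (hδ : 0 < δ) :
    ∃ C : ℝ, 1 ≤ C ∧ ∀ m : ℕ, m ≠ 0 → 1 + Real.log m ≤ C * (m : ℝ) ^ δ := by
  refine ⟨1 + 1 / δ, by linarith [one_div_pos.2 hδ], fun m hm => ?_⟩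
  have hm1 : (1 : ℝ) ≤ m := by exact_mod_cast Nat.one_le_iff_ne_zero.2 hm
  have := Real.log_le_rpow_div (x := m) (by linarith) hδ
  have h1 := Real.one_le_rpow hm1 hδ.le
  calc 1 + Real.log m ≤ (m : ℝ) ^ δ + (m : ℝ) ^ δ / δ := by gcongr
    _ = _ := by ring

/-- Total error of the equidistribution step, summed over the denominators up to `N`. -/
lemma error_sum (δ : ℝ) (hδ : 0 < δ) :
    ∃ C : ℝ, 1 ≤ C ∧ ∀ N : ℕ, N ≠ 0 →
      ∑ m ∈ Finset.Icc 1 N, 1 / (m : ℝ) * (9 * (1 / ((N : ℝ) + 1)) * (m : ℝ) ^ ((3 : ℝ) / 4) *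
        m.divisors.card ^ 3 * (1 + Real.log m) ^ 2) ≤ C * (N : ℝ) ^ (-(1 / 4 : ℝ) + δ) := by
  obtain ⟨C₁, hC₁, h₁⟩ := divisor_bound (δ / 5) (by positivity)
  obtain ⟨C₂, hC₂, h₂⟩ := log_bound (δ / 5) (by positivity)
  refine ⟨9 * C₁ ^ 3 * C₂ ^ 2 * 4, ?_, fun N hN => ?_⟩
  · have := one_le_pow₀ hC₁ (n := 3)
    have := one_le_pow₀ hC₂ (n := 2)
    nlinarith
  have hN1 : (1 : ℝ) ≤ N := by exact_mod_cast Nat.one_le_iff_ne_zero.2 hN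
  have hterm : ∀ m ∈ Finset.Icc 1 N, 1 / (m : ℝ) * (9 * (1 / ((N : ℝ) + 1)) *
      (m : ℝ) ^ ((3 : ℝ) / 4) * m.divisors.card ^ 3 * (1 + Real.log m) ^ 2)
      ≤ 9 * C₁ ^ 3 * C₂ ^ 2 * (1 / N) * (N : ℝ) ^ δ * (m : ℝ) ^ (-(1 / 4) : ℝ) := by
    intro m hm
    obtain ⟨hm1, hmN⟩ := Finset.mem_Icc.1 hm
    have hm0 : m ≠ 0 := by omega
    have hmr : (1 : ℝ) ≤ m := by exact_mod_cast hm1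
    have hmNr : (m : ℝ) ≤ N := by exact_mod_cast hmN
    have hlog := Real.log_nonneg hmr
    have e1 : (m : ℝ) ^ (-(1 / 4) : ℝ) = 1 / m * (m : ℝ) ^ ((3 : ℝ) / 4) := by
      rw [show (-(1 / 4) : ℝ) = -1 + 3 / 4 by norm_num, Real.rpow_add (by linarith),
        Real.rpow_neg_one, one_div]
    have e2 : (m : ℝ) ^ δ = ((m : ℝ) ^ (δ / 5)) ^ 3 * ((m : ℝ) ^ (δ / 5)) ^ 2 := by
      rw [← pow_add, ← Real.rpow_natCast, ← Real.rpow_mul (by linarith)]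
      congr 1; push_cast; ring
    have e3 : (m : ℝ) ^ δ ≤ (N : ℝ) ^ δ := by gcongr
    calc _ ≤ 1 / (m : ℝ) * (9 * (1 / (N : ℝ)) * (m : ℝ) ^ ((3 : ℝ) / 4) *
          (C₁ * (m : ℝ) ^ (δ / 5)) ^ 3 * (C₂ * (m : ℝ) ^ (δ / 5)) ^ 2) := by
          gcongr
          · linarith
          · exact h₁ m hm0
          · exact h₂ m hm0
      _ = 9 * C₁ ^ 3 * C₂ ^ 2 * (1 / N) * (m : ℝ) ^ δ * (m : ℝ) ^ (-(1 / 4) : ℝ) := by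
          rw [e1, e2]; ring
      _ ≤ _ := by gcongr
  refine (Finset.sum_le_sum hterm).trans ?_
  rw [← Finset.mul_sum]
  have hs : ∀ n : ℕ, ∑ m ∈ Finset.Icc 1 n, (m : ℝ) ^ (-(1 / 4) : ℝ) ≤ 4 * (n : ℝ) ^ (3 / 4 : ℝ) := by
    intro n
    -- Termwise, `m ^ (3/4) - (m - 1) ^ (3/4) ≥ m ^ (-1/4) / 4`, after dividing by `m ^ (3/4)`.
    induction n with
    | zero => simp
    | succ n ih =>
      rw [Finset.sum_Icc_succ_top (by omega)]
      have hpos : (0 : ℝ) < ((n + 1 : ℕ) : ℝ) := by positivity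
      set x : ℝ := ((n + 1 : ℕ) : ℝ) with hx
      have hn : (n : ℝ) = x * (1 - 1 / x) := by
        rw [mul_sub, mul_one_div_cancel hpos.ne', hx]; push_cast; ring
      have hx1 : 1 ≤ x := by rw [hx]; push_cast; linarith [(Nat.cast_nonneg n : (0 : ℝ) ≤ n)]
      have h1x : 0 ≤ 1 - 1 / x := by
        rw [sub_nonneg, div_le_one hpos]; exact hx1
      have hb : (1 - 1 / x) ^ (3 / 4 : ℝ) ≤ 1 - 3 / 4 * (1 / x) := by
        have := rpow_one_add_le_one_add_mul_self (s := -(1 / x)) (p := 3 / 4)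
          (by linarith) (by norm_num) (by norm_num)
        rw [← sub_eq_add_neg] at this
        linarith
      have e1 : x ^ (-(1 / 4) : ℝ) = x ^ ((3 : ℝ) / 4) * (1 / x) := by
        rw [show (-(1 / 4) : ℝ) = 3 / 4 + (-1) by norm_num, Real.rpow_add (by linarith),
          Real.rpow_neg_one, one_div]
      rw [e1]
      have hxp : 0 < x ^ ((3 : ℝ) / 4) := by positivity
      have hn' : (n : ℝ) ^ (3 / 4 : ℝ) ≤ x ^ ((3 : ℝ) / 4) * (1 - 3 / 4 * (1 / x)) := by
        rw [hn, Real.mul_rpow hpos.le h1x]; gcongr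
      have : 0 ≤ x ^ ((3 : ℝ) / 4) * (1 / x) := by positivity
      nlinarith
  calc _ ≤ 9 * C₁ ^ 3 * C₂ ^ 2 * (1 / N) * (N : ℝ) ^ δ * (4 * (N : ℝ) ^ (3 / 4 : ℝ)) := by
        gcongr; exact hs N
    _ = _ := by
        rw [show (-(1 / 4) + δ : ℝ) = -1 + 3 / 4 + δ by ring, Real.rpow_add (by linarith),
          Real.rpow_add (by linarith), Real.rpow_neg_one]
        ring

/-! ### Mean value of φ(m) / m -/

/-- `∑ μ(n) / n² = 1 / ζ(2)`. -/
lemma hasSum_moebius : HasSum (fun n : ℕ => ((ArithmeticFunction.moebius n : ℤ) : ℝ) / (n : ℝ) ^ 2)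
    (6 / π ^ 2) := by
  have h1 : (1 : ℝ) < (2 : ℂ).re := by norm_num
  have hs := (ArithmeticFunction.LSeriesSummable_moebius_iff.2 h1).LSeriesHasSum
  have hval : LSeries (fun n => ((ArithmeticFunction.moebius n : ℤ) : ℂ)) 2
      = ((6 / π ^ 2 : ℝ) : ℂ) := by
    have h2 := ArithmeticFunction.LSeries_zeta_mul_Lseries_moebius h1
    rw [ArithmeticFunction.LSeries_zeta_eq_riemannZeta h1, riemannZeta_two] at h2
    have hp : (π : ℂ) ≠ 0 := by exact_mod_cast Real.pi_ne_zero
    push_cast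
    field_simp at h2 ⊢
    linear_combination h2
  rw [hval] at hs
  unfold LSeriesHasSum at hs
  rw [← Complex.hasSum_ofReal]
  refine hs.congr_fun ?_
  intro n
  rw [LSeries.term_of_ne_zero' two_ne_zero]
  push_cast
  norm_num

lemma moebius_partial (M : ℕ) (hM : M ≠ 0) :
    |∑ d ∈ Finset.Ioc 0 M, ((ArithmeticFunction.moebius d : ℤ) : ℝ) / (d : ℝ) ^ 2 - 6 / π ^ 2|
      ≤ 1 / (M : ℝ) := by
  have ht := hasSum_moebius.tendsto_sum_nat
  have ht' := (Filter.tendsto_add_atTop_iff_nat 1).2 ht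
  have hlim := ((tendsto_const_nhds (x := ∑ d ∈ Finset.Ioc 0 M,
    ((ArithmeticFunction.moebius d : ℤ) : ℝ) / (d : ℝ) ^ 2)).sub ht').abs
  refine le_of_tendsto hlim ?_
  filter_upwards [Filter.eventually_ge_atTop M] with n hn
  have e1 : ∑ i ∈ Finset.range (n + 1), ((ArithmeticFunction.moebius i : ℤ) : ℝ) / (i : ℝ) ^ 2
      = ∑ i ∈ Finset.Ioc 0 n, ((ArithmeticFunction.moebius i : ℤ) : ℝ) / (i : ℝ) ^ 2 := by
    rw [Finset.sum_range_succ', Finset.range_eq_Ico, Finset.sum_Ico_add' (fun i : ℕ =>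
      ((ArithmeticFunction.moebius i : ℤ) : ℝ) / (i : ℝ) ^ 2) 0 n 1]
    simp
    rfl
  rw [e1, ← Finset.sum_Ioc_consecutive _ (Nat.zero_le M) hn, sub_add_cancel_left, abs_neg]
  calc _ ≤ ∑ i ∈ Finset.Ioc M n, |((ArithmeticFunction.moebius i : ℤ) : ℝ) / (i : ℝ) ^ 2| :=
        Finset.abs_sum_le_sum_abs _ _
    _ ≤ ∑ i ∈ Finset.Ioc M n, ((i : ℝ) ^ 2)⁻¹ := by
        refine Finset.sum_le_sum fun i _ => ?_
        rw [abs_div, abs_of_nonneg (by positivity : (0 : ℝ) ≤ (i : ℝ) ^ 2), div_eq_mul_inv]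
        have : |((ArithmeticFunction.moebius i : ℤ) : ℝ)| ≤ 1 := by
          exact_mod_cast ArithmeticFunction.abs_moebius_le_one
        exact mul_le_of_le_one_left (by positivity) this
    _ ≤ (M : ℝ)⁻¹ - (n : ℝ)⁻¹ := sum_Ioc_inv_sq_le_sub hM hn
    _ ≤ 1 / M := by
        have : (0 : ℝ) ≤ (n : ℝ)⁻¹ := by positivity
        rw [one_div]; linarith

lemma totient_div (m : ℕ) (hm : 0 < m) : (m.totient : ℝ) / m
    = ∑ d ∈ m.divisors, ((ArithmeticFunction.moebius d : ℤ) : ℝ) / d := by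
  have h := (ArithmeticFunction.sum_eq_iff_sum_mul_moebius_eq (R := ℝ)
    (f := fun n => (n.totient : ℝ)) (g := fun n => (n : ℝ))).1 (fun n _ => by
      exact_mod_cast Nat.sum_totient n) m hm
  rw [← h, Finset.sum_div, Nat.sum_divisorsAntidiagonal
    (fun a b => ((ArithmeticFunction.moebius a : ℤ) : ℝ) * (b : ℝ) / m)]
  refine Finset.sum_congr rfl fun d hd => ?_
  have hdm := Nat.dvd_of_mem_divisors hd
  have hd0 : (d : ℝ) ≠ 0 := by exact_mod_cast (Nat.pos_of_mem_divisors hd).ne'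
  have hm0 : (m : ℝ) ≠ 0 := by exact_mod_cast hm.ne'
  rw [Nat.cast_div hdm hd0]
  field_simp

/-- The mean value of `φ(m) / m` is `6 / π ^ 2`, with a logarithmic error. -/
lemma totient_mean (M : ℕ) :
    |∑ m ∈ Finset.Ioc 0 M, ((m.totient : ℝ) / m) - 6 / π ^ 2 * M| ≤ 2 * (1 + Real.log M) := by
  rcases Nat.eq_zero_or_pos M with rfl | hM
  · simp
  have hM' : (0 : ℝ) < M := by exact_mod_cast hM
  set h : ℕ → ℝ := fun d => ((ArithmeticFunction.moebius d : ℤ) : ℝ) / d with hh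
  -- Möbius expansion of `φ(m) / m`; then count the multiples of `d`.
  have e1 : ∑ m ∈ Finset.Ioc 0 M, ((m.totient : ℝ) / m)
      = ∑ d ∈ Finset.Ioc 0 M, h d * ((M / d : ℕ) : ℝ) := by
    calc _ = ∑ m ∈ Finset.Ioc 0 M, ∑ d ∈ Finset.Ioc 0 M, if d ∣ m then h d else 0 := by
          refine Finset.sum_congr rfl fun m hm => ?_
          obtain ⟨hm0, hmM⟩ := Finset.mem_Ioc.1 hm
          rw [totient_div m hm0, ← Finset.sum_filter]
          refine Finset.sum_congr ?_ fun _ _ => rfl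
          ext d
          simp only [Nat.mem_divisors, Finset.mem_filter, Finset.mem_Ioc]
          constructor
          · rintro ⟨hd, _⟩
            exact ⟨⟨Nat.pos_of_dvd_of_pos hd hm0, (Nat.le_of_dvd hm0 hd).trans hmM⟩, hd⟩
          · rintro ⟨_, hd⟩; exact ⟨hd, hm0.ne'⟩
      _ = ∑ d ∈ Finset.Ioc 0 M, ∑ m ∈ Finset.Ioc 0 M, if d ∣ m then h d else 0 :=
          Finset.sum_comm
      _ = _ := by
          refine Finset.sum_congr rfl fun d _ => ?_
          rw [← Finset.sum_filter, Finset.sum_const, Nat.Ioc_filter_dvd_card_eq_div, nsmul_eq_mul,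
            mul_comm]
  have hmu : ∀ d : ℕ, |((ArithmeticFunction.moebius d : ℤ) : ℝ)| ≤ 1 := fun d => by
    exact_mod_cast ArithmeticFunction.abs_moebius_le_one
  have hharm : ∑ d ∈ Finset.Ioc 0 M, (1 : ℝ) / d ≤ 1 + Real.log M := by
    have := harmonic_le_one_add_log M
    rw [harmonic_eq_sum_Icc] at this
    push_cast at this
    simp only [one_div]
    exact this
  have hlog : 0 ≤ Real.log M := Real.log_natCast_nonneg M
  have e2 : |∑ d ∈ Finset.Ioc 0 M, h d * ((M / d : ℕ) : ℝ)
      - M * ∑ d ∈ Finset.Ioc 0 M, ((ArithmeticFunction.moebius d : ℤ) : ℝ) / (d : ℝ) ^ 2|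
      ≤ 1 + Real.log M := by
    rw [Finset.mul_sum, ← Finset.sum_sub_distrib]
    refine (Finset.abs_sum_le_sum_abs _ _).trans (le_trans (Finset.sum_le_sum fun d hd => ?_) hharm)
    have hd0 : (0 : ℝ) < d := by exact_mod_cast (Finset.mem_Ioc.1 hd).1
    have e : h d * ((M / d : ℕ) : ℝ)
        - M * (((ArithmeticFunction.moebius d : ℤ) : ℝ) / (d : ℝ) ^ 2)
        = ((ArithmeticFunction.moebius d : ℤ) : ℝ) * (1 / d * (((M / d : ℕ) : ℝ) - M / d)) := by
      rw [hh]; field_simp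
    rw [e, abs_mul, abs_mul, abs_of_pos (one_div_pos.2 hd0)]
    have h1 : |((M / d : ℕ) : ℝ) - M / d| ≤ 1 := by
      have a1 : ((M / d : ℕ) : ℝ) ≤ M / d := Nat.cast_div_le
      have a2 := Nat.lt_floor_add_one ((M : ℝ) / d)
      rw [Nat.floor_div_eq_div] at a2
      rw [abs_le]; constructor <;> linarith
    calc _ ≤ 1 * (1 / (d : ℝ) * 1) := by
          gcongr
          exact hmu d
      _ = _ := by ring
  have e3 := moebius_partial M hM.ne'
  rw [e1]
  have e4 : |M * ∑ d ∈ Finset.Ioc 0 M, ((ArithmeticFunction.moebius d : ℤ) : ℝ) / (d : ℝ) ^ 2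
      - 6 / π ^ 2 * M| ≤ 1 := by
    rw [mul_comm (6 / π ^ 2), ← mul_sub, abs_mul, abs_of_pos hM']
    calc _ ≤ (M : ℝ) * (1 / M) := by gcongr
      _ = 1 := by field_simp
  have := abs_sub_le (∑ d ∈ Finset.Ioc 0 M, h d * ((M / d : ℕ) : ℝ))
    (M * ∑ d ∈ Finset.Ioc 0 M, ((ArithmeticFunction.moebius d : ℤ) : ℝ) / (d : ℝ) ^ 2)
    (6 / π ^ 2 * M)
  linarith

/-! ### The main term -/

/-- The limiting density, in the form in which it comes out of the main term. -/
noncomputable def Iint (s : ℝ) : ℝ := ∫ y in (0 : ℝ)..1, (-Real.log y) * max (1 / (1 + y) - s) 0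

lemma log_step (n : ℕ) (hn : 0 < n) :
    1 / ((n : ℝ) + 1) ≤ Real.log (n + 1) - Real.log n ∧ Real.log (n + 1) - Real.log n ≤ 1 / n := by
  have hn' : (0 : ℝ) < n := by exact_mod_cast hn
  rw [← Real.log_div (by positivity) hn'.ne']
  have h1 := Real.one_sub_inv_le_log_of_pos (x := ((n : ℝ) + 1) / n) (by positivity)
  have h2 := Real.log_le_sub_one_of_pos (x := ((n : ℝ) + 1) / n) (by positivity)
  constructor
  · refine le_trans (le_of_eq ?_) h1; field_simp; ring
  · refine h2.trans (le_of_eq ?_); field_simp; ring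

/-- Tails of the harmonic series against the logarithm; this is where `-log y` in `Iint` comes from. -/
lemma harm_tail (i N : ℕ) (h : i + 1 ≤ N) :
    |∑ m ∈ Finset.Ico i N, 1 / ((m : ℝ) + 1) - (Real.log N - Real.log ((i : ℝ) + 1))|
      ≤ 1 / ((i : ℝ) + 1) := by
  have key : ∀ N, i + 1 ≤ N →
      Real.log (N + 1) - Real.log ((i : ℝ) + 1) ≤ ∑ m ∈ Finset.Ico i N, 1 / ((m : ℝ) + 1) ∧
      ∑ m ∈ Finset.Ico i N, 1 / ((m : ℝ) + 1) ≤
        1 / ((i : ℝ) + 1) + Real.log N - Real.log ((i : ℝ) + 1) := by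
    intro N h
    induction N, h using Nat.le_induction with
    | base =>
      have := (log_step (i + 1) (by omega)).2
      push_cast at this ⊢
      simp only [Nat.Ico_succ_singleton, Finset.sum_singleton]
      constructor <;> linarith
    | succ n hn ih =>
      rw [Finset.sum_Ico_succ_top (by omega)]
      have h1 := (log_step n (by omega)).1
      have h2 := (log_step (n + 1) (by omega)).2
      push_cast at h2 ⊢
      constructor <;> linarith [ih.1, ih.2]
  obtain ⟨h1, h2⟩ := key N h
  have h3 := (log_step N (by omega)).1
  have : 0 ≤ 1 / ((N : ℝ) + 1) := by positivity
  have : 0 ≤ 1 / ((i : ℝ) + 1) := by positivity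
  rw [abs_le]; constructor <;> linarith

/-- The averages of a monotone sequence are monotone. -/
lemma avg_antitone (f : ℕ → ℝ) (hf : Antitone f) :
    Antitone (fun i : ℕ => 1 / ((i : ℝ) + 1) * ∑ j ∈ Finset.range (i + 1), f j) := by
  refine antitone_nat_of_succ_le fun i => ?_
  have h1 : ((i : ℝ) + 1) * f (i + 1) ≤ ∑ j ∈ Finset.range (i + 1), f j := by
    calc _ = ∑ j ∈ Finset.range (i + 1), f (i + 1) := by simp
      _ ≤ _ := Finset.sum_le_sum fun j hj => hf (by have := Finset.mem_range.1 hj; omega)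
  rw [Finset.sum_range_succ _ (i + 1)]
  set S := ∑ j ∈ Finset.range (i + 1), f j
  push_cast
  rw [one_div_mul_eq_div, one_div_mul_eq_div, div_le_div_iff₀ (by positivity) (by positivity)]
  nlinarith

lemma iint_integrable (s a b : ℝ) (ha : 0 ≤ a) (hb : 0 ≤ b) :
    IntervalIntegrable (fun y : ℝ => (-Real.log y) * max (1 / (1 + y) - s) 0) volume a b := by
  refine IntervalIntegrable.mul_continuousOn intervalIntegral.intervalIntegrable_log'.neg ?_
  refine ContinuousOn.sup ?_ continuousOn_const
  refine ContinuousOn.sub ?_ continuousOn_const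
  refine ContinuousOn.div continuousOn_const (by fun_prop) fun x hx => ?_
  have : 0 ≤ x := (le_min ha hb).trans hx.1
  positivity

/-- The integrand of `Iint` decreases on `(0, 1]`, so that its Riemann sums can be bounded. -/
lemma iint_anti (s : ℝ) {x y : ℝ} (hx : 0 < x) (hxy : x ≤ y) (hy : y ≤ 1) :
    (-Real.log y) * max (1 / (1 + y) - s) 0 ≤ (-Real.log x) * max (1 / (1 + x) - s) 0 := by
  have h1 := Real.log_le_log hx hxy
  have h2 := Real.log_nonpos (hx.le.trans hxy) hy
  have h3 : 1 / (1 + y) ≤ 1 / (1 + x) := one_div_le_one_div_of_le (by linarith) (by linarith)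
  have h4 : max (1 / (1 + y) - s) 0 ≤ max (1 / (1 + x) - s) 0 := max_le_max (by linarith) le_rfl
  have h5 : 0 ≤ max (1 / (1 + y) - s) 0 := le_max_right _ _
  exact mul_le_mul (by linarith) h4 h5 (by linarith)

/-- Comparison of `Iint s` with its right Riemann sum of mesh `1 / N`. -/
lemma iint_riemann (s : ℝ) (hs : 0 ≤ s) (N : ℕ) (hN : 0 < N) :
    |1 / (N : ℝ) * ∑ j ∈ Finset.range N, (-Real.log (((j + 1 : ℕ) : ℝ) / N)) *
        max (1 / (1 + ((j + 1 : ℕ) : ℝ) / N) - s) 0 - Iint s| ≤ (1 + Real.log N) / N := by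
  have hN' : (0 : ℝ) < N := by exact_mod_cast hN
  set g : ℝ → ℝ := fun y => (-Real.log y) * max (1 / (1 + y) - s) 0 with hg
  set a : ℕ → ℝ := fun j => (j : ℝ) / N with ha
  have ha0 : ∀ j, 0 ≤ a j := fun j => by positivity
  have hstep : ∀ j, a (j + 1) - a j = 1 / N := fun j => by
    simp only [ha]; push_cast; field_simp; ring
  have hmono : ∀ j, a j ≤ a (j + 1) := fun j => by
    have := hstep j
    have : 0 ≤ 1 / (N : ℝ) := by positivity
    linarith
  have hale : ∀ j, j ≤ N → a j ≤ 1 := fun j hj => by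
    simp only [ha]; rw [div_le_one hN']; exact_mod_cast hj
  have hapos : ∀ j, 0 < j → 0 < a j := fun j hj => by
    have : (0 : ℝ) < j := by exact_mod_cast hj
    simp only [ha]; positivity
  have hint : ∀ j, IntervalIntegrable g volume (a j) (a (j + 1)) := fun j =>
    iint_integrable s _ _ (ha0 _) (ha0 _)
  have hsum : Iint s = ∑ j ∈ Finset.range N, ∫ y in a j..a (j + 1), g y := by
    rw [intervalIntegral.sum_integral_adjacent_intervals fun k _ => hint k]
    simp only [ha, Nat.cast_zero, zero_div, div_self hN'.ne']
    rfl
  have hlow : ∀ j < N, 1 / (N : ℝ) * g (a (j + 1)) ≤ ∫ y in a j..a (j + 1), g y := by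
    intro j hj
    have : ∫ y in a j..a (j + 1), g (a (j + 1)) = 1 / (N : ℝ) * g (a (j + 1)) := by
      rw [intervalIntegral.integral_const, hstep, smul_eq_mul]
    rw [← this]
    refine intervalIntegral.integral_mono_on_of_le_Ioo (hmono j) (by simp) (hint j) fun x hx => ?_
    exact iint_anti s ((ha0 j).trans_lt hx.1) hx.2.le (hale _ hj)
  have hup : ∀ j < N, 0 < j → ∫ y in a j..a (j + 1), g y ≤ 1 / (N : ℝ) * g (a j) := by
    intro j hj hj0
    have : ∫ y in a j..a (j + 1), g (a j) = 1 / (N : ℝ) * g (a j) := by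
      rw [intervalIntegral.integral_const, hstep, smul_eq_mul]
    rw [← this]
    refine intervalIntegral.integral_mono_on_of_le_Ioo (hmono j) (hint j) (by simp) fun x hx => ?_
    exact iint_anti s (hapos j hj0) hx.1.le (hx.2.le.trans (hale _ hj))
  have hup0 : ∫ y in a 0..a 1, g y ≤ (1 + Real.log N) / N := by
    have e0 : a 0 = 0 := by simp [ha]
    have e1 : a 1 = (N : ℝ)⁻¹ := by simp [ha]
    calc _ ≤ ∫ y in a 0..a 1, -Real.log y := by
          refine intervalIntegral.integral_mono_on_of_le_Ioo (hmono 0) (hint 0)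
            intervalIntegral.intervalIntegrable_log'.neg fun x hx => ?_
          have hx0 : 0 < x := by rw [e0] at hx; exact hx.1
          have h1 := Real.log_nonpos hx0.le (hx.2.le.trans (hale _ hN))
          have h2 : 1 / (1 + x) ≤ 1 := by rw [div_le_one (by linarith)]; linarith
          have h3 : max (1 / (1 + x) - s) 0 ≤ 1 := max_le (by linarith) zero_le_one
          exact mul_le_of_le_one_right (by linarith) h3
      _ = _ := by
          rw [intervalIntegral.integral_neg, integral_log, e0, e1, Real.log_inv]
          field_simp
          simp
  obtain ⟨n, rfl⟩ : ∃ n, N = n + 1 := ⟨N - 1, by omega⟩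
  have hL : 1 / ((n + 1 : ℕ) : ℝ) * ∑ j ∈ Finset.range (n + 1), g (a (j + 1)) ≤ Iint s := by
    rw [hsum, Finset.mul_sum]
    exact Finset.sum_le_sum fun j hj => hlow j (Finset.mem_range.1 hj)
  have hU : Iint s ≤ (1 + Real.log ((n + 1 : ℕ) : ℝ)) / ((n + 1 : ℕ) : ℝ) +
      1 / ((n + 1 : ℕ) : ℝ) * ∑ j ∈ Finset.range (n + 1), g (a (j + 1)) := by
    rw [hsum, Finset.sum_range_succ', add_comm]
    refine add_le_add hup0 ?_
    rw [Finset.sum_range_succ]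
    have hlast : 0 ≤ g (a (n + 1)) := by
      have : a (n + 1) = 1 := by simp only [ha]; exact div_self hN'.ne'
      rw [this, hg]; simp
    have : ∑ k ∈ Finset.range n, ∫ y in a (k + 1)..a (k + 1 + 1), g y
        ≤ 1 / ((n + 1 : ℕ) : ℝ) * ∑ k ∈ Finset.range n, g (a (k + 1)) := by
      rw [Finset.mul_sum]
      refine Finset.sum_le_sum fun j hj => hup _ ?_ (by omega)
      have := Finset.mem_range.1 hj; omega
    have h2 : 0 ≤ 1 / ((n + 1 : ℕ) : ℝ) * g (a (n + 1)) := by positivity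
    rw [mul_add]
    linarith
  rw [abs_le]
  have : 0 ≤ (1 + Real.log ((n + 1 : ℕ) : ℝ)) / ((n + 1 : ℕ) : ℝ) := by
    have := Real.log_natCast_nonneg (n + 1)
    positivity
  constructor
  · change _ ≤ 1 / ((n + 1 : ℕ) : ℝ) * ∑ j ∈ Finset.range (n + 1), g (a (j + 1)) - Iint s
    linarith
  · change 1 / ((n + 1 : ℕ) : ℝ) * ∑ j ∈ Finset.range (n + 1), g (a (j + 1)) - Iint s ≤ _
    linarith

/-- The length function of the cells with a given denominator. -/
noncomputable def fN (N : ℕ) (κ : ℝ) (i : ℕ) : ℝ := max (1 / ((N + 1 + i : ℕ) : ℝ) - κ) 0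

lemma fN_antitone (N : ℕ) (κ : ℝ) : Antitone (fN N κ) := by
  intro i j h
  unfold fN
  refine max_le_max (sub_le_sub_right ?_ _) le_rfl
  apply one_div_le_one_div_of_le (by positivity)
  exact_mod_cast Nat.add_le_add_left h _

lemma fN_nonneg (N : ℕ) (κ : ℝ) (i : ℕ) : 0 ≤ fN N κ i := le_max_right _ _

lemma fN_le (N : ℕ) (κ : ℝ) (hκ : 0 ≤ κ) (i : ℕ) : fN N κ i ≤ 1 / ((N : ℝ) + 1) := by
  refine (fN_antitone N κ (Nat.zero_le i)).trans ?_
  unfold fN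
  push_cast
  simp only [add_zero]
  exact max_le (by linarith) (by positivity)

/-- Evaluation of the main term. -/
lemma main_term (N : ℕ) (hN : 0 < N) (κ : ℝ) (hκ : 0 ≤ κ) :
    |∑ m ∈ Finset.Icc 1 N, (m.totient : ℝ) / m * (1 / (m : ℝ) * ∑ i ∈ Finset.range m, fN N κ i)
      - 6 / π ^ 2 * Iint (κ * N)| ≤ 4 * ((1 + Real.log N) / N) := by
  have hN' : (0 : ℝ) < N := by exact_mod_cast hN
  set f := fN N κ with hf
  set B : ℕ → ℝ := fun i => 1 / ((i : ℝ) + 1) * ∑ j ∈ Finset.range (i + 1), f j with hB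
  set E := (1 + Real.log N) / N with hE
  have hlog := Real.log_natCast_nonneg N
  have hf1 : ∀ i, f i ≤ 1 / N := fun i => (fN_le N κ hκ i).trans
    (one_div_le_one_div_of_le hN' (by linarith))
  have hp1 : 0 ≤ 6 / π ^ 2 ∧ 6 / π ^ 2 ≤ 1 := by
    refine ⟨by positivity, ?_⟩
    rw [div_le_one (by positivity)]
    nlinarith [Real.pi_gt_three]
  have hshift : ∀ F : ℕ → ℝ, ∀ k, ∑ m ∈ Finset.Ioc 0 k, F m = ∑ i ∈ Finset.range k, F (i + 1) := by
    intro F k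
    rw [Finset.range_eq_Ico, Finset.sum_Ico_add' F 0 k 1]
    rfl
  -- Replace `φ(m) / m` by its mean value `6 / π ^ 2` by Abel summation, as `B` is decreasing.
  have h1 : ∑ m ∈ Finset.Icc 1 N, (m.totient : ℝ) / m * (1 / (m : ℝ) * ∑ i ∈ Finset.range m, f i)
      = ∑ i ∈ Finset.range N, B i * (((i + 1).totient : ℝ) / ((i + 1 : ℕ) : ℝ)) := by
    change ∑ m ∈ Finset.Ioc 0 N, _ = _
    rw [hshift]
    refine Finset.sum_congr rfl fun i _ => ?_
    rw [hB, mul_comm]; push_cast; rfl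
  have h2 : |∑ i ∈ Finset.range N, B i * (((i + 1).totient : ℝ) / ((i + 1 : ℕ) : ℝ))
      - 6 / π ^ 2 * ∑ i ∈ Finset.range N, B i| ≤ 2 * E := by
    rw [Finset.mul_sum, ← Finset.sum_sub_distrib]
    have := abel_bound_real B (avg_antitone f (fN_antitone N κ)) (fun i => by
      have := Finset.sum_nonneg fun j (_ : j ∈ Finset.range (i + 1)) => fN_nonneg N κ j
      positivity) (fun i => ((i + 1).totient : ℝ) / ((i + 1 : ℕ) : ℝ) - 6 / π ^ 2) N
      (2 * (1 + Real.log N)) (fun k hk => by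
        have h := totient_mean k
        rw [hshift] at h
        rw [Finset.sum_sub_distrib, Finset.sum_const, Finset.card_range, nsmul_eq_mul,
          mul_comm (k : ℝ)]
        refine h.trans ?_
        rcases Nat.eq_zero_or_pos k with rfl | hk0
        · simpa using hlog
        · have : Real.log k ≤ Real.log N := Real.log_le_log (by exact_mod_cast hk0)
            (by exact_mod_cast hk)
          linarith)
    have e : ∀ i, B i * (((i + 1).totient : ℝ) / ((i + 1 : ℕ) : ℝ)) - 6 / π ^ 2 * B i
        = B i * (((i + 1).totient : ℝ) / ((i + 1 : ℕ) : ℝ) - 6 / π ^ 2) := fun i => by ring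
    simp_rw [e]
    refine this.trans ?_
    have hB0 : B 0 = f 0 := by simp [hB]
    rw [hB0]
    calc _ ≤ 1 / (N : ℝ) * (2 * (1 + Real.log N)) := by gcongr; exact hf1 0
      _ = _ := by rw [hE]; ring
  -- Exchange the sums and evaluate the harmonic tail.
  have h3 : ∑ i ∈ Finset.range N, B i
      = ∑ i ∈ Finset.range N, f i * ∑ m ∈ Finset.Ico i N, 1 / ((m : ℝ) + 1) := by
    simp only [hB, Finset.mul_sum]
    rw [Finset.sum_comm' (t' := Finset.range N) (s' := fun i => Finset.Ico i N)]
    · refine Finset.sum_congr rfl fun i _ => Finset.sum_congr rfl fun m _ => mul_comm _ _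
    · intro x y
      simp only [Finset.mem_range, Finset.mem_Ico]
      omega
  have h4 : |∑ i ∈ Finset.range N, f i * ∑ m ∈ Finset.Ico i N, 1 / ((m : ℝ) + 1)
      - ∑ i ∈ Finset.range N, f i * (Real.log N - Real.log ((i : ℝ) + 1))| ≤ E := by
    rw [← Finset.sum_sub_distrib]
    refine (Finset.abs_sum_le_sum_abs _ _).trans ?_
    calc _ ≤ ∑ i ∈ Finset.range N, 1 / (N : ℝ) * (1 / ((i : ℝ) + 1)) := by
          refine Finset.sum_le_sum fun i hi => ?_
          rw [← mul_sub, abs_mul, abs_of_nonneg (fN_nonneg N κ i)]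
          gcongr
          · exact hf1 i
          · exact harm_tail i N (Finset.mem_range.1 hi)
      _ ≤ 1 / (N : ℝ) * (1 + Real.log N) := by
          rw [← Finset.mul_sum]
          gcongr
          have := harmonic_le_one_add_log N
          unfold harmonic at this
          push_cast at this
          simpa using this
      _ = E := by rw [hE]; ring
  -- What remains is a Riemann sum for `Iint (κ * N)`.
  have h5 : ∑ i ∈ Finset.range N, f i * (Real.log N - Real.log ((i : ℝ) + 1))
      = 1 / (N : ℝ) * ∑ j ∈ Finset.range N, (-Real.log (((j + 1 : ℕ) : ℝ) / N)) *
        max (1 / (1 + ((j + 1 : ℕ) : ℝ) / N) - κ * N) 0 := by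
    rw [Finset.mul_sum]
    refine Finset.sum_congr rfl fun i _ => ?_
    have hi : (0 : ℝ) < ((i + 1 : ℕ) : ℝ) := by positivity
    rw [Real.log_div hi.ne' hN'.ne']
    have e : max (1 / (1 + ((i + 1 : ℕ) : ℝ) / N) - κ * N) 0 = N * f i := by
      rw [hf, fN, mul_max_of_nonneg _ _ hN'.le, mul_zero]
      congr 1
      push_cast at hi ⊢
      field_simp
      ring
    rw [e]
    push_cast
    field_simp
    ring
  have h6 := iint_riemann (κ * N) (by positivity) N hN
  rw [← h5] at h6
  rw [h1]
  rw [h3] at h2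
  have hsum : |∑ i ∈ Finset.range N, f i * ∑ m ∈ Finset.Ico i N, 1 / ((m : ℝ) + 1)
      - Iint (κ * N)| ≤ 2 * E := by
    refine (abs_sub_le _ _ _).trans ((add_le_add h4 h6).trans (le_of_eq ?_)); ring
  refine (abs_sub_le _ _ _).trans ((add_le_add h2 (?_ : _ ≤ 2 * E)).trans (le_of_eq ?_))
  · rw [← mul_sub, abs_mul, abs_of_nonneg hp1.1]
    refine (mul_le_of_le_one_left (abs_nonneg _) hp1.2).trans hsum
  · ring

/-! ### The limiting density -/

lemma iint_nonneg (s : ℝ) : 0 ≤ Iint s := by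
  refine intervalIntegral.integral_nonneg zero_le_one fun y hy => ?_
  have := Real.log_nonpos hy.1 hy.2
  exact mul_nonneg (by linarith) (le_max_right _ _)

lemma neg_log_int (c : ℝ) : ∫ y in (0 : ℝ)..c, -Real.log y = c - c * Real.log c := by
  rw [intervalIntegral.integral_neg, integral_log]; simp

lemma iint_sub (s s' : ℝ) : Iint s - Iint s' = ∫ y in (0 : ℝ)..1,
    (-Real.log y) * (max (1 / (1 + y) - s) 0 - max (1 / (1 + y) - s') 0) := by
  unfold Iint
  rw [← intervalIntegral.integral_sub (iint_integrable s _ _ le_rfl zero_le_one)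
    (iint_integrable s' _ _ le_rfl zero_le_one)]
  simp_rw [mul_sub]

lemma max_sub_bounds {s s' : ℝ} (h : s ≤ s') (u : ℝ) :
    0 ≤ max (u - s) 0 - max (u - s') 0 ∧ max (u - s) 0 - max (u - s') 0 ≤ s' - s := by
  constructor
  · have : max (u - s') 0 ≤ max (u - s) 0 := max_le_max (by linarith) le_rfl
    linarith
  · have : max (u - s) 0 ≤ max (u - s') 0 + (s' - s) :=
      max_le (by linarith [le_max_left (u - s') 0]) (by linarith [le_max_right (u - s') 0])
    linarith

lemma iint_sub_integrable (s s' a b : ℝ) (ha : 0 ≤ a) (hb : 0 ≤ b) :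
    IntervalIntegrable (fun y : ℝ => (-Real.log y) *
      (max (1 / (1 + y) - s) 0 - max (1 / (1 + y) - s') 0)) volume a b := by
  simp_rw [mul_sub]
  exact (iint_integrable s _ _ ha hb).sub (iint_integrable s' _ _ ha hb)

/-- `Iint` is nonincreasing and `1`-Lipschitz, because `∫ -log = 1` on `[0, 1]`. -/
lemma iint_lip {s s' : ℝ} (h : s ≤ s') : 0 ≤ Iint s - Iint s' ∧ Iint s - Iint s' ≤ s' - s := by
  rw [iint_sub]
  constructor
  · refine intervalIntegral.integral_nonneg zero_le_one fun y hy => ?_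
    have := Real.log_nonpos hy.1 hy.2
    exact mul_nonneg (by linarith) (max_sub_bounds h _).1
  · have e : ∫ y in (0 : ℝ)..1, (-Real.log y) * (s' - s) = s' - s := by
      rw [intervalIntegral.integral_mul_const, neg_log_int]; simp
    conv_rhs => rw [← e]
    refine intervalIntegral.integral_mono_on zero_le_one
      (iint_sub_integrable s s' _ _ le_rfl zero_le_one)
      (intervalIntegral.intervalIntegrable_log'.neg.mul_const _) fun y hy => ?_
    have := Real.log_nonpos hy.1 hy.2
    exact mul_le_mul_of_nonneg_left (max_sub_bounds h _).2 (by linarith)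

lemma iint_of_one_le {s : ℝ} (hs : 1 ≤ s) : Iint s = 0 := by
  unfold Iint
  rw [intervalIntegral.integral_congr (g := fun _ => 0)]
  · simp
  intro y hy
  rw [Set.uIcc_of_le zero_le_one] at hy
  have h2 : 1 / (1 + y) ≤ 1 := by rw [div_le_one (by linarith [hy.1])]; linarith [hy.1]
  simp only
  rw [max_eq_right (by linarith), mul_zero]

lemma iint_le_one {s : ℝ} (hs : 0 ≤ s) : Iint s ≤ 1 := by
  rcases le_total s 1 with h | h
  · have := (iint_lip h).2
    rw [iint_of_one_le le_rfl] at this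
    linarith
  · rw [iint_of_one_le h]; exact zero_le_one

/-- For `s ≤ 1 / 2 ≤ 1 / (1 + y)` the positive part can be dropped, and `Iint` is affine. -/
lemma iint_of_le_half {s : ℝ} (h : s ≤ 1 / 2) : Iint s = Iint 0 - s := by
  have e : Iint 0 - Iint s = s := by
    rw [iint_sub, intervalIntegral.integral_congr (g := fun y => (-Real.log y) * s)]
    · rw [intervalIntegral.integral_mul_const, neg_log_int]; simp
    intro y hy
    rw [Set.uIcc_of_le zero_le_one] at hy
    have h2 : 1 / 2 ≤ 1 / (1 + y) := one_div_le_one_div_of_le (by linarith [hy.1])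
      (by linarith [hy.2])
    simp only
    rw [max_eq_left (by linarith), max_eq_left (by linarith)]
    ring
  linarith

lemma psi_eq (x : ℝ) : psi x = (1 - x) / x - (1 - x) / x * Real.log ((1 - x) / x) := by
  unfold psi
  rw [← inv_div (1 - x) x, Real.log_inv]; ring

/-- This includes `x = 1`, where the junk value `log (1 / 0) = 0` is multiplied by `0` and
`psi 1 = 0` is the limit. -/
lemma psi_continuousAt {x : ℝ} (hx : x ≠ 0) : ContinuousAt psi x := by
  have e : psi = (fun c => c - c * Real.log c) ∘ (fun x : ℝ => (1 - x) / x) := by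
    funext x; exact psi_eq x
  rw [e]
  refine ContinuousAt.comp ?_ ?_
  · exact (continuous_id.sub Real.continuous_mul_log).continuousAt
  · exact ContinuousAt.div (by fun_prop) (by fun_prop) hx

/-- Difference quotients of `Iint` lie between the values of `-psi` at the endpoints. -/
lemma iint_squeeze {s s' : ℝ} (h : s ≤ s') (hs : 1 / 2 ≤ s) (hs' : s' ≤ 1) :
    (s' - s) * psi s' ≤ Iint s - Iint s' ∧ Iint s - Iint s' ≤ (s' - s) * psi s := by
  have hc : ∀ x : ℝ, 1 / 2 ≤ x → x ≤ 1 → 0 ≤ (1 - x) / x ∧ (1 - x) / x ≤ 1 := by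
    intro x h1 h2
    refine ⟨div_nonneg (by linarith) (by linarith), ?_⟩
    rw [div_le_one (by linarith)]; linarith
  -- The positive part of `1 / (1 + y) - s` is nonzero exactly for `y < (1 - s) / s`, so `psi s` is
  -- the integral of `-log` over the support of the integrand of `Iint s`.
  have hpsi : ∀ x, (s' - s) * psi x = ∫ y in (0 : ℝ)..(1 - x) / x, (-Real.log y) * (s' - s) := by
    intro x
    rw [intervalIntegral.integral_mul_const, neg_log_int, psi_eq]; ring
  constructor
  · obtain ⟨h0, h1⟩ := hc s' (by linarith) hs'
    rw [hpsi, iint_sub, ← intervalIntegral.integral_add_adjacent_intervals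
      (iint_sub_integrable s s' _ _ le_rfl h0) (iint_sub_integrable s s' _ _ h0 zero_le_one)]
    refine le_add_of_le_of_nonneg ?_ ?_
    · refine intervalIntegral.integral_mono_on h0
        (intervalIntegral.intervalIntegrable_log'.neg.mul_const _)
        (iint_sub_integrable s s' _ _ le_rfl h0) fun y hy => ?_
      have := Real.log_nonpos hy.1 (hy.2.trans h1)
      refine mul_le_mul_of_nonneg_left ?_ (by linarith)
      have h3 : s' ≤ 1 / (1 + y) := by
        rw [le_div_iff₀ (by linarith [hy.1])]
        have := (le_div_iff₀ (by linarith : 0 < s')).1 hy.2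
        linarith
      rw [max_eq_left (by linarith), max_eq_left (by linarith)]
      linarith
    · refine intervalIntegral.integral_nonneg h1 fun y hy => ?_
      have := Real.log_nonpos (h0.trans hy.1) hy.2
      exact mul_nonneg (by linarith) (max_sub_bounds h _).1
  · obtain ⟨h0, h1⟩ := hc s hs (by linarith)
    rw [hpsi, iint_sub, ← intervalIntegral.integral_add_adjacent_intervals
      (iint_sub_integrable s s' _ _ le_rfl h0) (iint_sub_integrable s s' _ _ h0 zero_le_one)]
    have e : ∫ y in (1 - s) / s..1, (-Real.log y) *
        (max (1 / (1 + y) - s) 0 - max (1 / (1 + y) - s') 0) = 0 := by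
      rw [intervalIntegral.integral_congr (g := fun _ => 0)]
      · simp
      intro y hy
      rw [Set.uIcc_of_le h1] at hy
      have h3 : 1 / (1 + y) ≤ s := by
        rw [div_le_iff₀ (by linarith [hy.1])]
        have := (div_le_iff₀ (by linarith : 0 < s)).1 hy.1
        linarith
      simp only
      rw [max_eq_right (by linarith), max_eq_right (by linarith)]
      simp
    rw [e, add_zero]
    refine intervalIntegral.integral_mono_on h0 (iint_sub_integrable s s' _ _ le_rfl h0)
        (intervalIntegral.intervalIntegrable_log'.neg.mul_const _) fun y hy => ?_
    have := Real.log_nonpos hy.1 (hy.2.trans h1)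
    exact mul_le_mul_of_nonneg_left (max_sub_bounds h _).2 (by linarith)

lemma iint_continuous : Continuous Iint := by
  have : LipschitzWith 1 Iint := by
    refine LipschitzWith.of_dist_le_mul fun x y => ?_
    rw [NNReal.coe_one, one_mul, Real.dist_eq, Real.dist_eq]
    rcases le_total x y with h | h
    · have := iint_lip h
      rw [abs_of_nonneg this.1, abs_sub_comm, abs_of_nonneg (by linarith)]; exact this.2
    · have := iint_lip h
      rw [abs_sub_comm, abs_of_nonneg this.1, abs_of_nonneg (by linarith)]; exact this.2
  exact this.continuous

/-- On `[1 / 2, 1]` the derivative of `Iint` is `-psi`, by `iint_squeeze`, and `Iint 1 = 0`.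
Interior points suffice, since `Iint` and `psi` are continuous on the closed interval. -/
lemma iint_eq_psi {s : ℝ} (hs : 1 / 2 ≤ s) (hs' : s ≤ 1) : Iint s = ∫ x in s..1, psi x := by
  have hd : ∀ x ∈ Ioo s 1, HasDerivAt Iint (-psi x) x := by
    intro x hx
    rw [hasDerivAt_iff_isLittleO, Asymptotics.isLittleO_iff]
    intro c hc
    have h1 := Metric.continuousAt_iff.1 (psi_continuousAt (x := x) (by linarith [hx.1])) c hc
    obtain ⟨d, hd0, hd⟩ := h1
    filter_upwards [Metric.ball_mem_nhds x hd0, Ioo_mem_nhds hx.1 hx.2] with y hy hy2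
    have h2 := hd hy
    rw [Real.dist_eq] at h2
    have h2' := abs_lt.1 h2
    rw [smul_eq_mul, Real.norm_eq_abs, Real.norm_eq_abs]
    rcases le_total x y with h | h
    · obtain ⟨a1, a2⟩ := iint_squeeze h (by linarith [hx.1]) hy2.2.le
      rw [abs_of_nonneg (sub_nonneg.2 h), abs_le]
      constructor <;> nlinarith
    · obtain ⟨a1, a2⟩ := iint_squeeze h (by linarith [hy2.1]) hx.2.le
      rw [abs_of_nonpos (sub_nonpos.2 h), abs_le]
      constructor <;> nlinarith
  have hcont : ContinuousOn psi (uIcc s 1) := by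
    rw [uIcc_of_le hs']
    exact fun x hx => (psi_continuousAt (by linarith [hx.1])).continuousWithinAt
  have := intervalIntegral.integral_eq_sub_of_hasDerivAt_of_le hs' iint_continuous.continuousOn hd
    hcont.intervalIntegrable.neg
  rw [intervalIntegral.integral_neg, iint_of_one_le le_rfl] at this
  linarith

/-- `Hlim` in terms of `Iint`, granted the value of `Iint 0`. -/
lemma hlim_eq (h0 : Iint 0 = π ^ 2 / 12) {s : ℝ} (hs : 0 < s) : Hlim s = 12 / π ^ 2 * Iint s := by
  have hp : π ≠ 0 := Real.pi_ne_zero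
  unfold Hlim zeta2
  split_ifs with h1 h2
  · rw [iint_of_le_half h1, h0]
    field_simp
    ring
  · rw [iint_eq_psi (by linarith) h2]
    congr 1
    field_simp; norm_num
  · rw [iint_of_one_le (by linarith), mul_zero]

/-! ### Decomposition into cells -/

/-- Points which, on the side `σ = ±1` of `p / m`, are closer than `1 / (m s)` to `p / m`, but
not closer than `κ / m`. -/
def cell (κ : ℝ) (m : ℕ) (p : ℤ) (s : ℕ) (σ : ℤ) : Set ℝ :=
  {x : ℝ | κ < σ * (m * x - p) ∧ σ * (m * x - p) < 1 / (s : ℝ)}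

/-- If `x` lies in the cell of `p / m`, no pair `(b, a)` with `b ≤ N` other than `(m, p)`
approximates `x` as well as `(m, p)` does. -/
lemma best_approx {κ : ℝ} (hκ : 0 ≤ κ) {N m s : ℕ} {p σ : ℤ} (hm : 1 ≤ m) (hs : N < s)
    (hσ : σ = 1 ∨ σ = -1) (hdvd : (m : ℤ) ∣ s * p + σ) {x : ℝ} (hx : x ∈ cell κ m p s σ)
    {b : ℕ} {a : ℤ} (hb : 1 ≤ b) (hbN : b ≤ N) :
    (b = m ∧ a = p) ∨ |m * x - p| < |b * x - a| := by
  obtain ⟨q, hq⟩ := hdvd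
  obtain ⟨hx1, hx2⟩ := hx
  have hσσ : σ * σ = 1 := by rcases hσ with rfl | rfl <;> norm_num
  have hσσr : (σ : ℝ) * σ = 1 := by exact_mod_cast hσσ
  -- `(c, d)` are the coordinates of `(b, a)` in the basis `(m, p)`, `(s, q)` of determinant `σ`.
  set c : ℤ := σ * (b * q - a * s) with hc
  set d : ℤ := σ * (m * a - p * b) with hd
  have hdet : (m : ℤ) * q - s * p = σ := by linarith
  have e1 : (b : ℤ) = c * m + d * s := by
    calc (b : ℤ) = b * (σ * σ) := by rw [hσσ, mul_one]
      _ = b * (σ * (m * q - s * p)) := by rw [hdet]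
      _ = _ := by rw [hc, hd]; ring
  have e2 : a = c * p + d * q := by
    calc a = a * (σ * σ) := by rw [hσσ, mul_one]
      _ = a * (σ * (m * q - s * p)) := by rw [hdet]
      _ = _ := by rw [hc, hd]; ring
  set u : ℝ := σ * (m * x - p) with hu
  set v : ℝ := σ * (s * x - q) with hv
  have hu0 : 0 < u := hκ.trans_lt hx1
  have hm0 : (0 : ℝ) < m := by exact_mod_cast hm
  have hs0 : (0 : ℝ) < s := by exact_mod_cast (by omega : 0 < s)
  have hdetr : (m : ℝ) * q - s * p = σ := by exact_mod_cast hdet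
  have hmv : m * v = s * u - 1 := by
    rw [hu, hv]; linear_combination (-(σ : ℝ)) * hdetr - hσσr
  have hv0 : v < 0 := by
    have h1 : s * u < 1 := by rw [lt_div_iff₀ hs0] at hx2; linarith
    by_contra hcon
    have := mul_nonneg hm0.le (not_lt.1 hcon)
    linarith
  have hcomb : σ * (b * x - a) = c * u + d * v := by
    have e1' : (b : ℝ) = c * m + d * s := by exact_mod_cast e1
    have e2' : (a : ℝ) = c * p + d * q := by exact_mod_cast e2
    rw [e1', e2', hu, hv]; ring
  have habs : ∀ y : ℝ, |(σ : ℝ) * y| = |y| := by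
    intro y; rcases hσ with rfl | rfl <;> simp
  have hbZ : (1 : ℤ) ≤ b := by exact_mod_cast hb
  have hbs : (b : ℤ) < s := by exact_mod_cast lt_of_le_of_lt hbN hs
  have hmZ : (1 : ℤ) ≤ m := by exact_mod_cast hm
  rw [← habs (m * x - p), ← habs (b * x - a), hcomb, ← hu, abs_of_pos hu0]
  rcases lt_trichotomy d 0 with h | h | h
  · right
    have hc1 : 1 ≤ c := by
      by_contra hcon
      have : c ≤ 0 := by omega
      nlinarith
    have hc1' : (1 : ℝ) ≤ c := by exact_mod_cast hc1
    have hd1' : (d : ℝ) ≤ -1 := by exact_mod_cast (by omega : d ≤ -1)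
    refine lt_of_lt_of_le ?_ (le_abs_self _)
    nlinarith
  · rw [h] at e1 e2
    have hc1 : 1 ≤ c := by
      by_contra hcon
      have : c ≤ 0 := by omega
      nlinarith
    rcases hc1.eq_or_lt with h1 | h1
    · left
      rw [← h1] at e1 e2
      constructor
      · have : (b : ℤ) = m := by linarith
        exact_mod_cast this
      · linarith
    · right
      have hc1' : (2 : ℝ) ≤ c := by exact_mod_cast h1
      rw [h]
      refine lt_of_lt_of_le ?_ (le_abs_self _)
      push_cast
      nlinarith
  · right
    have hc1 : c ≤ -1 := by
      by_contra hcon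
      have : 0 ≤ c := by omega
      nlinarith
    have hc1' : (c : ℝ) ≤ -1 := by exact_mod_cast hc1
    have hd1' : (1 : ℝ) ≤ d := by exact_mod_cast h
    refine lt_of_lt_of_le ?_ (neg_le_abs _)
    nlinarith

/-- Two different cells of level `N` are disjoint. -/
lemma cell_unique {κ : ℝ} (hκ : 0 ≤ κ) {N m s m' s' : ℕ} {p σ p' σ' : ℤ}
    (hm : 1 ≤ m) (hmN : m ≤ N) (hs : N < s) (hsm : s ≤ N + m)
    (hσ : σ = 1 ∨ σ = -1) (hdvd : (m : ℤ) ∣ s * p + σ)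
    (hm' : 1 ≤ m') (hmN' : m' ≤ N) (hs' : N < s') (hsm' : s' ≤ N + m')
    (hσ' : σ' = 1 ∨ σ' = -1) (hdvd' : (m' : ℤ) ∣ s' * p' + σ')
    {x : ℝ} (hx : x ∈ cell κ m p s σ) (hx' : x ∈ cell κ m' p' s' σ') :
    m = m' ∧ p = p' ∧ s = s' ∧ σ = σ' := by
  have hmp : m' = m ∧ p' = p := by
    rcases best_approx hκ hm hs hσ hdvd hx hm' hmN' (a := p') with h | h
    · exact h
    · rcases best_approx hκ hm' hs' hσ' hdvd' hx' hm hmN (a := p) with h2 | h2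
      · exact ⟨h2.1.symm, h2.2.symm⟩
      · exact absurd (h.trans h2) (lt_irrefl _)
  obtain ⟨rfl, rfl⟩ := hmp
  have hpos := hκ.trans_lt hx.1
  have hpos' := hκ.trans_lt hx'.1
  have hσe : σ = σ' := by
    rcases hσ with rfl | rfl <;> rcases hσ' with rfl | rfl <;> norm_num at hpos hpos' ⊢ <;> linarith
  subst hσe
  refine ⟨rfl, rfl, ?_, rfl⟩
  -- `p` is invertible modulo the denominator, so `s` is determined modulo it.
  have h1 : (m' : ℤ) ∣ ((s : ℤ) - s') * p' := by
    have := dvd_sub hdvd hdvd'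
    have e : ((s : ℤ) - s') * p' = s * p' + σ - (s' * p' + σ) := by ring
    rwa [e]
  have hcop : IsCoprime (m' : ℤ) p' := by
    obtain ⟨q, hq⟩ := hdvd
    have hσσ : σ * σ = 1 := by rcases hσ with rfl | rfl <;> norm_num
    exact ⟨σ * q, -(σ * s), by linear_combination (-σ) * hq + hσσ⟩
  have h2 : (m' : ℤ) ∣ (s : ℤ) - s' := hcop.dvd_of_dvd_mul_right h1
  have h3 := Int.eq_zero_of_abs_lt_dvd h2 (by rw [abs_lt]; constructor <;> omega)
  omega

/-- Consecutive Farey fractions of order `N` around `x`: insert the mediant whenever its denominator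
is allowed, and keep the side on which `x` lies. -/
lemma farey {x : ℝ} (hx : Irrational x) (h0 : 0 < x) (h1 : x < 1) (N : ℕ) (hN : 1 ≤ N) :
    ∃ m m' : ℕ, ∃ p p' : ℤ, 1 ≤ m ∧ 1 ≤ m' ∧ m ≤ N ∧ m' ≤ N ∧ N < m + m' ∧
      p' * m - p * m' = 1 ∧ p < m * x ∧ m' * x < p' := by
  induction N, hN using Nat.le_induction with
  | base => exact ⟨1, 1, 0, 1, by norm_num, by norm_num, by norm_num, by norm_num, by norm_num,
      by norm_num, by simpa using h0, by simpa using h1⟩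
  | succ N hN ih =>
    obtain ⟨m, m', p, p', hm, hm', hmN, hmN', hlt, hdet, hp, hp'⟩ := ih
    by_cases h : N + 1 < m + m'
    · exact ⟨m, m', p, p', hm, hm', by omega, by omega, h, hdet, hp, hp'⟩
    have hne : ((m + m' : ℕ) : ℝ) * x ≠ ((p + p' : ℤ) : ℝ) := by
      intro he
      exact (hx.natCast_mul (by omega : m + m' ≠ 0)).ne_int _ he
    push_cast at hne
    rcases lt_or_gt_of_ne hne with h2 | h2
    · refine ⟨m, m + m', p, p + p', hm, by omega, by omega, by omega, by omega, ?_, hp, ?_⟩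
      · push_cast; linear_combination hdet
      · push_cast; exact h2
    · refine ⟨m + m', m', p + p', p', by omega, hm', by omega, by omega, by omega, ?_, ?_, hp'⟩
      · push_cast; linear_combination hdet
      · push_cast; exact h2

/-- Every irrational of `(0, 1)` lies in some cell of level `N`. -/
lemma cell_exists {x : ℝ} (hx : Irrational x) (h0 : 0 < x) (h1 : x < 1) (N : ℕ) (hN : 1 ≤ N) :
    ∃ m s : ℕ, ∃ p σ : ℤ, 1 ≤ m ∧ m ≤ N ∧ N < s ∧ s ≤ N + m ∧ (σ = 1 ∨ σ = -1) ∧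
      (m : ℤ) ∣ s * p + σ ∧ x ∈ cell 0 m p s σ := by
  obtain ⟨m, m', p, p', hm, hm', hmN, hmN', hlt, hdet, hp, hp'⟩ := farey hx h0 h1 N hN
  have hdetr : (p' : ℝ) * m - p * m' = 1 := by exact_mod_cast hdet
  have hspos : (0 : ℝ) < ((m + m' : ℕ) : ℝ) := by exact_mod_cast (by omega : 0 < m + m')
  have hmr : (0 : ℝ) < m := by exact_mod_cast hm
  have hmr' : (0 : ℝ) < m' := by exact_mod_cast hm'
  have hne : ((m + m' : ℕ) : ℝ) * x ≠ ((p + p' : ℤ) : ℝ) := by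
    intro he
    exact (hx.natCast_mul (by omega : m + m' ≠ 0)).ne_int _ he
  -- The mediant of the two neighbours decides which of them is the better approximation.
  rcases lt_or_gt_of_ne hne with h2 | h2
  · refine ⟨m, m + m', p, 1, hm, hmN, hlt, by omega, Or.inl rfl, ⟨p + p', ?_⟩, ?_, ?_⟩
    · push_cast; linear_combination -hdet
    · push_cast; linarith
    · rw [lt_div_iff₀ hspos]
      push_cast at h2 ⊢
      nlinarith
  · refine ⟨m', m + m', p', -1, hm', hmN', hlt, by omega, Or.inr rfl, ⟨p + p', ?_⟩, ?_, ?_⟩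
    · push_cast; linear_combination hdet
    · push_cast; linarith
    · rw [lt_div_iff₀ hspos]
      push_cast at h2 ⊢
      nlinarith

/-- A cell is an interval; the length is negative, and the interval empty, when `1 / s < κ`. -/
lemma cell_eq (κ : ℝ) {m : ℕ} (hm : 1 ≤ m) (p : ℤ) (s : ℕ) (σ : ℤ) (hσ : σ = 1 ∨ σ = -1) :
    ∃ u v : ℝ, cell κ m p s σ = Ioo u v ∧ v - u = 1 / (m : ℝ) * (1 / (s : ℝ) - κ) := by
  have hm0 : (0 : ℝ) < m := by exact_mod_cast hm
  rcases hσ with rfl | rfl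
  · refine ⟨(p + κ) / m, (p + 1 / (s : ℝ)) / m, ?_, by ring⟩
    ext x
    simp only [cell, Set.mem_ofPred_eq, Set.mem_Ioo, div_lt_iff₀ hm0, lt_div_iff₀ hm0]
    push_cast
    constructor <;> rintro ⟨h1, h2⟩ <;> constructor <;> linarith
  · refine ⟨(p - 1 / (s : ℝ)) / m, (p - κ) / m, ?_, by ring⟩
    ext x
    simp only [cell, Set.mem_ofPred_eq, Set.mem_Ioo, div_lt_iff₀ hm0, lt_div_iff₀ hm0]
    push_cast
    constructor <;> rintro ⟨h1, h2⟩ <;> constructor <;> linarith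

lemma cell_volume (κ : ℝ) {m : ℕ} (hm : 1 ≤ m) (p : ℤ) (N i : ℕ) (σ : ℤ) (hσ : σ = 1 ∨ σ = -1) :
    volume.real (cell κ m p (N + 1 + i) σ) = 1 / (m : ℝ) * fN N κ i := by
  obtain ⟨u, v, h1, h2⟩ := cell_eq κ hm p (N + 1 + i) σ hσ
  rw [h1, Measure.real, Real.volume_Ioo, ENNReal.toReal_ofReal', h2, fN,
    mul_max_of_nonneg _ _ (by positivity), mul_zero]

/-- Points `x` of `[α, β]` with `κ < |b x - a|` for all integers `a` and all denominators
`1 ≤ b ≤ N`. -/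
def badSet (α β κ : ℝ) (N : ℕ) : Set ℝ :=
  {x | x ∈ Icc α β ∧ ∀ b : ℕ, 1 ≤ b → b ≤ N → ∀ a : ℤ, κ < |b * x - a|}

/-- Indices `(m, ((i, p), σ))` of the cells of level `N` whose fraction `p / m` is in `[α, β)`.
The next denominator is encoded as `s = N + 1 + i`. -/
noncomputable def cellIdx (α β : ℝ) (N : ℕ) : Finset ((_ : ℕ) × ((ℕ × ℕ) × ℤ)) := by
  classical
  exact (Finset.Icc 1 N).sigma fun m =>
    (((Finset.range m) ×ˢ ((Finset.range m).filter fun p : ℕ => α * m ≤ p ∧ p < β * m)) ×ˢ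
      ({1, -1} : Finset ℤ)).filter fun z =>
        (m : ℤ) ∣ ((N + 1 + z.1.1 : ℕ) : ℤ) * (z.1.2 : ℤ) + z.2

lemma mem_cellIdx {α β : ℝ} {N : ℕ} {z : (_ : ℕ) × ((ℕ × ℕ) × ℤ)} : z ∈ cellIdx α β N ↔
    (1 ≤ z.1 ∧ z.1 ≤ N) ∧ ((z.2.1.1 < z.1 ∧ z.2.1.2 < z.1 ∧ α * z.1 ≤ z.2.1.2 ∧
      z.2.1.2 < β * z.1) ∧ (z.2.2 = 1 ∨ z.2.2 = -1)) ∧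
      (z.1 : ℤ) ∣ ((N + 1 + z.2.1.1 : ℕ) : ℤ) * (z.2.1.2 : ℤ) + z.2.2 := by
  unfold cellIdx
  simp only [Finset.mem_sigma, Finset.mem_Icc, Finset.mem_filter, Finset.mem_product,
    Finset.mem_range, Finset.mem_insert, Finset.mem_singleton]

/-- The measure of `badSet` is the total length of the cells, up to boundary effects. -/
lemma bad_volume (α β κ : ℝ) (N : ℕ) (hN : 1 ≤ N) (hκ : 0 ≤ κ) (h0 : 0 ≤ α) (h1 : β ≤ 1) :
    |volume.real (badSet α β κ N) - ∑ z ∈ cellIdx α β N, 1 / (z.1 : ℝ) * fN N κ z.2.1.1|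
      ≤ 2 / N := by
  have hN' : (0 : ℝ) < N := by exact_mod_cast hN
  set C : ((_ : ℕ) × ((ℕ × ℕ) × ℤ)) → Set ℝ := fun z =>
    cell κ z.1 z.2.1.2 (N + 1 + z.2.1.1) z.2.2 with hC
  have hvol : ∀ z ∈ cellIdx α β N, volume.real (C z) = 1 / (z.1 : ℝ) * fN N κ z.2.1.1 := by
    intro z hz
    rw [mem_cellIdx] at hz
    exact cell_volume κ hz.1.1 _ N _ _ hz.2.1.2
  have hmeas : ∀ z ∈ cellIdx α β N, MeasurableSet (C z) := by
    intro z hz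
    rw [mem_cellIdx] at hz
    obtain ⟨u, v, h, _⟩ := cell_eq κ hz.1.1 z.2.1.2 (N + 1 + z.2.1.1) z.2.2 hz.2.1.2
    rw [hC]; simp only; rw [h]; exact measurableSet_Ioo
  have hfin : ∀ z ∈ cellIdx α β N, volume (C z) ≠ ⊤ := by
    intro z hz
    rw [mem_cellIdx] at hz
    obtain ⟨u, v, h, _⟩ := cell_eq κ hz.1.1 z.2.1.2 (N + 1 + z.2.1.1) z.2.2 hz.2.1.2
    rw [hC]; simp only; rw [h, Real.volume_Ioo]; exact ENNReal.ofReal_ne_top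
  have hbfin : volume (badSet α β κ N) ≠ ⊤ :=
    measure_ne_top_of_subset (fun x hx => hx.1) (by rw [Real.volume_Icc]; exact ENNReal.ofReal_ne_top)
  have hUfin : volume (⋃ z ∈ cellIdx α β N, C z) ≠ ⊤ :=
    (measure_biUnion_lt_top (Finset.finite_toSet _) fun z hz => (hfin z hz).lt_top).ne
  have hdist : (1 : ℝ) / ((N + 1 : ℕ) : ℝ) ≤ 1 / N :=
    one_div_le_one_div_of_le hN' (by push_cast; linarith)
  have hIcc : ∀ a : ℝ, volume.real (Icc a (a + 1 / N)) = 1 / N := by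
    intro a
    rw [Measure.real, Real.volume_Icc, add_sub_cancel_left, ENNReal.toReal_ofReal (by positivity)]
  have hIfin : ∀ a : ℝ, volume (Icc a (a + 1 / N)) ≠ ⊤ := by
    intro a; rw [Real.volume_Icc]; exact ENNReal.ofReal_ne_top
  -- a point of a cell is within `1 / N` of the fraction, on the side `σ`
  have hclose : ∀ {m s : ℕ} {p σ : ℤ} {x : ℝ}, 1 ≤ m → N < s → x ∈ cell κ m p s σ →
      (σ = 1 → p / m < x ∧ x < p / m + 1 / N) ∧ (σ = -1 → p / m - 1 / N < x ∧ x < p / m) := by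
    intro m s p σ x hm hs hx
    have hm0 : (1 : ℝ) ≤ m := by exact_mod_cast hm
    have hs1 : 1 / (s : ℝ) < 1 / N := one_div_lt_one_div_of_lt hN' (by exact_mod_cast hs)
    have e : m * x - p = m * (x - p / m) := by field_simp
    obtain ⟨a1, a2⟩ := hx
    have a1' := hκ.trans_lt a1
    rw [e] at a1' a2
    constructor
    · rintro rfl
      push_cast at a1' a2
      have : 0 < x - p / m := by
        by_contra hcon; nlinarith
      constructor <;> nlinarith
    · rintro rfl
      push_cast at a1' a2
      have : 0 < p / m - x := by
        by_contra hcon; nlinarith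
      constructor <;> nlinarith
  -- A bad irrational lies in a cell; the fraction `p / m` of that cell is in `[α, β)` unless the
  -- point is in one of the two end intervals of length `1 / N`.
  have hsub1 : badSet α β κ N ⊆ ((⋃ z ∈ cellIdx α β N, C z) ∪
      (Icc α (α + 1 / N) ∪ Icc (β - 1 / N) (β - 1 / N + 1 / N))) ∪ range ((↑) : ℚ → ℝ) := by
    rintro x ⟨⟨hxα, hxβ⟩, hx⟩
    by_cases hirr : Irrational x
    swap
    · right
      unfold Irrational at hirr
      exact not_not.1 hirr
    left
    have hx0 : 0 < x := lt_of_le_of_ne (h0.trans hxα) (fun h => hirr.ne_zero h.symm)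
    have hx1 : x < 1 := lt_of_le_of_ne (hxβ.trans h1) hirr.ne_one
    obtain ⟨m, s, p, σ, hm, hmN, hs, hsm, hσ, hdvd, hcell⟩ := cell_exists hirr hx0 hx1 N hN
    have hcellκ : x ∈ cell κ m p s σ := by
      refine ⟨?_, hcell.2⟩
      have h2 := hx m hm hmN p
      have : |(m : ℝ) * x - p| = σ * (m * x - p) := by
        have h3 := hcell.1
        rcases hσ with rfl | rfl
        · push_cast at h3 ⊢
          rw [abs_of_pos (by linarith)]; ring
        · push_cast at h3 ⊢
          rw [abs_of_neg (by linarith)]; ring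
      rwa [this] at h2
    have hcl := hclose hm hs hcellκ
    have hm0 : (0 : ℝ) < m := by exact_mod_cast hm
    by_cases hα : α ≤ p / m
    · by_cases hβ : (p : ℝ) / m < β
      · left
        rw [le_div_iff₀ hm0] at hα
        rw [div_lt_iff₀ hm0] at hβ
        have hp0 : 0 ≤ p := by
          have : (0 : ℝ) ≤ p := le_trans (by positivity) hα
          exact_mod_cast this
        have hpm : p < m := by
          have : (p : ℝ) < m := by nlinarith
          exact_mod_cast this
        obtain ⟨p, rfl⟩ := Int.eq_ofNat_of_zero_le hp0
        obtain ⟨i, rfl⟩ := Nat.exists_eq_add_of_lt hs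
        rw [show N + i + 1 = N + 1 + i by omega] at hdvd hcellκ
        simp only [Set.mem_iUnion]
        refine ⟨⟨m, (i, p), σ⟩, ?_, hcellκ⟩
        rw [mem_cellIdx]
        refine ⟨⟨hm, hmN⟩, ⟨⟨?_, ?_, ?_, ?_⟩, hσ⟩, hdvd⟩
        · simp only; omega
        · exact_mod_cast hpm
        · exact_mod_cast hα
        · exact_mod_cast hβ
      · right; right
        rcases hσ with h | h
        · have := (hcl.1 h).1; linarith [not_lt.1 hβ]
        · have := (hcl.2 h).1
          constructor <;> linarith [not_lt.1 hβ]
    · right; left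
      rcases hσ with h | h
      · have := (hcl.1 h).2
        constructor <;> linarith [not_le.1 hα]
      · have := (hcl.2 h).2; linarith [not_le.1 hα]
  have hsub2 : (⋃ z ∈ cellIdx α β N, C z) ⊆ badSet α β κ N ∪
      (Icc (α - 1 / N) (α - 1 / N + 1 / N) ∪ Icc β (β + 1 / N)) := by
    intro x hx
    simp only [Set.mem_iUnion] at hx
    obtain ⟨⟨m, ⟨i, p⟩, σ⟩, hz, hx⟩ := hx
    rw [mem_cellIdx] at hz
    obtain ⟨⟨hm, hmN⟩, ⟨⟨hi, hp, hpα, hpβ⟩, hσ⟩, hdvd⟩ := hz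
    simp only at hm hmN hi hp hpα hpβ hσ hdvd
    have hm0 : (0 : ℝ) < m := by exact_mod_cast hm
    have hcl := hclose hm (by omega) hx
    rw [← le_div_iff₀ hm0] at hpα
    rw [← div_lt_iff₀ hm0] at hpβ
    simp only [Int.cast_natCast] at hcl
    have hrange : α - 1 / N < x ∧ x < β + 1 / N := by
      have : (0 : ℝ) < 1 / N := by positivity
      rcases hσ with h | h
      · have := hcl.1 h; constructor <;> linarith
      · have := hcl.2 h; constructor <;> linarith
    by_cases hxα : α ≤ x
    · by_cases hxβ : x ≤ β
      · left
        refine ⟨⟨hxα, hxβ⟩, fun b hb hbN a => ?_⟩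
        have hk : κ < |(m : ℝ) * x - p| := by
          have h3 := hx.1
          refine lt_of_lt_of_le h3 ?_
          rcases hσ with h | h <;> simp only [h] <;> push_cast
          · rw [one_mul]; exact le_abs_self _
          · rw [neg_one_mul]; exact neg_le_abs _
        rcases best_approx hκ hm (by omega) hσ hdvd hx hb hbN (a := a) with ⟨rfl, rfl⟩ | h
        · exact_mod_cast hk
        · exact hk.trans (by exact_mod_cast h)
      · right; right; constructor <;> linarith
    · right; left; constructor <;> linarith
  have hdisj : (↑(cellIdx α β N) : Set ((_ : ℕ) × ((ℕ × ℕ) × ℤ))).PairwiseDisjoint C := by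
    rintro ⟨m, ⟨i, p⟩, σ⟩ hz ⟨m', ⟨i', p'⟩, σ'⟩ hz' hne
    rw [Finset.mem_coe, mem_cellIdx] at hz hz'
    obtain ⟨⟨hm, hmN⟩, ⟨⟨hi, hp, hpα, hpβ⟩, hσ⟩, hdvd⟩ := hz
    obtain ⟨⟨hm', hmN'⟩, ⟨⟨hi', hp', hpα', hpβ'⟩, hσ'⟩, hdvd'⟩ := hz'
    simp only at hm hmN hi hp hσ hdvd hm' hmN' hi' hp' hσ' hdvd'
    rw [Function.onFun, Set.disjoint_left]
    intro x hx hx'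
    apply hne
    obtain ⟨rfl, e2, e3, rfl⟩ := cell_unique hκ hm hmN (by omega) (by omega) hσ hdvd
      hm' hmN' (by omega) (by omega) hσ' hdvd' hx hx'
    have e2' : p = p' := by exact_mod_cast e2
    have e3' : i = i' := by omega
    rw [e2', e3']
  have hsumU : volume.real (⋃ z ∈ cellIdx α β N, C z)
      = ∑ z ∈ cellIdx α β N, 1 / (z.1 : ℝ) * fN N κ z.2.1.1 := by
    rw [measureReal_biUnion_finset hdisj hmeas hfin]
    exact Finset.sum_congr rfl hvol
  have hle1 : volume.real (badSet α β κ N) ≤ volume.real (⋃ z ∈ cellIdx α β N, C z) + 2 / N := by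
    have hq : volume (range ((↑) : ℚ → ℝ)) = 0 := (countable_range _).measure_zero _
    calc _ ≤ volume.real (((⋃ z ∈ cellIdx α β N, C z) ∪
      (Icc α (α + 1 / N) ∪ Icc (β - 1 / N) (β - 1 / N + 1 / N))) ∪ range ((↑) : ℚ → ℝ)) := by
          refine measureReal_mono hsub1 ?_
          refine measure_union_ne_top (measure_union_ne_top hUfin
            (measure_union_ne_top (hIfin _) (hIfin _))) ?_
          rw [hq]; exact ENNReal.zero_ne_top
      _ ≤ (volume.real (⋃ z ∈ cellIdx α β N, C z) + (1 / N + 1 / N)) + 0 := by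
          refine (measureReal_union_le _ _).trans (add_le_add ?_ (by simp [Measure.real, hq]))
          refine (measureReal_union_le _ _).trans (add_le_add le_rfl ?_)
          refine (measureReal_union_le _ _).trans (le_of_eq ?_)
          rw [hIcc, hIcc]
      _ = _ := by ring
  have hle2 : volume.real (⋃ z ∈ cellIdx α β N, C z) ≤ volume.real (badSet α β κ N) + 2 / N := by
    calc _ ≤ volume.real (badSet α β κ N ∪
      (Icc (α - 1 / N) (α - 1 / N + 1 / N) ∪ Icc β (β + 1 / N))) :=
          measureReal_mono hsub2 (measure_union_ne_top hbfin
            (measure_union_ne_top (hIfin _) (hIfin _)))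
      _ ≤ volume.real (badSet α β κ N) + (1 / N + 1 / N) := by
          refine (measureReal_union_le _ _).trans (add_le_add le_rfl ?_)
          refine (measureReal_union_le _ _).trans (le_of_eq ?_)
          rw [hIcc, hIcc]
      _ = _ := by ring
  rw [← hsumU, abs_le]
  constructor <;> linarith

/-! ### Measure of badly approximable points -/

/-- The sum over the cells, regrouped by denominator: for given `m` and `σ`, the pairs `(i, p)` are
the solutions of `(N + 1 + i) p = -σ` modulo `m`, that is, `p` runs over modular inverses. -/
lemma cellIdx_sum (α β κ : ℝ) (N : ℕ) :
    ∑ z ∈ cellIdx α β N, 1 / (z.1 : ℝ) * fN N κ z.2.1.1 =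
      ∑ m ∈ Finset.Icc 1 N, ∑ σ ∈ ({1, -1} : Finset ℤ), 1 / (m : ℝ) *
        ∑ i ∈ Finset.range m, ∑ p ∈ (Finset.range m).filter (fun p : ℕ => α * m ≤ p ∧ (p : ℝ) < β * m),
          if ((N + 1 + i : ℕ) : ZMod m) * (p : ZMod m) = ((-σ : ℤ) : ZMod m) then fN N κ i else 0 := by
  classical
  unfold cellIdx
  rw [Finset.sum_sigma]
  refine Finset.sum_congr rfl fun m hm => ?_
  rw [Finset.sum_filter, Finset.sum_product_right]
  refine Finset.sum_congr rfl fun σ hσ => ?_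
  rw [Finset.sum_product, Finset.mul_sum]
  refine Finset.sum_congr rfl fun i hi => ?_
  rw [Finset.mul_sum]
  refine Finset.sum_congr rfl fun p hp => ?_
  have key : ((m : ℤ) ∣ ((N + 1 + i : ℕ) : ℤ) * (p : ℤ) + σ) ↔
      ((N + 1 + i : ℕ) : ZMod m) * (p : ZMod m) = ((-σ : ℤ) : ZMod m) := by
    rw [← ZMod.intCast_zmod_eq_zero_iff_dvd, Int.cast_add, Int.cast_mul, Int.cast_neg,
      eq_neg_iff_add_eq_zero, Int.cast_natCast, Int.cast_natCast]
  by_cases h : (m : ℤ) ∣ ((N + 1 + i : ℕ) : ℤ) * (p : ℤ) + σ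
  · rw [if_pos h, if_pos (key.1 h)]
  · rw [if_neg h, if_neg (fun h' => h (key.2 h')), mul_zero]

/-- The measure of the set of points of `[α, β]` without good approximations up to `N`,
with a power-saving error. -/
lemma bad_asymp (δ : ℝ) (hδ : 0 < δ) : ∃ C : ℝ, 1 ≤ C ∧ ∀ (N : ℕ) (α β κ : ℝ), 1 ≤ N → 0 ≤ κ →
    0 ≤ α → α ≤ β → β ≤ 1 →
    |volume.real (badSet α β κ N) - (β - α) * (12 / π ^ 2 * Iint (κ * N))| ≤
      C * (N : ℝ) ^ (-(1 / 4 : ℝ) + δ) := by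
  obtain ⟨C1, hC1, H1⟩ := error_sum δ hδ
  obtain ⟨C2, hC2, H2⟩ := log_bound (3 / 4) (by norm_num)
  refine ⟨2 + 2 * C1 + 8 * C2, by linarith, fun N α β κ hN hκ h0 hαβ h1 => ?_⟩
  have hN0 : N ≠ 0 := by omega
  have hN' : (1 : ℝ) ≤ N := by exact_mod_cast hN
  have hNp : (0 : ℝ) < N := by linarith
  set E : ℝ := (N : ℝ) ^ (-(1 / 4 : ℝ) + δ) with hE
  have hE1 : (N : ℝ) ^ (-(1 / 4 : ℝ)) ≤ E := Real.rpow_le_rpow_of_exponent_le hN' (by linarith)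
  have a1 : 2 / (N : ℝ) ≤ 2 * E := by
    have : (N : ℝ) ^ (-1 : ℝ) ≤ E := Real.rpow_le_rpow_of_exponent_le hN' (by linarith)
    rw [Real.rpow_neg_one] at this
    rw [div_eq_mul_inv]; linarith
  have a2 : (1 + Real.log N) / N ≤ C2 * E := by
    rw [div_le_iff₀ hNp]
    have h := H2 N hN0
    have : (N : ℝ) ^ (3 / 4 : ℝ) = (N : ℝ) ^ (-(1 / 4 : ℝ)) * N := by
      rw [← Real.rpow_add_one hNp.ne']; norm_num
    rw [this] at h
    have := mul_le_mul_of_nonneg_right hE1 hNp.le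
    nlinarith [mul_le_mul_of_nonneg_left this (by linarith : (0:ℝ) ≤ C2)]
  set S : ℕ → ℤ → ℝ := fun m σ => ∑ i ∈ Finset.range m,
    ∑ p ∈ (Finset.range m).filter (fun p : ℕ => α * m ≤ p ∧ (p : ℝ) < β * m),
      if ((N + 1 + i : ℕ) : ZMod m) * (p : ZMod m) = ((-σ : ℤ) : ZMod m) then fN N κ i else 0
    with hS
  set e : ℕ → ℝ := fun m => 9 * (1 / ((N : ℝ) + 1)) * (m : ℝ) ^ ((3 : ℝ) / 4) *
    m.divisors.card ^ 3 * (1 + Real.log m) ^ 2 with he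
  set M : ℕ → ℝ := fun m => (β - α) * m.totient / m * ∑ i ∈ Finset.range m, fN N κ i with hM
  have b1 : ∀ m ∈ Finset.Icc 1 N, ∀ σ ∈ ({1, -1} : Finset ℤ), |S m σ - M m| ≤ e m := by
    intro m hm σ hσ
    obtain ⟨hm1, hm2⟩ := Finset.mem_Icc.1 hm
    have : NeZero m := ⟨by omega⟩
    have hlog : 0 ≤ 1 + Real.log m := by
      have := Real.log_natCast_nonneg m; linarith
    have hu : ∃ c : (ZMod m)ˣ, (c : ZMod m) = ((-σ : ℤ) : ZMod m) := by
      rcases (by simpa using hσ : σ = 1 ∨ σ = -1) with rfl | rfl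
      · exact ⟨-1, by simp⟩
      · exact ⟨1, by simp⟩
    obtain ⟨c, hc⟩ := hu
    have h := equi m c N (fN N κ) (fN_antitone N κ) (fN_nonneg N κ) α β h0 hαβ h1
    rw [hc] at h
    refine h.trans ?_
    rw [he]
    have := fN_le N κ hκ 0
    dsimp only
    gcongr
  have b2 : ∑ z ∈ cellIdx α β N, 1 / (z.1 : ℝ) * fN N κ z.2.1.1 =
      ∑ m ∈ Finset.Icc 1 N, (1 / (m : ℝ) * S m 1 + 1 / (m : ℝ) * S m (-1)) := by
    rw [cellIdx_sum]
    refine Finset.sum_congr rfl fun m hm => ?_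
    rw [Finset.sum_pair (by norm_num)]
  have b3 : |∑ m ∈ Finset.Icc 1 N, (1 / (m : ℝ) * S m 1 + 1 / (m : ℝ) * S m (-1)) -
      ∑ m ∈ Finset.Icc 1 N, 2 * (1 / (m : ℝ) * M m)| ≤ 2 * (C1 * E) := by
    rw [← Finset.sum_sub_distrib]
    refine (Finset.abs_sum_le_sum_abs _ _).trans ?_
    refine le_trans (Finset.sum_le_sum (g := fun m : ℕ => 2 * (1 / (m : ℝ) * e m)) ?_) ?_
    · intro m hm
      have e1 := b1 m hm 1 (by simp)
      have e2 := b1 m hm (-1) (by simp)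
      have hm0 : (0 : ℝ) ≤ 1 / (m : ℝ) := by positivity
      have : 1 / (m : ℝ) * S m 1 + 1 / (m : ℝ) * S m (-1) - 2 * (1 / (m : ℝ) * M m) =
        1 / (m : ℝ) * ((S m 1 - M m) + (S m (-1) - M m)) := by ring
      rw [this, abs_mul, abs_of_nonneg hm0]
      have := abs_add_le (S m 1 - M m) (S m (-1) - M m)
      nlinarith [mul_le_mul_of_nonneg_left (this.trans (add_le_add e1 e2)) hm0]
    · rw [← Finset.mul_sum]
      exact mul_le_mul_of_nonneg_left (H1 N hN0) (by norm_num)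
  have b4 : ∑ m ∈ Finset.Icc 1 N, 2 * (1 / (m : ℝ) * M m) = 2 * (β - α) *
      ∑ m ∈ Finset.Icc 1 N, (m.totient : ℝ) / m * (1 / (m : ℝ) *
        ∑ i ∈ Finset.range m, fN N κ i) := by
    rw [Finset.mul_sum]
    refine Finset.sum_congr rfl fun m hm => ?_
    rw [hM]; ring
  have b5 := main_term N (by omega) κ hκ
  set T := ∑ m ∈ Finset.Icc 1 N, (m.totient : ℝ) / m * (1 / (m : ℝ) *
        ∑ i ∈ Finset.range m, fN N κ i)
  have b6 := bad_volume α β κ N hN hκ h0 h1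
  rw [b2] at b6
  rw [b4] at b3
  set V := ∑ m ∈ Finset.Icc 1 N, (1 / (m : ℝ) * S m 1 + 1 / (m : ℝ) * S m (-1))
  have b7 : |2 * (β - α) * T - (β - α) * (12 / π ^ 2 * Iint (κ * N))| ≤ 8 * (C2 * E) := by
    have : 2 * (β - α) * T - (β - α) * (12 / π ^ 2 * Iint (κ * N)) =
      2 * (β - α) * (T - 6 / π ^ 2 * Iint (κ * N)) := by ring
    rw [this, abs_mul, abs_of_nonneg (by linarith : (0:ℝ) ≤ 2 * (β - α))]
    have hx := abs_nonneg (T - 6 / π ^ 2 * Iint (κ * N))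
    nlinarith
  calc _ ≤ |volume.real (badSet α β κ N) - V| + |V - 2 * (β - α) * T| +
        |2 * (β - α) * T - (β - α) * (12 / π ^ 2 * Iint (κ * N))| := by
        have := abs_add_three (volume.real (badSet α β κ N) - V) (V - 2 * (β - α) * T)
          (2 * (β - α) * T - (β - α) * (12 / π ^ 2 * Iint (κ * N)))
        refine le_of_eq_of_le (congrArg abs ?_) this
        ring
    _ ≤ _ := by linarith

/-- With `κ = 0`, every irrational number is bad, which evaluates the constant `Iint 0`. -/
lemma iint_zero : Iint 0 = π ^ 2 / 12 := by
  obtain ⟨C, hC, H⟩ := bad_asymp (1 / 8) (by norm_num)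
  have hv : ∀ N : ℕ, volume.real (badSet 0 1 0 N) = 1 := by
    intro N
    have : badSet 0 1 0 N =ᵐ[volume] Icc (0 : ℝ) 1 := by
      have hQ : ∀ᵐ x : ℝ, Irrational x := by
        have : (range ((↑) : ℚ → ℝ)).Countable := countable_range _
        exact this.ae_notMem volume
      filter_upwards [hQ] with x hx
      refine propext ⟨fun h => h.1, fun h => ⟨h, fun b hb hbN a => ?_⟩⟩
      rw [abs_pos, sub_ne_zero]
      intro hh
      apply hx
      refine ⟨(a : ℚ) / b, ?_⟩
      have : (b : ℝ) ≠ 0 := by positivity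
      push_cast
      field_simp
      linarith
    rw [measureReal_congr this]; simp
  have hlim : Filter.Tendsto (fun N : ℕ => C * (N : ℝ) ^ (-(1 / 4 : ℝ) + 1 / 8)) Filter.atTop
      (nhds 0) := by
    have : Filter.Tendsto (fun x : ℝ => x ^ (-(1 / 8 : ℝ))) Filter.atTop (nhds 0) :=
      tendsto_rpow_neg_atTop (by norm_num)
    have h2 := (this.comp (tendsto_natCast_atTop_atTop (R := ℝ))).const_mul C
    rw [mul_zero] at h2
    convert h2 using 3
    norm_num
  have hle : |1 - 12 / π ^ 2 * Iint 0| ≤ 0 := by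
    refine ge_of_tendsto hlim ?_
    filter_upwards [Filter.eventually_ge_atTop 1] with N hN
    have := H N 0 1 0 hN le_rfl le_rfl zero_le_one le_rfl
    rw [hv] at this
    simpa using this
  have := abs_eq_zero.1 (le_antisymm hle (abs_nonneg _))
  have hpi := Real.pi_pos
  field_simp at this
  linarith

/-! ### Reflections and lattice points -/

/-- Directions for which no lattice point `(m - p, p)` with `1 ≤ m ≤ N` lies within `ε` of
the line of direction `ω` through the origin. -/
def wSet (ε : ℝ) (N : ℕ) : Set ℝ :=
  {ω | ω ∈ Icc 0 (π / 4) ∧ ∀ m : ℕ, 1 ≤ m → m ≤ N → ∀ p : ℤ,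
    ε < |m * sin ω - p * (sin ω + cos ω)|}

lemma sin_cos_pos {ω : ℝ} (hω : ω ∈ Icc 0 (π / 4)) : 0 ≤ sin ω ∧ 0 < cos ω := by
  have := Real.pi_pos
  exact ⟨Real.sin_nonneg_of_nonneg_of_le_pi hω.1 (by linarith [hω.2]),
    Real.cos_pos_of_mem_Ioo ⟨by linarith [hω.1], by linarith [hω.2]⟩⟩

/-- A lattice point within `ε` of the line is hit at the latest at the time of its orthogonal
projection, which is `a cos ω + b sin ω`. -/
lemma hit_of_near {ε ω : ℝ} (hε : ε ∈ Ioo (0 : ℝ) (1 / 2)) {a b : ℤ}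
    (h : |a * sin ω - b * cos ω| ≤ ε) :
    √(((a * cos ω + b * sin ω) * cos ω - a) ^ 2 + ((a * cos ω + b * sin ω) * sin ω - b) ^ 2) ≤ ε := by
  apply Real.sqrt_le_iff.2
  refine ⟨hε.1.le, ?_⟩
  have h2 := sq_le_sq' (by linarith [neg_abs_le (a * sin ω - b * cos ω), abs_nonneg (a * sin ω - b * cos ω)])
    ((le_abs_self _).trans h)
  have e : ((a * cos ω + b * sin ω) * cos ω - a) ^ 2 + ((a * cos ω + b * sin ω) * sin ω - b) ^ 2 =
      (a * sin ω - b * cos ω) ^ 2 := by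
    have h1 := Real.sin_sq_add_cos_sq ω
    have e1 : (a * cos ω + b * sin ω) * cos ω - a = -(a * sin ω - b * cos ω) * sin ω := by
      have : cos ω ^ 2 = 1 - sin ω ^ 2 := by linarith
      linear_combination (a : ℝ) * this
    have e2 : (a * cos ω + b * sin ω) * sin ω - b = (a * sin ω - b * cos ω) * cos ω := by
      have : sin ω ^ 2 = 1 - cos ω ^ 2 := by linarith
      linear_combination (b : ℝ) * this
    rw [e1, e2]
    linear_combination (a * sin ω - b * cos ω) ^ 2 * h1
  rw [e]; exact h2

/-- At a hit, both coordinates and the distance of the lattice point to the line are controlled. -/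
lemma near_of_hit {ε ω τ : ℝ} (hε : 0 < ε) {a b : ℤ}
    (h : √((τ * cos ω - a) ^ 2 + (τ * sin ω - b) ^ 2) ≤ ε) :
    |τ * cos ω - a| ≤ ε ∧ |τ * sin ω - b| ≤ ε ∧ |a * sin ω - b * cos ω| ≤ ε := by
  have h2 := (Real.sqrt_le_iff.1 h).2
  have h1 := Real.sin_sq_add_cos_sq ω
  refine ⟨abs_le_of_sq_le_sq (by nlinarith [sq_nonneg (τ * sin ω - b)]) hε.le,
    abs_le_of_sq_le_sq (by nlinarith [sq_nonneg (τ * cos ω - a)]) hε.le,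
    abs_le_of_sq_le_sq ?_ hε.le⟩
  set u := τ * cos ω - a
  set v := τ * sin ω - b
  have : (a * sin ω - b * cos ω) = v * cos ω - u * sin ω := by
    simp only [u, v]; ring
  rw [this]
  have : (v * cos ω - u * sin ω) ^ 2 + (v * sin ω + u * cos ω) ^ 2 = u ^ 2 + v ^ 2 := by
    linear_combination (u ^ 2 + v ^ 2) * h1
  nlinarith [sq_nonneg (v * sin ω + u * cos ω)]

lemma bddBelow_hits (ε ω : ℝ) : BddBelow {τ : ℝ | 0 < τ ∧ ∃ p : ℤ × ℤ, p ≠ (0, 0) ∧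
    Real.sqrt ((τ * Real.cos ω - p.1) ^ 2 + (τ * Real.sin ω - p.2) ^ 2) ≤ ε} :=
  ⟨0, fun _ h => h.1.le⟩

/-- If the number of reflections exceeds `X`, no lattice point with `m ≤ X` is hit by the line.
Here `X = t / ε` and the lattice points are written `(m - p, p)`. -/
lemma reps_upper {ε t : ℝ} (hε : ε ∈ Ioo (0 : ℝ) (1 / 2)) (ht : 0 < t) :
    {ω ∈ Icc (0 : ℝ) (π / 4) | ε * (Reps ε ω : ℝ) > t} ⊆ wSet ε ⌊t / ε⌋₊ := by
  rintro ω ⟨hω, hR⟩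
  refine ⟨hω, fun m hm hmN p => ?_⟩
  by_contra! hc
  obtain ⟨hs, hcs⟩ := sin_cos_pos hω
  have hd : |((m : ℤ) - p : ℤ) * sin ω - p * cos ω| ≤ ε := by
    refine le_of_eq_of_le (congrArg abs ?_) hc
    push_cast; ring
  have hhit := hit_of_near hε hd
  obtain ⟨n1, n2, -⟩ := near_of_hit hε.1 hhit
  -- `τ` is the time of the orthogonal projection of `(m - p, p)` to the line. A hit at time `τ`
  -- bounds `freePath`, and since `ε < 1 / 2` the coordinates of the projection bound the two
  -- floors, so that `Reps ≤ m`.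
  set τ := (((m : ℤ) - p : ℤ) : ℝ) * cos ω + p * sin ω with hτ
  have hm' : (1 : ℝ) ≤ m := by exact_mod_cast hm
  have hτpos : 0 < τ := by
    have e1 := (abs_le.1 n1).1
    have e2 := (abs_le.1 n2).1
    push_cast at e1 e2
    by_contra! hneg
    have := mul_nonneg (neg_nonneg.2 hneg) (add_nonneg hs hcs.le)
    have := hε.2
    nlinarith
  have hle : freePath ε ω ≤ τ := by
    refine csInf_le (bddBelow_hits ε ω) ⟨hτpos, ((m : ℤ) - p, p), ?_, hhit⟩
    intro h
    rw [Prod.mk.injEq] at h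
    omega
  have f1 : ⌊freePath ε ω * cos ω⌋ ≤ (m : ℤ) - p := by
    rw [← Int.lt_add_one_iff, Int.floor_lt]
    have := mul_le_mul_of_nonneg_right hle hcs.le
    have e1 := (abs_le.1 n1).2
    have := hε.2
    push_cast at e1 ⊢
    linarith
  have f2 : ⌊freePath ε ω * sin ω⌋ ≤ p := by
    rw [← Int.lt_add_one_iff, Int.floor_lt]
    have := mul_le_mul_of_nonneg_right hle hs
    have e1 := (abs_le.1 n2).2
    have := hε.2
    push_cast at e1 ⊢
    linarith
  have hRm : (Reps ε ω : ℝ) ≤ m := by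
    have : Reps ε ω ≤ (m : ℤ) := by unfold Reps; linarith
    exact_mod_cast this
  have : (m : ℝ) ≤ t / ε := (Nat.le_floor_iff (by have := hε.1; positivity)).1 hmN
  rw [le_div_iff₀ hε.1] at this
  nlinarith [hε.1]

/-- If no lattice point with `m ≤ X + 3` is hit by the line, there are more than `X`
reflections. -/
lemma reps_lower {ε t : ℝ} (hε : ε ∈ Ioo (0 : ℝ) (1 / 2)) :
    wSet ε (⌊t / ε⌋₊ + 3) ⊆ {ω ∈ Icc (0 : ℝ) (π / 4) | ε * (Reps ε ω : ℝ) > t} := by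
  rintro ω ⟨hω, hW⟩
  refine ⟨hω, ?_⟩
  obtain ⟨hs, hcs⟩ := sin_cos_pos hω
  have hε0 := hε.1
  have hε1 := hε.2
  -- By Dirichlet's approximation theorem some point is hit, so the infimum is not a junk value.
  have hne : {τ : ℝ | 0 < τ ∧ ∃ p : ℤ × ℤ, p ≠ (0, 0) ∧
      Real.sqrt ((τ * Real.cos ω - p.1) ^ 2 + (τ * Real.sin ω - p.2) ^ 2) ≤ ε}.Nonempty := by
    obtain ⟨n, hn⟩ := exists_nat_one_div_lt hε0
    obtain ⟨j, k, hk, -, hjk⟩ := Real.exists_int_int_abs_mul_sub_le (sin ω / cos ω)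
      (n := n + 1) (by omega)
    have hk' : (1 : ℝ) ≤ k := by exact_mod_cast hk
    have hb : |(k : ℝ) * (sin ω / cos ω) - j| ≤ ε := by
      refine hjk.trans (le_trans ?_ hn.le)
      push_cast
      gcongr
      linarith
    have hj : 0 ≤ j := by
      have e := (abs_le.1 hb).2
      have : 0 ≤ (k : ℝ) * (sin ω / cos ω) := by positivity
      have : (-1 : ℝ) < j := by linarith
      have : (-1 : ℤ) < j := by exact_mod_cast this
      omega
    have hj' : (0 : ℝ) ≤ j := by exact_mod_cast hj
    have hd : |(k : ℝ) * sin ω - j * cos ω| ≤ ε := by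
      have : (k : ℝ) * sin ω - j * cos ω = cos ω * ((k : ℝ) * (sin ω / cos ω) - j) := by
        field_simp
      rw [this, abs_mul, abs_of_pos hcs]
      have := Real.cos_le_one ω
      nlinarith [abs_nonneg ((k : ℝ) * (sin ω / cos ω) - j)]
    refine ⟨k * cos ω + j * sin ω, by positivity, (k, j), ?_, hit_of_near hε hd⟩
    intro h
    rw [Prod.mk.injEq] at h
    omega
  set N := ⌊t / ε⌋₊ + 3 with hN
  -- A hit point `(a, b)` has `a + b ≥ N + 1`, and both coordinates of the position at that time are
  -- within `ε` of `(a, b)`.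
  have hfp : (N : ℝ) / (sin ω + cos ω) ≤ freePath ε ω := by
    refine le_csInf hne ?_
    rintro τ ⟨hτ, ⟨a, b⟩, hab, hhit⟩
    obtain ⟨n1, n2, n3⟩ := near_of_hit hε0 hhit
    simp only at n1 n2 n3
    have q1 : 0 ≤ τ * cos ω := by positivity
    have q2 : 0 ≤ τ * sin ω := by positivity
    have ha : 0 ≤ a := by
      have : (-1 : ℝ) < a := by linarith [(abs_le.1 n1).2]
      have : (-1 : ℤ) < a := by exact_mod_cast this
      omega
    have hb : 0 ≤ b := by
      have : (-1 : ℝ) < b := by linarith [(abs_le.1 n2).2]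
      have : (-1 : ℤ) < b := by exact_mod_cast this
      omega
    have hm : 1 ≤ (a + b).toNat := by
      have : ¬ (a = 0 ∧ b = 0) := fun h => hab (by rw [h.1, h.2])
      omega
    have hmN : N < (a + b).toNat := by
      by_contra! hc
      have := hW _ hm hc b
      have hcast : (((a + b).toNat : ℕ) : ℝ) = a + b := by
        have : (((a + b).toNat : ℕ) : ℤ) = a + b := Int.toNat_of_nonneg (by omega)
        exact_mod_cast this
      rw [hcast] at this
      have e : ((a : ℝ) + b) * sin ω - b * (sin ω + cos ω) = a * sin ω - b * cos ω := by ring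
      rw [e] at this
      linarith
    have hmN' : (N : ℝ) + 1 ≤ a + b := by
      have : (N : ℤ) + 1 ≤ a + b := by omega
      exact_mod_cast this
    rw [div_le_iff₀ (by positivity)]
    linarith [(abs_le.1 n1).1, (abs_le.1 n2).1]
  rw [div_le_iff₀ (by positivity)] at hfp
  have g1 := Int.lt_floor_add_one (freePath ε ω * cos ω)
  have g2 := Int.lt_floor_add_one (freePath ε ω * sin ω)
  have g3 := Nat.lt_floor_add_one (t / ε)
  have hNN : (N : ℝ) = ⌊t / ε⌋₊ + 3 := by rw [hN]; push_cast; ring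
  have : t / ε < Reps ε ω := by
    unfold Reps; push_cast; linarith
  rw [div_lt_iff₀ hε0] at this
  rw [gt_iff_lt]; linarith

/-! ### Slope coordinate -/

/-- The slope coordinate `sin ω / (sin ω + cos ω)`; a lattice point `(m - p, p)` is near the
line of direction `ω` when `p / m` is near `xc ω`. -/
noncomputable def xc (ω : ℝ) : ℝ := sin ω / (sin ω + cos ω)

/-- The scaling factor `sin ω + cos ω`. -/
noncomputable def sg (ω : ℝ) : ℝ := sin ω + cos ω

lemma sg_sq (ω : ℝ) : sg ω ^ 2 = 1 + sin (2 * ω) := by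
  unfold sg
  rw [Real.sin_two_mul]
  linear_combination Real.sin_sq_add_cos_sq ω

lemma sg_continuous : Continuous sg := by unfold sg; fun_prop

lemma sg_one_le {ω : ℝ} (hω : ω ∈ Icc 0 (π / 4)) : 1 ≤ sg ω := by
  obtain ⟨h1, h2⟩ := sin_cos_pos hω
  have := Real.sin_sq_add_cos_sq ω
  unfold sg
  nlinarith [mul_nonneg h1 h2.le]

lemma sg_le (ω : ℝ) : sg ω ^ 2 ≤ 2 := by
  rw [sg_sq]; linarith [Real.sin_le_one (2 * ω)]

/-- `sg` is increasing and its square is `2`-Lipschitz on `[0, π / 4]`. -/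
lemma sg_mono {u v : ℝ} (hu : u ∈ Icc 0 (π / 4)) (hv : v ∈ Icc 0 (π / 4)) (h : u ≤ v) :
    sg u ≤ sg v ∧ sg v ^ 2 ≤ sg u ^ 2 + 2 * (v - u) := by
  have hpi := Real.pi_pos
  obtain ⟨a1, a2⟩ := hu
  obtain ⟨b1, b2⟩ := hv
  have e1 : sin (2 * u) ≤ sin (2 * v) :=
    Real.sin_le_sin_of_le_of_le_pi_div_two (by linarith) (by linarith) (by linarith)
  constructor
  · have := sg_one_le ⟨a1, a2⟩
    have := sg_one_le ⟨b1, b2⟩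
    refine le_of_sq_le_sq ?_ (by linarith)
    rw [sg_sq, sg_sq]; linarith
  · rw [sg_sq, sg_sq]
    have h1 : sin (2 * v) - sin (2 * u) = 2 * sin (v - u) * cos (v + u) := by
      rw [Real.sin_sub_sin]; ring_nf
    have h2 : sin (v - u) ≤ v - u := Real.sin_le (by linarith)
    have h3 : 0 ≤ sin (v - u) := Real.sin_nonneg_of_nonneg_of_le_pi (by linarith) (by linarith)
    nlinarith [Real.cos_le_one (v + u)]

lemma xc_deriv {ω : ℝ} (hω : ω ∈ Icc 0 (π / 4)) : HasDerivAt xc (1 / sg ω ^ 2) ω := by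
  have h := sg_one_le hω
  unfold sg at h ⊢
  have := (Real.hasDerivAt_sin ω).div ((Real.hasDerivAt_sin ω).add (Real.hasDerivAt_cos ω))
    (by simp only [Pi.add_apply]; linarith)
  refine (this.congr_deriv ?_)
  simp only [Pi.add_apply]
  congr 1
  linear_combination Real.sin_sq_add_cos_sq ω

lemma xc_strictMono : StrictMonoOn xc (Icc 0 (π / 4)) := by
  intro u hu v hv h
  have h1 := sg_one_le hu
  have h2 := sg_one_le hv
  have h3 : 0 < sin (v - u) := Real.sin_pos_of_pos_of_lt_pi (by linarith)
    (by linarith [hu.1, hv.2, Real.pi_pos])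
  rw [Real.sin_sub] at h3
  unfold xc
  unfold sg at h1 h2
  rw [div_lt_div_iff₀ (by linarith) (by linarith)]
  nlinarith

lemma xc_mem {ω : ℝ} (hω : ω ∈ Icc 0 (π / 4)) : xc ω ∈ Icc (0 : ℝ) 1 := by
  obtain ⟨h1, h2⟩ := sin_cos_pos hω
  unfold xc
  exact ⟨by positivity, div_le_one_of_le₀ (by linarith) (by positivity)⟩

lemma xc_image {u v : ℝ} (hu : u ∈ Icc 0 (π / 4)) (hv : v ∈ Icc 0 (π / 4)) (h : u ≤ v) :
    xc '' Icc u v = Icc (xc u) (xc v) := by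
  have hsub : Icc u v ⊆ Icc 0 (π / 4) := Icc_subset_Icc hu.1 hv.2
  apply Subset.antisymm
  · rintro _ ⟨ω, hω, rfl⟩
    exact ⟨xc_strictMono.monotoneOn hu (hsub hω) hω.1, xc_strictMono.monotoneOn (hsub hω) hv hω.2⟩
  · exact intermediate_value_Icc h fun ω hω => (xc_deriv (hsub hω)).continuousAt.continuousWithinAt

/-- Change of variables on a short block, where `sg` is almost constant. -/
lemma image_volume {u v : ℝ} (hu : u ∈ Icc 0 (π / 4)) (hv : v ∈ Icc 0 (π / 4))
    {A : Set ℝ} (hA : MeasurableSet A) (hsub : A ⊆ Icc u v) :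
    sg u ^ 2 * volume.real (xc '' A) ≤ volume.real A ∧
      volume.real A ≤ sg v ^ 2 * volume.real (xc '' A) := by
  have hsub' : A ⊆ Icc 0 (π / 4) := hsub.trans (Icc_subset_Icc hu.1 hv.2)
  have hfin : IsFiniteMeasure (volume.restrict A) := by
    refine ⟨?_⟩
    rw [Measure.restrict_apply_univ]
    exact (measure_mono hsub).trans_lt (by simp)
  have hint : volume.real (xc '' A) = ∫ ω in A, 1 / sg ω ^ 2 := by
    have := integral_image_eq_integral_abs_deriv_smul hA
      (fun x hx => (xc_deriv (hsub' hx)).hasDerivWithinAt) (xc_strictMono.injOn.mono hsub')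
      (fun _ => (1 : ℝ))
    rw [setIntegral_const, smul_eq_mul, mul_one] at this
    rw [this]
    refine integral_congr_ae (Filter.Eventually.of_forall fun x => ?_)
    simp only [smul_eq_mul, mul_one]
    exact abs_of_nonneg (by positivity)
  have hI : IntegrableOn (fun ω => 1 / sg ω ^ 2) A := by
    have : ContinuousOn (fun ω => 1 / sg ω ^ 2) (Icc 0 (π / 4)) := by
      refine continuousOn_const.div (sg_continuous.pow 2).continuousOn fun ω hω => ?_
      have := sg_one_le hω
      positivity
    exact (this.integrableOn_Icc).mono_set hsub'
  have hs1 := sg_one_le hu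
  have hs2 := sg_one_le hv
  have hconst : ∀ c : ℝ, ∫ ω in A, c = volume.real A * c := by
    intro c; rw [setIntegral_const, smul_eq_mul]
  rw [hint]
  constructor
  · have : ∫ ω in A, 1 / sg ω ^ 2 ≤ ∫ ω in A, 1 / sg u ^ 2 := by
      refine setIntegral_mono_on hI (integrable_const _) hA fun ω hω => ?_
      have := (sg_mono hu (hsub' hω) (hsub hω).1).1
      gcongr
    rw [hconst, mul_one_div, le_div_iff₀ (by positivity)] at this
    linarith
  · have : ∫ ω in A, 1 / sg v ^ 2 ≤ ∫ ω in A, 1 / sg ω ^ 2 := by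
      refine setIntegral_mono_on (integrable_const _) hI hA fun ω hω => ?_
      have := (sg_mono (hsub' hω) hv (hsub hω).2).1
      have := sg_one_le (hsub' hω)
      gcongr
    rw [hconst, mul_one_div, div_le_iff₀ (by positivity)] at this
    linarith

lemma wSet_measurable (ε : ℝ) (N : ℕ) : MeasurableSet (wSet ε N) := by
  have : wSet ε N = Icc 0 (π / 4) ∩ ⋂ m : ℕ, ⋂ _ : 1 ≤ m, ⋂ _ : m ≤ N, ⋂ p : ℤ,
      {ω | ε < |m * sin ω - p * (sin ω + cos ω)|} := by
    ext ω; simp [wSet]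
  rw [this]
  refine measurableSet_Icc.inter (MeasurableSet.iInter fun m => MeasurableSet.iInter fun _ =>
    MeasurableSet.iInter fun _ => MeasurableSet.iInter fun p => ?_)
  exact measurableSet_lt measurable_const (by fun_prop)

/-- The lattice point `(b - a, a)` is near the line of direction `ω` when `a / b` approximates `xc ω`. -/
lemma near_iff {ω : ℝ} (hω : ω ∈ Icc 0 (π / 4)) (b : ℕ) (a : ℤ) :
    |b * sin ω - a * (sin ω + cos ω)| = sg ω * |b * xc ω - a| := by
  have h := sg_one_le hω
  have : b * sin ω - a * (sin ω + cos ω) = sg ω * (b * xc ω - a) := by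
    unfold sg xc
    unfold sg at h
    have : sin ω + cos ω ≠ 0 := by linarith
    field_simp
  rw [this, abs_mul, abs_of_nonneg (by linarith)]

/-- On a block `[u, v]`, where `sg u ≤ sg ω ≤ sg v`, the image of `wSet` lies between two sets of
badly approximable points. -/
lemma image_subset {u v ε : ℝ} (hu : u ∈ Icc 0 (π / 4)) (hv : v ∈ Icc 0 (π / 4)) (h : u ≤ v)
    (hε : 0 < ε) (N : ℕ) :
    xc '' (wSet ε N ∩ Icc u v) ⊆ badSet (xc u) (xc v) (ε / sg v) N ∧
    badSet (xc u) (xc v) (ε / sg u) N ⊆ xc '' (wSet ε N ∩ Icc u v) := by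
  have hs1 := sg_one_le hu
  have hs2 := sg_one_le hv
  constructor
  · rintro _ ⟨ω, ⟨hw, hω⟩, rfl⟩
    refine ⟨by rw [← xc_image hu hv h]; exact ⟨ω, hω, rfl⟩, fun b hb hbN a => ?_⟩
    have := hw.2 b hb hbN a
    rw [near_iff hw.1] at this
    have h2 := (sg_mono hw.1 hv hω.2).1
    rw [div_lt_iff₀ (by linarith)]
    nlinarith [abs_nonneg (b * xc ω - a)]
  · rintro x ⟨hx, hb⟩
    rw [← xc_image hu hv h] at hx
    obtain ⟨ω, hω, rfl⟩ := hx
    have hω' : ω ∈ Icc 0 (π / 4) := Icc_subset_Icc hu.1 hv.2 hω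
    refine ⟨ω, ⟨⟨hω', fun m hm hmN p => ?_⟩, hω⟩, rfl⟩
    have := hb m hm hmN p
    rw [near_iff hω']
    have h2 := (sg_mono hu hω' hω.1).1
    rw [div_lt_iff₀ (by linarith)] at this
    nlinarith [abs_nonneg (m * xc ω - p)]

/-! ### Blocks of directions -/

/-- The density `12 / π² * Iint` is bounded by `2`. -/
lemma gl_bounds {s : ℝ} (hs : 0 ≤ s) : 0 ≤ 12 / π ^ 2 * Iint s ∧ 12 / π ^ 2 * Iint s ≤ 2 := by
  have h1 := iint_nonneg s
  have h2 := iint_le_one hs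
  have hc : 12 / π ^ 2 ≤ 2 := by
    rw [div_le_iff₀ (by positivity)]; nlinarith [Real.pi_gt_three]
  have hc0 : 0 ≤ 12 / π ^ 2 := by positivity
  exact ⟨by positivity, by nlinarith⟩

/-- The density is nonincreasing and `2`-Lipschitz. -/
lemma gl_lip {s s' : ℝ} (h : s ≤ s') : 12 / π ^ 2 * Iint s' ≤ 12 / π ^ 2 * Iint s ∧
    12 / π ^ 2 * Iint s - 12 / π ^ 2 * Iint s' ≤ 2 * (s' - s) := by
  obtain ⟨h1, h2⟩ := iint_lip h
  have hc : 12 / π ^ 2 ≤ 2 := by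
    rw [div_le_iff₀ (by positivity)]; nlinarith [Real.pi_gt_three]
  have hc0 : 0 ≤ 12 / π ^ 2 := by positivity
  constructor
  · nlinarith
  · rw [← mul_sub]; nlinarith

lemma gl_continuousOn (c : ℝ) :
    ContinuousOn (fun ω => 12 / π ^ 2 * Iint (c / sg ω)) (Icc 0 (π / 4)) := by
  refine continuousOn_const.mul (iint_continuous.comp_continuousOn ?_)
  refine continuousOn_const.div sg_continuous.continuousOn fun ω hω => ?_
  have := sg_one_le hω
  positivity

/-- The inequalities behind `block`. Here `L` and `D` are the lengths of the block in the coordinates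
`ω` and `xc ω`, `a` and `b` bound the derivative of the change of variables, `W` and `I` are the
measures of the set and of its image, and `I₂ ≤ I ≤ I₁` are measures of sets `badSet`. -/
lemma block_arith {a b D L gu gv W I I₁ I₂ J E c : ℝ} (hD : 0 ≤ D) (hL : 0 ≤ L) (ha1 : 1 ≤ a)
    (hb1 : 1 ≤ b) (ha2 : a ≤ 2) (hb2 : b ≤ 2) (hab : b ≤ a + 2 * L) (j1 : a * D ≤ L)
    (j2 : L ≤ b * D) (gu0 : 0 ≤ gu) (gu2 : gu ≤ 2) (gv0 : 0 ≤ gv) (gv2 : gv ≤ 2) (hE : 0 ≤ E)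
    (i1 : a * I ≤ W) (i2 : W ≤ b * I) (t1 : I ≤ I₁) (t2 : I₂ ≤ I)
    (H1 : I₁ - D * gv ≤ E) (H2 : -E ≤ I₂ - D * gu) (hJ1 : L * gu ≤ J) (hJ2 : J ≤ L * gv)
    (gd : gv - gu ≤ 2 * c * L) : |W - J| ≤ L ^ 2 * (4 + 2 * c) + 2 * E := by
  have hDL : D ≤ L := by linarith [mul_le_mul_of_nonneg_right ha1 hD]
  have q1 : (b - a) * D ≤ 2 * L * D := mul_le_mul_of_nonneg_right (by linarith) hD
  have q2 : L * D ≤ L * L := mul_le_mul_of_nonneg_left hDL hL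
  have hbD : b * D ≤ L + 2 * L ^ 2 := by linarith
  have haD : L - 2 * L ^ 2 ≤ a * D := by linarith
  have hL2 := sq_nonneg L
  have up : W ≤ L * gv + 4 * L ^ 2 + 2 * E := by
    have h1 : b * I ≤ b * (D * gv + E) := mul_le_mul_of_nonneg_left (by linarith) (by linarith)
    have h2 : b * E ≤ 2 * E := mul_le_mul_of_nonneg_right hb2 hE
    have h3 : b * D * gv ≤ (L + 2 * L ^ 2) * gv := mul_le_mul_of_nonneg_right hbD gv0
    have h4 := mul_le_mul_of_nonneg_left gv2 hL2
    linarith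
  have lo : L * gu - 4 * L ^ 2 - 2 * E ≤ W := by
    have h1 : a * (D * gu - E) ≤ a * I := mul_le_mul_of_nonneg_left (by linarith) (by linarith)
    have h2 : a * E ≤ 2 * E := mul_le_mul_of_nonneg_right ha2 hE
    have h3 : (L - 2 * L ^ 2) * gu ≤ a * D * gu := mul_le_mul_of_nonneg_right haD gu0
    have h4 := mul_le_mul_of_nonneg_left gu2 hL2
    linarith
  have gd' := mul_le_mul_of_nonneg_left gd hL
  rw [abs_le]
  constructor <;> linarith

/-- On a block `[u, v]`, the measure of `wSet` agrees with the limiting density up to an error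
quadratic in the length of the block. -/
lemma block {u v ε E : ℝ} (hu : u ∈ Icc 0 (π / 4)) (hv : v ∈ Icc 0 (π / 4)) (h : u ≤ v)
    (hε : 0 < ε) (N : ℕ)
    (H : ∀ α β κ : ℝ, 0 ≤ κ → 0 ≤ α → α ≤ β → β ≤ 1 →
      |volume.real (badSet α β κ N) - (β - α) * (12 / π ^ 2 * Iint (κ * N))| ≤ E) :
    |volume.real (wSet ε N ∩ Icc u v) - ∫ ω in u..v, 12 / π ^ 2 * Iint (ε * N / sg ω)| ≤
      (v - u) ^ 2 * (4 + 2 * (ε * N)) + 2 * E := by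
  have hs1 := sg_one_le hu
  have hs2 := sg_one_le hv
  have hsub : Icc u v ⊆ Icc 0 (π / 4) := Icc_subset_Icc hu.1 hv.2
  set c := ε * N with hc
  have hc0 : 0 ≤ c := by positivity
  set g : ℝ → ℝ := fun ω => 12 / π ^ 2 * Iint (c / sg ω) with hg
  have hgm : ∀ x ∈ Icc u v, ∀ y ∈ Icc u v, x ≤ y → g x ≤ g y := by
    intro x hx y hy hxy
    refine (gl_lip ?_).1
    have := sg_one_le (hsub hx)
    have := (sg_mono (hsub hx) (hsub hy) hxy).1
    gcongr
  have hgi : IntervalIntegrable g volume u v :=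
    ((gl_continuousOn c).mono (by rwa [uIcc_of_le h])).intervalIntegrable
  have hI1 : (v - u) * g u ≤ ∫ ω in u..v, g ω := by
    have := intervalIntegral.integral_mono_on h (_root_.intervalIntegrable_const (c := g u)) hgi
      fun x hx => hgm u ⟨le_rfl, h⟩ x hx hx.1
    rwa [intervalIntegral.integral_const, smul_eq_mul] at this
  have hI2 : ∫ ω in u..v, g ω ≤ (v - u) * g v := by
    have := intervalIntegral.integral_mono_on h hgi (_root_.intervalIntegrable_const (c := g v))
      fun x hx => hgm x hx v ⟨h, le_rfl⟩ hx.2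
    rwa [intervalIntegral.integral_const, smul_eq_mul] at this
  obtain ⟨m1, m2⟩ := sg_mono hu hv h
  have hxu := xc_mem hu
  have hxv := xc_mem hv
  have hD : xc u ≤ xc v := xc_strictMono.monotoneOn hu hv h
  have Hu := abs_le.1 (H (xc u) (xc v) (ε / sg u) (by positivity) hxu.1 hD hxv.2)
  have Hv := abs_le.1 (H (xc u) (xc v) (ε / sg v) (by positivity) hxu.1 hD hxv.2)
  have eu : ε / sg u * N = c / sg u := by rw [hc]; ring
  have ev : ε / sg v * N = c / sg v := by rw [hc]; ring
  rw [eu] at Hu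
  rw [ev] at Hv
  obtain ⟨s1, s2⟩ := image_subset hu hv h hε N
  obtain ⟨i1, i2⟩ := image_volume hu hv ((wSet_measurable ε N).inter (measurableSet_Icc (a := u) (b := v)))
    inter_subset_right
  have fin1 : volume (badSet (xc u) (xc v) (ε / sg v) N) ≠ ⊤ :=
    ((measure_mono (fun x hx => hx.1)).trans_lt (by simp : volume (Icc (xc u) (xc v)) < ⊤)).ne
  have t1 := measureReal_mono s1 fin1
  have t2 := measureReal_mono s2 (ne_top_of_le_ne_top fin1 (measure_mono s1))
  obtain ⟨j1, j2⟩ := image_volume hu hv (measurableSet_Icc (a := u) (b := v)) subset_rfl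
  rw [xc_image hu hv h, Real.volume_real_Icc_of_le h, Real.volume_real_Icc_of_le hD] at j1 j2
  have gu := gl_bounds (s := c / sg u) (by positivity)
  have gv := gl_bounds (s := c / sg v) (by positivity)
  have gd : g v - g u ≤ 2 * c * (v - u) := by
    have hle : c / sg v ≤ c / sg u := by gcongr
    have h1 := (gl_lip hle).2
    have h2 : c / sg u - c / sg v ≤ c * (v - u) := by
      rw [div_sub_div _ _ (by positivity) (by positivity), div_le_iff₀ (by positivity)]
      have h3 : sg v - sg u ≤ v - u := by nlinarith
      have h4 : 1 ≤ sg u * sg v := by nlinarith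
      have h5 : 0 ≤ c * (v - u) := mul_nonneg hc0 (by linarith)
      nlinarith
    simp only [hg]; linarith
  have hb2 := sg_le v
  have hE : 0 ≤ E := (abs_nonneg _).trans (H 0 0 0 le_rfl le_rfl le_rfl zero_le_one)
  change 0 ≤ g u ∧ g u ≤ 2 at gu
  change 0 ≤ g v ∧ g v ≤ 2 at gv
  change _ ≤ volume.real _ - (xc v - xc u) * g u ∧ _ at Hu
  change _ ∧ volume.real _ - (xc v - xc u) * g v ≤ _ at Hv
  have h3 := block_arith (sub_nonneg.2 hD) (sub_nonneg.2 h) (one_le_pow₀ hs1) (one_le_pow₀ hs2)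
    (sg_le u) (sg_le v) m2 j1 j2 gu.1 gu.2 gv.1 gv.2 hE i1 i2
    t1 t2 Hv.2 Hu.1 hI1 hI2 gd
  exact h3

lemma indicator_integral (ε : ℝ) (N : ℕ) {u v : ℝ} (h : u ≤ v) :
    ∫ ω in u..v, (wSet ε N).indicator (fun _ => (1 : ℝ)) ω =
      volume.real (wSet ε N ∩ Icc u v) := by
  rw [intervalIntegral.integral_of_le h, ← integral_Icc_eq_integral_Ioc,
    setIntegral_indicator (wSet_measurable ε N), setIntegral_const, smul_eq_mul, mul_one, inter_comm]

lemma indicator_integrable (ε : ℝ) (N : ℕ) (u v : ℝ) :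
    IntervalIntegrable ((wSet ε N).indicator (fun _ => (1 : ℝ))) volume u v := by
  rw [intervalIntegrable_iff]
  exact (integrableOn_const (by simp)).indicator (wSet_measurable ε N)

/-- Summation of `block` over `J` equal blocks. -/
lemma blocks {ε E : ℝ} (hε : 0 < ε) (N J : ℕ) (hJ : 1 ≤ J)
    (H : ∀ α β κ : ℝ, 0 ≤ κ → 0 ≤ α → α ≤ β → β ≤ 1 →
      |volume.real (badSet α β κ N) - (β - α) * (12 / π ^ 2 * Iint (κ * N))| ≤ E) :
    |volume.real (wSet ε N) - ∫ ω in (0 : ℝ)..(π / 4), 12 / π ^ 2 * Iint (ε * N / sg ω)| ≤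
      (4 + 2 * (ε * N)) / J + 2 * (J * E) := by
  have hpi := Real.pi_pos
  have hJ' : (0 : ℝ) < J := by exact_mod_cast hJ
  set g : ℝ → ℝ := fun ω => 12 / π ^ 2 * Iint (ε * N / sg ω) with hg
  set f : ℝ → ℝ := (wSet ε N).indicator (fun _ => (1 : ℝ)) with hf
  set a : ℕ → ℝ := fun j => j * (π / 4 / J) with ha
  have hmem : ∀ j ≤ J, a j ∈ Icc 0 (π / 4) := by
    intro j hj
    have hj' : (j : ℝ) ≤ J := by exact_mod_cast hj
    refine ⟨by positivity, ?_⟩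
    simp only [ha]
    calc (j : ℝ) * (π / 4 / J) ≤ J * (π / 4 / J) := by gcongr
      _ = π / 4 := by field_simp
  have hstep : ∀ j, a (j + 1) - a j = π / 4 / J := by
    intro j; simp only [ha]; push_cast; ring
  have hle : ∀ j, a j ≤ a (j + 1) := fun j => by
    have := hstep j
    have : 0 ≤ π / 4 / J := by positivity
    linarith
  have hgi : ∀ j < J, IntervalIntegrable g volume (a j) (a (j + 1)) := by
    intro j hj
    refine ((gl_continuousOn (ε * N)).mono ?_).intervalIntegrable
    rw [uIcc_of_le (hle j)]
    exact Icc_subset_Icc (hmem j hj.le).1 (hmem (j + 1) hj).2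
  have hfi : ∀ u v, IntervalIntegrable f volume u v := indicator_integrable ε N
  have a0 : a 0 = 0 := by simp [ha]
  have aJ : a J = π / 4 := by simp only [ha]; field_simp
  have e1 : volume.real (wSet ε N) = ∑ j ∈ Finset.range J, volume.real (wSet ε N ∩ Icc (a j) (a (j + 1))) := by
    have h1 := intervalIntegral.sum_integral_adjacent_intervals (f := f) (μ := volume) (a := a)
      (n := J) fun j _ => hfi _ _
    rw [a0, aJ, indicator_integral ε N (by positivity : (0 : ℝ) ≤ π / 4)] at h1
    have h2 : wSet ε N ∩ Icc 0 (π / 4) = wSet ε N := inter_eq_left.2 fun ω hω => hω.1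
    rw [h2] at h1
    rw [← h1]
    exact Finset.sum_congr rfl fun j _ => indicator_integral ε N (hle j)
  have e2 : ∫ ω in (0 : ℝ)..(π / 4), g ω = ∑ j ∈ Finset.range J, ∫ ω in (a j)..(a (j + 1)), g ω := by
    rw [intervalIntegral.sum_integral_adjacent_intervals hgi, a0, aJ]
  rw [e1, e2, ← Finset.sum_sub_distrib]
  refine (Finset.abs_sum_le_sum_abs _ _).trans ?_
  have hq : 0 ≤ 4 + 2 * (ε * N) := by positivity
  calc _ ≤ ∑ j ∈ Finset.range J, ((1 / (J : ℝ)) ^ 2 * (4 + 2 * (ε * N)) + 2 * E) := by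
        refine Finset.sum_le_sum fun j hj => ?_
        have hj' := Finset.mem_range.1 hj
        refine (block (hmem j hj'.le) (hmem (j + 1) hj') (hle j) hε N H).trans ?_
        rw [hstep]
        have : π / 4 / J ≤ 1 / J := by
          gcongr; linarith [Real.pi_le_four]
        gcongr
    _ = _ := by
        rw [Finset.sum_const, Finset.card_range, nsmul_eq_mul]
        field_simp

/-! ### Conclusion -/

/-- The limit in the statement, in terms of `Iint`. -/
lemma limit_integral {t : ℝ} (ht : 0 < t) :
    ∫ ω in (0 : ℝ)..(π / 4), Hlim (t / (cos ω + sin ω)) =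
      ∫ ω in (0 : ℝ)..(π / 4), 12 / π ^ 2 * Iint (t / sg ω) := by
  refine intervalIntegral.integral_congr fun ω hω => ?_
  rw [uIcc_of_le (by positivity)] at hω
  have := sg_one_le hω
  have h2 : cos ω + sin ω = sg ω := by unfold sg; ring
  simp only [h2]
  exact hlim_eq iint_zero (by positivity)

/-- The limit depends on the level in a Lipschitz way; used to replace `ε * N` by `t`. -/
lemma limit_shift {s t : ℝ} :
    |(∫ ω in (0 : ℝ)..(π / 4), 12 / π ^ 2 * Iint (s / sg ω)) -
      ∫ ω in (0 : ℝ)..(π / 4), 12 / π ^ 2 * Iint (t / sg ω)| ≤ 2 * |s - t| := by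
  have hpi : (0 : ℝ) ≤ π / 4 := by positivity
  have hi : ∀ c : ℝ, IntervalIntegrable (fun ω => 12 / π ^ 2 * Iint (c / sg ω)) volume 0 (π / 4) :=
    fun c => ((gl_continuousOn c).mono (by rw [uIcc_of_le hpi])).intervalIntegrable
  rw [← intervalIntegral.integral_sub (hi s) (hi t)]
  have := intervalIntegral.norm_integral_le_of_norm_le_const (a := 0) (b := π / 4)
    (f := fun ω => 12 / π ^ 2 * Iint (s / sg ω) - 12 / π ^ 2 * Iint (t / sg ω))
    (C := 2 * |s - t|) ?_
  · rw [Real.norm_eq_abs] at this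
    refine this.trans ?_
    rw [sub_zero, abs_of_nonneg hpi]
    nlinarith [abs_nonneg (s - t), Real.pi_le_four]
  · intro ω hω
    rw [uIoc_of_le hpi] at hω
    have hs := sg_one_le (Ioc_subset_Icc_self hω)
    have key : ∀ x y : ℝ, |12 / π ^ 2 * Iint x - 12 / π ^ 2 * Iint y| ≤ 2 * |x - y| := by
      intro x y
      rcases le_total x y with h | h
      · obtain ⟨h1, h2⟩ := gl_lip h
        rw [abs_of_nonneg (by linarith), abs_of_nonpos (by linarith)]; linarith
      · obtain ⟨h1, h2⟩ := gl_lip h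
        rw [abs_of_nonpos (by linarith), abs_of_nonneg (by linarith)]; linarith
    rw [Real.norm_eq_abs]
    refine (key _ _).trans ?_
    rw [← sub_div, abs_div, abs_of_pos (by linarith : 0 < sg ω)]
    have := div_le_self (abs_nonneg (s - t)) hs
    linarith

/-- The measure of `wSet` for `N ≍ t / ε`, optimising the number of blocks: `J ≍ N ^ (1 / 8)`. -/
lemma wSet_asymp {t δ : ℝ} (ht : 0 < t) (hδ : δ ∈ Ioo (0 : ℝ) (1 / 8)) :
    ∃ C : ℝ, 0 < C ∧ ∀ ε ∈ Ioo (0 : ℝ) (1 / 2), ∀ N : ℕ, 1 ≤ N → |ε * N - t| ≤ 3 * ε →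
      t / ε ≤ 2 * N → |volume.real (wSet ε N) -
        ∫ ω in (0 : ℝ)..(π / 4), Hlim (t / (cos ω + sin ω))| ≤ C * ε ^ ((1 : ℝ) / 8 - δ) := by
  obtain ⟨C, hC, H⟩ := bad_asymp δ hδ.1
  set r : ℝ := 1 / 8 - δ with hr
  have hr0 : 0 < r := by have := hδ.2; linarith
  refine ⟨(4 + 2 * (t + 2) + 4 * C) * (2 / t) ^ r + 6, by positivity, ?_⟩
  intro ε hε N hN hεN htN
  have hε0 := hε.1
  have hε1 := hε.2
  have hN' : (1 : ℝ) ≤ N := by exact_mod_cast hN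
  have hN0 : (0 : ℝ) < N := by linarith
  set y : ℝ := (N : ℝ) ^ (1 / 8 : ℝ) with hy
  have hy1 : 1 ≤ y := Real.one_le_rpow hN' (by norm_num)
  -- With `J ≍ N ^ (1 / 8)` blocks the errors `1 / J` and `J * N ^ (-1 / 4 + δ)` balance.
  set J := ⌈y⌉₊ with hJ
  have hJ1 : y ≤ J := Nat.le_ceil y
  have hJ2 : (J : ℝ) ≤ 2 * y := by
    have := Nat.ceil_lt_add_one (by linarith : 0 ≤ y)
    linarith
  have hJ3 : 1 ≤ J := by
    have : (1 : ℝ) ≤ J := hy1.trans hJ1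
    exact_mod_cast this
  have hb := blocks (E := C * (N : ℝ) ^ (-(1 / 4 : ℝ) + δ)) hε0 N J hJ3
    (fun α β κ h1 h2 h3 h4 => H N α β κ hN h1 h2 h3 h4)
  have hsh := limit_shift (s := ε * N) (t := t)
  rw [limit_integral ht]
  have hpow : (N : ℝ) ^ (-r) ≤ (2 / t) ^ r * ε ^ r := by
    rw [← Real.mul_rpow (by positivity) hε0.le, Real.rpow_neg hN0.le, ← Real.inv_rpow hN0.le]
    refine Real.rpow_le_rpow (by positivity) ?_ hr0.le
    rw [div_le_iff₀ hε0] at htN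
    rw [inv_le_iff_one_le_mul₀ hN0]
    field_simp
    linarith
  have hyN : 1 / y ≤ (N : ℝ) ^ (-r) := by
    rw [hy, one_div, ← Real.rpow_neg hN0.le]
    exact Real.rpow_le_rpow_of_exponent_le hN' (by have := hδ.1; linarith)
  have b1 : (4 + 2 * (ε * N)) / J ≤ (4 + 2 * (t + 2)) * (N : ℝ) ^ (-r) := by
    have h1 : ε * N ≤ t + 2 := by linarith [(abs_le.1 hεN).2]
    calc (4 + 2 * (ε * N)) / J ≤ (4 + 2 * (t + 2)) / y := by gcongr
      _ = (4 + 2 * (t + 2)) * (1 / y) := by ring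
      _ ≤ _ := by gcongr
  have b2 : 2 * (J * (C * (N : ℝ) ^ (-(1 / 4 : ℝ) + δ))) ≤ 4 * C * (N : ℝ) ^ (-r) := by
    have : y * (N : ℝ) ^ (-(1 / 4 : ℝ) + δ) = (N : ℝ) ^ (-r) := by
      rw [hy, ← Real.rpow_add hN0]; congr 1; rw [hr]; ring
    rw [← this]
    have : (J : ℝ) * (C * (N : ℝ) ^ (-(1 / 4 : ℝ) + δ)) ≤
      2 * y * (C * (N : ℝ) ^ (-(1 / 4 : ℝ) + δ)) := by gcongr
    linarith
  have b3 : ε ≤ ε ^ r := by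
    conv_lhs => rw [← Real.rpow_one ε]
    exact Real.rpow_le_rpow_of_exponent_ge hε0 (by linarith) (by have := hδ.1; linarith)
  have b4 := mul_le_mul_of_nonneg_left hpow (by positivity : 0 ≤ 4 + 2 * (t + 2) + 4 * C)
  have tri := abs_sub_le (volume.real (wSet ε N))
    (∫ ω in (0 : ℝ)..(π / 4), 12 / π ^ 2 * Iint (ε * N / sg ω))
    (∫ ω in (0 : ℝ)..(π / 4), 12 / π ^ 2 * Iint (t / sg ω))
  linarith

lemma wSet_finite (ε : ℝ) (N : ℕ) : volume (wSet ε N) ≠ ⊤ :=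
  ((measure_mono (fun _ h => h.1)).trans_lt (by simp : volume (Icc 0 (π / 4)) < ⊤)).ne

theorem statement2 (t : ℝ) (ht : 0 < t) (δ : ℝ) (hδ : δ ∈ Set.Ioo (0 : ℝ) (1 / 8)) :
    ∃ C > 0, ∀ ε ∈ Set.Ioo (0 : ℝ) (1 / 2),
      |Feps ε t - Flim t| ≤ C * ε ^ ((1 : ℝ) / 8 - δ) := by
  obtain ⟨C, hC, H⟩ := wSet_asymp ht hδ
  have hr0 : 0 < (1 : ℝ) / 8 - δ := by have := hδ.2; linarith
  have hpi := Real.pi_pos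
  have h4 : 0 < 4 / π := by positivity
  refine ⟨4 / π * C + (1 + |Flim t|) / t ^ ((1 : ℝ) / 8 - δ), by positivity, fun ε hε => ?_⟩
  have hε0 := hε.1
  have hpos : 0 ≤ ε ^ ((1 : ℝ) / 8 - δ) := by positivity
  rw [add_mul]
  rcases lt_or_ge t ε with hlt | hge
  · -- Here `ε` is bounded below, and the trivial bound `0 ≤ Feps ε t ≤ 1` suffices.
    have h1 : t ^ ((1 : ℝ) / 8 - δ) ≤ ε ^ ((1 : ℝ) / 8 - δ) :=
      Real.rpow_le_rpow ht.le hlt.le hr0.le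
    have h2 : 1 + |Flim t| ≤ (1 + |Flim t|) / t ^ ((1 : ℝ) / 8 - δ) * ε ^ ((1 : ℝ) / 8 - δ) := by
      rw [div_mul_eq_mul_div, le_div_iff₀ (by positivity)]
      gcongr
    have h3 : 0 ≤ Feps ε t := by unfold Feps; positivity
    have h5 : Feps ε t ≤ 1 := by
      unfold Feps
      have : (volume {ω ∈ Set.Icc (0 : ℝ) (π / 4) | ε * (Reps ε ω : ℝ) > t}).toReal ≤
          (volume (Icc (0 : ℝ) (π / 4))).toReal :=
        ENNReal.toReal_mono (by simp) (measure_mono fun _ h => h.1)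
      rw [Real.volume_Icc, ENNReal.toReal_ofReal (by linarith)] at this
      calc _ ≤ 4 / π * (π / 4 - 0) := by gcongr
        _ = 1 := by field_simp; ring
    have h6 : |Feps ε t - Flim t| ≤ 1 + |Flim t| := by
      refine (abs_sub _ _).trans ?_
      rw [abs_of_nonneg h3]; linarith
    have h7 : 0 ≤ 4 / π * C * ε ^ ((1 : ℝ) / 8 - δ) := by positivity
    linarith
  · set n := ⌊t / ε⌋₊ with hn
    have hX : 1 ≤ t / ε := by rw [le_div_iff₀ hε0]; linarith
    have hn1 : 1 ≤ n := (Nat.one_le_floor_iff _).2 hX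
    have hn1' : (1 : ℝ) ≤ n := by exact_mod_cast hn1
    have hf1 : (n : ℝ) ≤ t / ε := Nat.floor_le (by linarith)
    have hf2 : t / ε < n + 1 := Nat.lt_floor_add_one _
    have g1 : n * ε ≤ t := (le_div_iff₀ hε0).1 hf1
    have g2 : t < (n + 1) * ε := (div_lt_iff₀ hε0).1 hf2
    have A := H ε hε n hn1 (by rw [abs_le]; constructor <;> linarith) (by linarith)
    have B := H ε hε (n + 3) (by omega)
      (by push_cast; rw [abs_le]; constructor <;> linarith) (by push_cast; linarith)
    have up := measureReal_mono (μ := volume) (reps_upper hε ht) (wSet_finite ε n)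
    have lo := measureReal_mono (μ := volume) (reps_lower (t := t) hε)
      (ne_top_of_le_ne_top (wSet_finite ε n) (measure_mono (reps_upper hε ht)))
    have key : |volume.real {ω ∈ Icc (0 : ℝ) (π / 4) | ε * (Reps ε ω : ℝ) > t} -
        ∫ ω in (0 : ℝ)..(π / 4), Hlim (t / (cos ω + sin ω))| ≤ C * ε ^ ((1 : ℝ) / 8 - δ) := by
      rw [abs_le] at A B ⊢
      constructor <;> linarith [A.2, B.1]
    have h8 : 0 ≤ (1 + |Flim t|) / t ^ ((1 : ℝ) / 8 - δ) * ε ^ ((1 : ℝ) / 8 - δ) := by positivity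
    have h9 : |Feps ε t - Flim t| ≤ 4 / π * (C * ε ^ ((1 : ℝ) / 8 - δ)) := by
      unfold Feps Flim
      rw [← mul_sub, abs_mul, abs_of_pos h4]
      exact mul_le_mul_of_nonneg_left key h4.le
    linarith
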